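/- For every N ≥ 1 and every n ∈ ℕ, the following are equivalent: (1) there exists an ℝ-linear map A : ℝⁿ → M(N,ℝ) such that every A(v) is skew-symmetric and A(v)² = −‖v‖² I_N for all v ∈ ℝⁿ; (2) there exists an ℝ-linear map A : ℝⁿ → M(N,ℝ) with every A(v) skew-symmetric and A(v) invertible for every nonzero v; (3) n ≤ ρ(N/16) + 7. (Entry 𝔤 = 𝔰𝔬(N,ℂ) of the Hurwitz–Radon value theorem, the 𝔭-part consisting of the matrices iA with A real skew-symmetric; it recovers Au-Yeung's number ℝ_{sk-s}(N).) -/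

import Mathlib

open Matrix

/-- Extended Hurwitz–Radon number: writing the 2-adic valuation of `t` as `4a + b`
with `a ∈ ℤ` and `b ∈ {0,1,2,3}`, `ρ(t) := 8a + 2^b`. -/
noncomputable def hrRho (t : ℚ) : ℤ :=
  8 * (padicValRat 2 t / 4) + 2 ^ (padicValRat 2 t % 4).toNat

/-!
Let `A₁, …, Aₙ` be skew `N × N` matrices all of whose nontrivial combinations are invertible, and
let `γ₀, …, γₙ` be symmetric Clifford generators on `ℝ^d`. The oscillator Dirac operator
`∑ᵢ Gᵢ ∂ᵢ + Cᵢ xᵢ` on `L²(ℝⁿ)`, with `Gᵢ = γᵢ ⊗ 1` and `Cᵢ = γ₀ ⊗ Aᵢ`, is Fredholm because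
`(∑ᵢ xᵢ Cᵢ)²` is bounded above by `-c |x|²`. Its graded index is invariant under deformations of the
potential `∑ᵢ xᵢ Cᵢ` that keep it invertible off the origin; tensoring with a large enough graded
Clifford module makes room to deform the `Cᵢ` to Clifford generators, for which the kernel is
explicit. Hence `2ⁿ · index = d N`. If the `γᵢ` have `r ≤ 2` anticommuting complex structures as
symmetries, these act on the kernel and `2 ^ r` divides the index, so `2 ^ (n + r) ∣ d N`. The
Clifford modules built from the quaternions, the octonions and Bott periodicity give both the
optimal `d` and `r` in this divisibility and the families with `A(v)² = -‖v‖²` attaining the bound.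
-/

namespace HurwitzRadon

section FredholmIndex

open ContinuousLinearMap Filter Topology Module

section Algebra

variable {K X Y : Type*} [Field K] [AddCommGroup X] [Module K X] [AddCommGroup Y] [Module K Y]

/-- The index `dim ker f - dim coker f` of a linear map, meaningful when the kernel and the
cokernel are finite-dimensional. -/
noncomputable def linearIndex (f : X →ₗ[K] Y) : ℤ :=
  finrank K f.ker - finrank K (Y ⧸ f.range)

theorem finrank_ker_mapQ_of_disjoint (f : X →ₗ[K] Y) {U : Submodule K X}
    (hU : Disjoint U f.ker) :
    finrank K (U.mapQ (U.map f) f (U.le_comap_map f)).ker = finrank K f.ker := by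
  have hker : (U.mapQ (U.map f) f (U.le_comap_map f)).ker = f.ker.map U.mkQ := by
    rw [Submodule.ker_mapQ, Submodule.comap_map_eq, Submodule.map_sup, Submodule.mkQ_map_self,
      bot_sup_eq]
  have hinj : Function.Injective (U.mkQ.domRestrict f.ker) := by
    rw [← LinearMap.ker_eq_bot, LinearMap.ker_domRestrict, Submodule.ker_mkQ]
    exact Submodule.disjoint_iff_comap_eq_bot.1 hU.symm
  rw [hker, ← LinearMap.range_domRestrict]
  exact LinearMap.finrank_range_of_inj hinj

theorem linearIndex_eq_of_disjoint (f : X →ₗ[K] Y) {U : Submodule K X}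
    [FiniteDimensional K (X ⧸ U)] [FiniteDimensional K (Y ⧸ U.map f)] (hU : Disjoint U f.ker) :
    linearIndex f = finrank K (X ⧸ U) - finrank K (Y ⧸ U.map f) := by
  have hker := finrank_ker_mapQ_of_disjoint f hU
  set g := U.mapQ (U.map f) f (U.le_comap_map f)
  have hcoker : finrank K ((Y ⧸ U.map f) ⧸ g.range) = finrank K (Y ⧸ f.range) := by
    rw [Submodule.range_mapQ]
    exact (Submodule.quotientQuotientEquivQuotient _ _ LinearMap.map_le_range).finrank_eq
  have h₁ := g.finrank_range_add_finrank_ker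
  have h₂ := g.range.finrank_quotient_add_finrank
  simp only [linearIndex]
  omega

theorem linearIndex_eq_of_bijective_coprod (f : X →ₗ[K] Y) (U : Submodule K X)
    (V : Submodule K Y) [FiniteDimensional K (X ⧸ U)] [FiniteDimensional K V]
    (h : Function.Bijective ((f ∘ₗ U.subtype).coprod V.subtype)) :
    linearIndex f = finrank K (X ⧸ U) - finrank K V := by
  have hker : Disjoint U f.ker := by
    rw [Submodule.disjoint_def]
    intro x hxU hx
    have := @h.1 (⟨x, hxU⟩, 0) 0 (by simpa using hx)
    simpa using this
  have hcompl : IsCompl (U.map f) V := by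
    constructor
    · rw [Submodule.disjoint_def]
      rintro - ⟨x, hxU, rfl⟩ hV
      have := @h.1 (⟨x, hxU⟩, -⟨f x, hV⟩) 0 (by simp)
      simpa using congrArg Prod.snd this
    · have hrange := LinearMap.range_eq_top.2 h.2
      rw [LinearMap.range_coprod, LinearMap.range_comp, Submodule.range_subtype,
        Submodule.range_subtype] at hrange
      exact codisjoint_iff.2 hrange
  have e := Submodule.quotientEquivOfIsCompl _ _ hcompl
  have := e.symm.finiteDimensional
  rw [linearIndex_eq_of_disjoint f hker, e.finrank_eq]

theorem bijective_coprod_of_isCompl (f : X →ₗ[K] Y) {U : Submodule K X} {V : Submodule K Y}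
    (hU : IsCompl f.ker U) (hV : IsCompl f.range V) :
    Function.Bijective ((f ∘ₗ U.subtype).coprod V.subtype) := by
  have hrange : (f ∘ₗ U.subtype).range = f.range := by
    rw [LinearMap.range_comp, Submodule.range_subtype, ← Submodule.map_top, ← hU.sup_eq_top,
      Submodule.map_sup, LinearMap.le_ker_iff_map.1 le_rfl, bot_sup_eq]
  refine ⟨LinearMap.ker_eq_bot.1 ?_, LinearMap.range_eq_top.1 ?_⟩
  · rw [LinearMap.ker_coprod_of_disjoint_range, Submodule.ker_subtype, LinearMap.ker_comp,
      Submodule.disjoint_iff_comap_eq_bot.1 hU.symm.disjoint, Submodule.prod_bot]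
    simpa only [hrange, Submodule.range_subtype] using hV.disjoint
  · rw [LinearMap.range_coprod, hrange, Submodule.range_subtype, hV.sup_eq_top]

end Algebra

section Banach

variable {K X Y : Type*} [NontriviallyNormedField K]
  [NormedAddCommGroup X] [NormedSpace K X] [NormedAddCommGroup Y] [NormedSpace K Y]

theorem finiteDimensional_ker_of_bound (T : X →L[K] Y) {Z : Submodule K X}
    [FiniteDimensional K (X ⧸ Z)] {c : ℝ} (hc : 0 < c) (h : ∀ w ∈ Z, c * ‖w‖ ≤ ‖T w‖) :
    FiniteDimensional K T.ker := by
  suffices hdisj : Disjoint T.ker Z from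
    Module.Finite.iff_fg.2 (Submodule.CoFG.fg_of_disjoint hdisj inferInstance)
  rw [Submodule.disjoint_def]
  intro w hw hwZ
  have hTw : T w = 0 := hw
  have := h w hwZ
  rw [hTw, norm_zero] at this
  exact norm_le_zero_iff.1 (nonpos_of_mul_nonpos_right this hc)

variable [CompleteSpace K] [CompleteSpace X]

theorem isStrictMap_and_isClosed_range_of_bound (T : X →L[K] Y) {Z : Submodule K X}
    (hZ : IsClosed (Z : Set X)) [FiniteDimensional K (X ⧸ Z)] {c : ℝ} (hc : 0 < c)
    (h : ∀ w ∈ Z, c * ‖w‖ ≤ ‖T w‖) : IsStrictMap T ∧ IsClosed (T.range : Set Y) := by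
  have : CompleteSpace Z := hZ.completeSpace_coe
  have hanti : AntilipschitzWith (Real.toNNReal c⁻¹) (T.domRestrict Z) := by
    refine ContinuousLinearMap.antilipschitz_of_bound _ fun x ↦ ?_
    rw [Real.coe_toNNReal _ (by positivity), inv_mul_eq_div, le_div_iff₀' hc]
    exact h x x.2
  have hemb := hanti.isClosedEmbedding (T.domRestrict Z).uniformContinuous
  exact (isStrictMap_isClosed_range_iff_restrict T Z hZ).2
    ⟨hemb.isEmbedding.isStrictMap, hemb.isClosed_range⟩

variable [CompleteSpace Y]

theorem eventually_linearIndex_eq {T : X →L[K] Y} (hT : T.IsFredholm) :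
    ∀ᶠ S : X →L[K] Y in 𝓝 T, linearIndex (S : X →ₗ[K] Y) = linearIndex (T : X →ₗ[K] Y) := by
  have := hT.finite_ker
  have := hT.finite_coker
  obtain ⟨U, hUcl, hU⟩ := hT.closedComplemented_ker.exists_isClosed_isCompl
  obtain ⟨V, hV⟩ := Submodule.exists_isCompl T.range
  have : CompleteSpace U := hUcl.completeSpace_coe
  have : FiniteDimensional K (X ⧸ U) :=
    (Submodule.quotientEquivOfIsCompl U _ hU.symm).symm.finiteDimensional
  have : FiniteDimensional K V := (Submodule.quotientEquivOfIsCompl _ V hV).finiteDimensional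
  have : CompleteSpace V := FiniteDimensional.complete K V
  let Φ : (X →L[K] Y) → (U × V) →L[K] Y := fun S ↦ (S.comp U.subtypeL).coprod V.subtypeL
  have hΦT : Function.Bijective (Φ T) := bijective_coprod_of_isCompl (T : X →ₗ[K] Y) hU hV
  let e : (U × V) ≃L[K] Y := ContinuousLinearEquiv.ofBijective (Φ T)
    (LinearMap.ker_eq_bot.2 hΦT.1) (LinearMap.range_eq_top.2 hΦT.2)
  have he : (e : (U × V) →L[K] Y) = Φ T := ContinuousLinearEquiv.coe_ofBijective _ _ _
  have hΦ : Continuous Φ := by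
    have : Φ = fun S ↦ (S.comp U.subtypeL).comp (ContinuousLinearMap.fst K U V) +
        V.subtypeL.comp (ContinuousLinearMap.snd K U V) := by
      funext S
      ext <;> simp [Φ]
    rw [this]
    fun_prop
  have hinv : ∀ᶠ S in 𝓝 T, Φ S ∈ Set.range ((↑) : ((U × V) ≃L[K] Y) → (U × V) →L[K] Y) :=
    hΦ.continuousAt.eventually (he ▸ ContinuousLinearEquiv.nhds e)
  have hindex : ∀ S : X →L[K] Y, Function.Bijective (Φ S) →
      linearIndex (S : X →ₗ[K] Y) = finrank K (X ⧸ U) - finrank K V :=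
    fun S hS ↦ linearIndex_eq_of_bijective_coprod (S : X →ₗ[K] Y) U V hS
  filter_upwards [hinv] with S ⟨e', he'⟩
  rw [hindex T hΦT, hindex S (he' ▸ e'.bijective)]

end Banach

section Hilbert

variable {X Y : Type*} [NormedAddCommGroup X] [InnerProductSpace ℝ X] [CompleteSpace X]
  [NormedAddCommGroup Y] [InnerProductSpace ℝ Y] [CompleteSpace Y]

theorem nonempty_quotient_range_equiv_ker_adjoint (T : X →L[ℝ] Y)
    (hT : IsClosed (T.range : Set Y)) : Nonempty ((Y ⧸ T.range) ≃ₗ[ℝ] (adjoint T).ker) := by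
  have : CompleteSpace T.range := hT.completeSpace_coe
  rw [← ContinuousLinearMap.orthogonal_range]
  exact ⟨Submodule.quotientEquivOfIsCompl _ _ (Submodule.isCompl_orthogonal _)⟩

theorem isFredholm_of_bound (T : X →L[ℝ] Y) {Z : Submodule ℝ X} (hZ : IsClosed (Z : Set X))
    [FiniteDimensional ℝ (X ⧸ Z)] {c : ℝ} (hc : 0 < c) (h : ∀ w ∈ Z, c * ‖w‖ ≤ ‖T w‖)
    [FiniteDimensional ℝ (adjoint T).ker] : T.IsFredholm := by
  have hker := finiteDimensional_ker_of_bound T hc h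
  obtain ⟨hstrict, hclosed⟩ := isStrictMap_and_isClosed_range_of_bound T hZ hc h
  obtain ⟨e⟩ := nonempty_quotient_range_equiv_ker_adjoint T hclosed
  exact ⟨hstrict, hclosed, hker, e.symm.finiteDimensional, .of_finiteDimensional _⟩

theorem linearIndex_eq_finrank_ker_sub_finrank_ker_adjoint {T : X →L[ℝ] Y}
    (hT : T.IsFredholm) :
    linearIndex (T : X →ₗ[ℝ] Y) = (finrank ℝ T.ker : ℤ) - finrank ℝ (adjoint T).ker := by
  obtain ⟨e⟩ := nonempty_quotient_range_equiv_ker_adjoint T hT.isClosed_range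
  rw [linearIndex, ← e.finrank_eq]

end Hilbert

end FredholmIndex

section WeightedComposition

open Function
open scoped lp

variable {α β V W : Type*} [NormedAddCommGroup V] [NormedAddCommGroup W]

theorem sum_norm_sq_le_of_norm_le_comp {u : ℓ²(β, V)} {v : α → W} {g : α → β} {C : ℝ}
    (h : ∀ a, ‖v a‖ ≤ C * ‖u (g a)‖) (hg : (support v).InjOn g) (s : Finset α) :
    ∑ a ∈ s, ‖v a‖ ^ 2 ≤ (C * ‖u‖) ^ 2 := by
  classical
  set t := s.filter fun a ↦ v a ≠ 0
  have ht : (t : Set α).InjOn g := hg.mono fun a ha ↦ (Finset.mem_filter.1 ha).2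
  calc ∑ a ∈ s, ‖v a‖ ^ 2 = ∑ a ∈ t, ‖v a‖ ^ 2 := by
        refine (Finset.sum_filter_of_ne fun a _ ha ↦ ?_).symm
        simpa using ha
    _ ≤ ∑ a ∈ t, C ^ 2 * ‖u (g a)‖ ^ 2 := Finset.sum_le_sum fun a _ ↦ by
        rw [← mul_pow]
        exact pow_le_pow_left₀ (norm_nonneg _) (h a) 2
    _ = C ^ 2 * ∑ b ∈ t.image g, ‖u b‖ ^ 2 := by rw [Finset.sum_image ht, Finset.mul_sum]
    _ ≤ C ^ 2 * ‖u‖ ^ 2 := by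
        gcongr
        simpa using lp.sum_rpow_le_norm_rpow (by norm_num) u (t.image g)
    _ = (C * ‖u‖) ^ 2 := by ring

theorem memℓp_two_of_norm_le_comp {u : ℓ²(β, V)} {v : α → W} {g : α → β} {C : ℝ}
    (h : ∀ a, ‖v a‖ ≤ C * ‖u (g a)‖) (hg : (support v).InjOn g) : Memℓp v 2 :=
  memℓp_gen' fun s ↦ by simpa using sum_norm_sq_le_of_norm_le_comp h hg s

theorem norm_le_of_norm_le_comp {u : ℓ²(β, V)} {v : ℓ²(α, W)} {g : α → β} {C : ℝ} (hC : 0 ≤ C)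
    (h : ∀ a, ‖v a‖ ≤ C * ‖u (g a)‖) (hg : (support v).InjOn g) : ‖v‖ ≤ C * ‖u‖ :=
  lp.norm_le_of_forall_sum_le (by norm_num) (by positivity) fun s ↦ by
    simpa using sum_norm_sq_le_of_norm_le_comp h hg s

variable [NormedSpace ℝ V] [NormedSpace ℝ W]

/-- The bounded operator `u ↦ (a ↦ w a (u (φ a)))` between spaces of square-summable families,
for an injection `φ` and a bounded family `w` of operator weights. -/
noncomputable def weightedComp (φ : α ↪ β) (w : α → V →L[ℝ] W) (hw : ∃ C, ∀ a, ‖w a‖ ≤ C) :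
    ℓ²(β, V) →L[ℝ] ℓ²(α, W) :=
  have bound (u : ℓ²(β, V)) (a) : ‖w a (u (φ a))‖ ≤ hw.choose * ‖u (φ a)‖ :=
    (w a).le_of_opNorm_le (hw.choose_spec a) _
  LinearMap.mkContinuousOfExistsBound
    { toFun u := ⟨fun a ↦ w a (u (φ a)), memℓp_two_of_norm_le_comp (bound u) φ.injective.injOn⟩
      map_add' u v := by ext a; exact map_add (w a) _ _
      map_smul' r u := by ext a; exact map_smul (w a) _ _ }
    ⟨max hw.choose 0, fun u ↦ norm_le_of_norm_le_comp (le_max_right _ _)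
      (fun a ↦ (bound u a).trans (by gcongr; exact le_max_left _ _)) φ.injective.injOn⟩

@[simp]
theorem weightedComp_apply (φ : α ↪ β) (w : α → V →L[ℝ] W) (hw : ∃ C, ∀ a, ‖w a‖ ≤ C)
    (u : ℓ²(β, V)) (a : α) : weightedComp φ w hw u a = w a (u (φ a)) := rfl

/-- The pointwise action of an operator `V →L W` on square-summable families. -/
noncomputable def lift (α : Type*) (M : V →L[ℝ] W) : ℓ²(α, V) →L[ℝ] ℓ²(α, W) :=
  weightedComp (.refl α) (fun _ ↦ M) ⟨‖M‖, fun _ ↦ le_rfl⟩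

@[simp]
theorem lift_apply (M : V →L[ℝ] W) (u : ℓ²(α, V)) (a : α) : lift α M u a = M (u a) := rfl

end WeightedComposition

section Adjoint

open ContinuousLinearMap
open scoped lp

variable {α β V W : Type*} [NormedAddCommGroup V] [InnerProductSpace ℝ V] [CompleteSpace V]
  [NormedAddCommGroup W] [InnerProductSpace ℝ W] [CompleteSpace W]

theorem inner_adjoint_weightedComp_apply [DecidableEq β] (φ : α ↪ β) (w : α → V →L[ℝ] W)
    (hw : ∃ C, ∀ a, ‖w a‖ ≤ C) (u : ℓ²(α, W)) (b : β) (v : V) :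
    inner ℝ v (adjoint (weightedComp φ w hw) u b) =
      inner ℝ (weightedComp φ w hw (lp.single 2 b v)) u := by
  rw [← adjoint_inner_right, lp.inner_single_left]

theorem adjoint_weightedComp_apply (φ : α ↪ β) (w : α → V →L[ℝ] W) (hw : ∃ C, ∀ a, ‖w a‖ ≤ C)
    (u : ℓ²(α, W)) (a : α) :
    adjoint (weightedComp φ w hw) u (φ a) = adjoint (w a) (u a) := by
  classical
  refine ext_inner_left ℝ fun v ↦ ?_
  have hsingle : weightedComp φ w hw (lp.single 2 (φ a) v) = lp.single 2 a (w a v) := by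
    ext a'
    rcases eq_or_ne a' a with rfl | ha
    · simp
    · simp [ha, φ.injective.ne ha]
  rw [inner_adjoint_weightedComp_apply, hsingle, lp.inner_single_left, adjoint_inner_right]

theorem adjoint_weightedComp_apply_of_notMem_range (φ : α ↪ β) (w : α → V →L[ℝ] W)
    (hw : ∃ C, ∀ a, ‖w a‖ ≤ C) (u : ℓ²(α, W)) {b : β} (hb : b ∉ Set.range φ) :
    adjoint (weightedComp φ w hw) u b = 0 := by
  classical
  refine ext_inner_left ℝ fun v ↦ ?_
  have hsingle : weightedComp φ w hw (lp.single 2 b v) = 0 := by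
    ext a
    have ha : φ a ≠ b := fun h ↦ hb ⟨a, h⟩
    simp [ha]
  rw [inner_adjoint_weightedComp_apply, hsingle, inner_zero_left, inner_zero_right]

@[simp]
theorem adjoint_lift (M : V →L[ℝ] W) : adjoint (lift α M) = lift α (adjoint M) := by
  ext u a
  exact adjoint_weightedComp_apply (.refl α) (fun _ ↦ M) _ u a

end Adjoint

section MultiIndex

variable {ι : Type*}

/-- The total degree of a multi-index. -/
def level [Fintype ι] (a : ι → ℕ) : ℕ := ∑ i, a i

theorem le_level [Fintype ι] (i : ι) (a : ι → ℕ) : a i ≤ level a :=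
  Finset.single_le_sum (fun _ _ ↦ Nat.zero_le _) (Finset.mem_univ i)

theorem level_eq_zero_iff [Fintype ι] {a : ι → ℕ} : level a = 0 ↔ a = 0 := by
  simp [level, funext_iff]

variable [DecidableEq ι]

/-- Raising the `i`-th entry of a multi-index by one. -/
def raise (i : ι) : (ι → ℕ) ↪ (ι → ℕ) := addRightEmbedding (Pi.single i 1)

/-- Lowering the `i`-th entry of a multi-index by one, truncated at zero. -/
def lower (i : ι) (a : ι → ℕ) : ι → ℕ := a - Pi.single i 1

@[simp]
theorem lower_raise (i : ι) (a : ι → ℕ) : lower i (raise i a) = a := add_tsub_cancel_right _ _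

theorem raise_lower {i : ι} {a : ι → ℕ} (h : a i ≠ 0) : raise i (lower i a) = a :=
  tsub_add_cancel_of_le fun j ↦ by
    rcases eq_or_ne j i with rfl | hj
    · simpa [Nat.one_le_iff_ne_zero] using h
    · simp [hj]

theorem raise_comm (i j : ι) (a : ι → ℕ) : raise i (raise j a) = raise j (raise i a) :=
  add_right_comm _ _ _

theorem lower_comm (i j : ι) (a : ι → ℕ) : lower i (lower j a) = lower j (lower i a) :=
  tsub_right_comm

@[simp]
theorem raise_apply_self (i : ι) (a : ι → ℕ) : raise i a i = a i + 1 := by simp [raise]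

@[simp]
theorem lower_apply_self (i : ι) (a : ι → ℕ) : lower i a i = a i - 1 := by simp [lower]

theorem raise_apply_of_ne {i j : ι} (h : j ≠ i) (a : ι → ℕ) : raise i a j = a j := by
  simp [raise, h]

theorem lower_apply_of_ne {i j : ι} (h : j ≠ i) (a : ι → ℕ) : lower i a j = a j := by
  simp [lower, h]

theorem lower_raise_of_ne {i j : ι} (h : i ≠ j) (a : ι → ℕ) :
    lower j (raise i a) = raise i (lower j a) := by
  ext k
  rcases eq_or_ne k j with rfl | hk
  · simp [raise_apply_of_ne h.symm]
  · rcases eq_or_ne k i with rfl | hi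
    · simp [lower_apply_of_ne hk]
    · simp [lower_apply_of_ne hk, raise_apply_of_ne hi]

theorem mem_range_raise {i : ι} {a : ι → ℕ} : a ∈ Set.range (raise i) ↔ a i ≠ 0 := by
  refine ⟨?_, fun h ↦ ⟨lower i a, raise_lower h⟩⟩
  rintro ⟨b, rfl⟩
  simp

theorem injOn_lower (i : ι) : {a | a i ≠ 0}.InjOn (lower i) := fun a ha b hb h ↦ by
  rw [← raise_lower ha, h, raise_lower hb]

theorem cast_lower_add_one {i : ι} {a : ι → ℕ} (h : a i ≠ 0) :
    ((lower i a i : ℕ) : ℝ) + 1 = a i := by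
  rw [lower_apply_self]
  exact_mod_cast Nat.sub_one_add_one h

@[simp]
theorem level_raise [Fintype ι] (i : ι) (a : ι → ℕ) : level (raise i a) = level a + 1 := by
  simp [level, raise, Finset.sum_add_distrib]

theorem level_lower_add_one [Fintype ι] {i : ι} {a : ι → ℕ} (h : a i ≠ 0) :
    level (lower i a) + 1 = level a := by
  rw [← level_raise i, raise_lower h]

end MultiIndex

section FormalLadder

variable {ι V : Type*} [DecidableEq ι] [AddCommGroup V] [Module ℝ V]

/-- The annihilation operator `(∂/∂xᵢ + xᵢ) / √2` in Hermite coordinates, acting on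
all families indexed by multi-indices. -/
noncomputable def annihilation (i : ι) : Module.End ℝ ((ι → ℕ) → V) where
  toFun u a := √(a i + 1) • u (raise i a)
  map_add' u v := by ext a; exact smul_add _ _ _
  map_smul' r u := by ext a; exact smul_comm _ _ _

/-- The creation operator, the formal adjoint of `annihilation i`. -/
noncomputable def creation (i : ι) : Module.End ℝ ((ι → ℕ) → V) where
  toFun u a := √(a i) • u (lower i a)
  map_add' u v := by ext a; exact smul_add _ _ _
  map_smul' r u := by ext a; exact smul_comm _ _ _

theorem annihilation_apply (i : ι) (u : (ι → ℕ) → V) (a : ι → ℕ) :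
    annihilation i u a = √(a i + 1) • u (raise i a) := rfl

theorem creation_apply (i : ι) (u : (ι → ℕ) → V) (a : ι → ℕ) :
    creation i u a = √(a i) • u (lower i a) := rfl

theorem annihilation_comm (i j : ι) (u : (ι → ℕ) → V) :
    annihilation i (annihilation j u) = annihilation j (annihilation i u) := by
  rcases eq_or_ne i j with rfl | h
  · rfl
  · ext a
    simp only [annihilation_apply, raise_apply_of_ne h, raise_apply_of_ne h.symm, raise_comm i j]
    exact smul_comm _ _ _

theorem creation_comm (i j : ι) (u : (ι → ℕ) → V) :
    creation i (creation j u) = creation j (creation i u) := by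
  rcases eq_or_ne i j with rfl | h
  · rfl
  · ext a
    simp only [creation_apply, lower_apply_of_ne h, lower_apply_of_ne h.symm, lower_comm i j]
    exact smul_comm _ _ _

theorem creation_annihilation_apply_self (i : ι) (u : (ι → ℕ) → V) (a : ι → ℕ) :
    creation i (annihilation i u) a = (a i : ℝ) • u a := by
  rw [creation_apply, annihilation_apply]
  rcases eq_or_ne (a i) 0 with h | h
  · simp [h]
  · rw [cast_lower_add_one h, raise_lower h, smul_smul, Real.mul_self_sqrt (Nat.cast_nonneg _)]

theorem annihilation_creation (i j : ι) (u : (ι → ℕ) → V) :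
    annihilation i (creation j u) = creation j (annihilation i u) + if i = j then u else 0 := by
  ext a
  rcases eq_or_ne i j with rfl | h
  · rw [Pi.add_apply, creation_annihilation_apply_self, annihilation_apply, creation_apply,
      if_pos rfl, lower_raise, raise_apply_self, smul_smul, Nat.cast_add_one,
      Real.mul_self_sqrt (by positivity), add_smul, one_smul]
  · rw [if_neg h, add_zero, annihilation_apply, creation_apply, creation_apply, annihilation_apply,
      raise_apply_of_ne h.symm, lower_apply_of_ne h, lower_raise_of_ne h]
    exact smul_comm _ _ _

theorem sum_creation_annihilation_apply [Fintype ι] (u : (ι → ℕ) → V) (a : ι → ℕ) :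
    ∑ i, creation i (annihilation i u) a = (level a : ℝ) • u a := by
  simp only [creation_annihilation_apply_self, level, Nat.cast_sum, Finset.sum_smul]

end FormalLadder

section LadderOperators

open ContinuousLinearMap
open scoped lp

/-- Square-summable families indexed by multi-indices: the Hermite coefficients of the `V`-valued
square-integrable functions on `ℝ^ι`. -/
abbrev Fock (ι V : Type*) [NormedAddCommGroup V] := ℓ²(ι → ℕ, V)

variable {ι V : Type*} [DecidableEq ι] [NormedAddCommGroup V] [InnerProductSpace ℝ V]

/-- The bounded operator `p aᵢ q`, where `aᵢ` is the annihilation operator and `p` and `q` act by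
multiplication. -/
noncomputable def lowering (V : Type*) [NormedAddCommGroup V] [InnerProductSpace ℝ V]
    (p q : (ι → ℕ) → ℝ) (i : ι)
    (h : ∃ C, ∀ a, |p a * √(a i + 1) * q (raise i a)| ≤ C) : Fock ι V →L[ℝ] Fock ι V :=
  weightedComp (raise i) (fun a ↦ (p a * √(a i + 1) * q (raise i a)) • .id ℝ V) <|
    h.imp fun C hC a ↦ by
      rw [norm_smul]
      exact (mul_le_of_le_one_right (norm_nonneg _) norm_id_le).trans (hC a)

variable {p q : (ι → ℕ) → ℝ} {i : ι} (h : ∃ C, ∀ a, |p a * √(a i + 1) * q (raise i a)| ≤ C)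

theorem coe_lowering (u : Fock ι V) : ⇑(lowering V p q i h u) = p • annihilation i (q • ⇑u) := by
  ext a
  simp [lowering, annihilation_apply, smul_smul, mul_assoc]

theorem coe_adjoint_lowering [CompleteSpace V] (u : Fock ι V) :
    ⇑(adjoint (lowering V p q i h) u) = q • creation i (p • ⇑u) := by
  ext a
  rw [Pi.smul_apply', creation_apply, Pi.smul_apply']
  by_cases ha : a i = 0
  · rw [ha, Nat.cast_zero, Real.sqrt_zero, zero_smul, smul_zero]
    exact adjoint_weightedComp_apply_of_notMem_range _ _ _ _ (mem_range_raise.not_left.2 ha)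
  · obtain ⟨b, rfl⟩ := mem_range_raise.2 ha
    simp only [lowering, adjoint_weightedComp_apply, map_smulₛₗ, adjoint_id, _root_.smul_apply,
      conj_trivial, id_apply, lower_raise, raise_apply_self, smul_smul, Nat.cast_add_one]
    ring_nf

end LadderOperators

section Decay

open Real

variable {ι : Type*} [Fintype ι]

/-- The weight `(level a + 1) ^ (-s)`, a power of the resolvent of the number operator. -/
noncomputable def decay (s : ℝ) (a : ι → ℕ) : ℝ := ((level a : ℝ) + 1) ^ (-s)

theorem decay_pos (s : ℝ) (a : ι → ℕ) : 0 < decay s a := rpow_pos_of_pos (by positivity) _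

@[simp]
theorem decay_zero : decay (ι := ι) 0 = 1 := by
  ext a
  simp [decay]

theorem decay_mul_decay (s t : ℝ) (a : ι → ℕ) : decay s a * decay t a = decay (s + t) a := by
  rw [decay, decay, ← rpow_add (by positivity), decay, neg_add]

theorem decay_one (a : ι → ℕ) : decay 1 a = ((level a : ℝ) + 1)⁻¹ := rpow_neg_one _

theorem decay_le_one {s : ℝ} (hs : 0 ≤ s) (a : ι → ℕ) : decay s a ≤ 1 :=
  rpow_le_one_of_one_le_of_nonpos (by simp) (neg_nonpos.2 hs)

theorem decay_half (a : ι → ℕ) : decay (1 / 2) a = (√(level a + 1))⁻¹ := by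
  rw [decay, rpow_neg (by positivity), sqrt_eq_rpow]

theorem sqrt_mul_decay_half_le_one (i : ι) (a : ι → ℕ) : √(a i + 1) * decay (1 / 2) a ≤ 1 := by
  rw [decay_half, mul_inv_le_iff₀ (by positivity), one_mul]
  gcongr
  exact le_level i a

theorem decay_smul_decay_smul {V : Type*} [AddCommGroup V] [Module ℝ V] (s t : ℝ)
    (u : (ι → ℕ) → V) :
    decay (ι := ι) s • decay (ι := ι) t • u = decay (ι := ι) (s + t) • u := by
  ext a
  rw [smul_smul, Pi.smul_apply', Pi.mul_apply, decay_mul_decay, Pi.smul_apply']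

variable [DecidableEq ι]

theorem decay_raise_le {s : ℝ} (hs : 0 ≤ s) (i : ι) (a : ι → ℕ) :
    decay s (raise i a) ≤ decay s a :=
  rpow_le_rpow_of_nonpos (by positivity) (by simp) (neg_nonpos.2 hs)

theorem decay_mul_decay_raise_le {s t : ℝ} (ht : 0 ≤ t) (i : ι) (a : ι → ℕ) :
    decay s a * decay t (raise i a) ≤ decay (s + t) a := by
  rw [← decay_mul_decay]
  exact mul_le_mul_of_nonneg_left (decay_raise_le ht i a) (decay_pos s a).le

theorem exists_bound_decay {s t : ℝ} (hst : s + t = 1 / 2) (ht : 0 ≤ t) (i : ι) :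
    ∃ C, ∀ a, |decay s a * √(a i + 1) * decay t (raise i a)| ≤ C := by
  refine ⟨1, fun a ↦ ?_⟩
  have hs := decay_pos s a
  have ht' := decay_pos t (raise i a)
  rw [abs_of_nonneg (by positivity)]
  calc decay s a * √(a i + 1) * decay t (raise i a)
      = √(a i + 1) * (decay s a * decay t (raise i a)) := by ring
    _ ≤ √(a i + 1) * decay (1 / 2) a := by
        gcongr
        exact (decay_mul_decay_raise_le ht i a).trans_eq (by rw [hst])
    _ ≤ 1 := sqrt_mul_decay_half_le_one i a

end Decay

section ScaledLadder

open ContinuousLinearMap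
open scoped lp

variable {ι V : Type*} [Fintype ι] [NormedAddCommGroup V] [InnerProductSpace ℝ V]

/-- The bounded operator `(N + 1)^(-s)`, with `N` the number operator. -/
noncomputable def decayOp (ι V : Type*) [Fintype ι] [NormedAddCommGroup V]
    [InnerProductSpace ℝ V] {s : ℝ} (hs : 0 ≤ s) : Fock ι V →L[ℝ] Fock ι V :=
  weightedComp (.refl _) (fun a ↦ decay s a • .id ℝ V) ⟨1, fun a ↦ by
    rw [norm_smul, Real.norm_of_nonneg (decay_pos s a).le]
    exact mul_le_one₀ (decay_le_one hs a) (norm_nonneg _) norm_id_le⟩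

theorem coe_decayOp {s : ℝ} (hs : 0 ≤ s) (u : Fock ι V) :
    ⇑(decayOp ι V hs u) = decay (ι := ι) s • ⇑u := rfl

/-- The resolvent `(N + 1)⁻¹` of the number operator `N`. -/
noncomputable abbrev resolvent (ι V : Type*) [Fintype ι] [NormedAddCommGroup V]
    [InnerProductSpace ℝ V] : Fock ι V →L[ℝ] Fock ι V :=
  decayOp ι V zero_le_one

variable [DecidableEq ι]

/-- The bounded operator `aᵢ (N + 1)^(-1/2)`, with `aᵢ` the annihilation operator and `N` the
number operator. -/
noncomputable def scaledAnn (V : Type*) [NormedAddCommGroup V] [InnerProductSpace ℝ V] (i : ι) :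
    Fock ι V →L[ℝ] Fock ι V :=
  lowering V (decay 0) (decay (1 / 2)) i (exists_bound_decay (by norm_num) (by norm_num) i)

/-- The bounded operator `aᵢ† (N + 1)^(-1/2)`, with `aᵢ†` the creation operator and `N` the number
operator. -/
noncomputable def scaledCre (V : Type*) [NormedAddCommGroup V] [InnerProductSpace ℝ V]
    [CompleteSpace V] (i : ι) : Fock ι V →L[ℝ] Fock ι V :=
  adjoint <| lowering V (decay (1 / 2)) (decay 0) i
    (exists_bound_decay (by norm_num) (by norm_num) i)

/-- The bounded operator `(N + 1)^(-1/4) aᵢ (N + 1)^(-1/4)`, with `aᵢ` the annihilation operator and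
`N` the number operator. -/
noncomputable def symmAnn (V : Type*) [NormedAddCommGroup V] [InnerProductSpace ℝ V] (i : ι) :
    Fock ι V →L[ℝ] Fock ι V :=
  lowering V (decay (1 / 4)) (decay (1 / 4)) i (exists_bound_decay (by norm_num) (by norm_num) i)

theorem coe_scaledAnn (i : ι) (u : Fock ι V) :
    ⇑(scaledAnn V i u) = annihilation i (decay (ι := ι) (1 / 2) • ⇑u) := by
  rw [scaledAnn, coe_lowering, decay_zero, one_smul]

variable [CompleteSpace V]

theorem coe_scaledCre (i : ι) (u : Fock ι V) :
    ⇑(scaledCre V i u) = creation i (decay (ι := ι) (1 / 2) • ⇑u) := by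
  rw [scaledCre, coe_adjoint_lowering, decay_zero, one_smul]

theorem coe_star_scaledAnn (i : ι) (u : Fock ι V) :
    ⇑(star (scaledAnn V i) u) = decay (ι := ι) (1 / 2) • creation i u := by
  rw [star_eq_adjoint, scaledAnn, coe_adjoint_lowering, decay_zero, one_smul]

theorem coe_star_scaledCre (i : ι) (u : Fock ι V) :
    ⇑(star (scaledCre V i) u) = decay (ι := ι) (1 / 2) • annihilation i u := by
  rw [star_eq_adjoint, scaledCre, adjoint_adjoint, coe_lowering, decay_zero, one_smul]

theorem star_scaledAnn_mul_scaledCre (i j : ι) :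
    star (scaledAnn V i) * scaledCre V j = star (scaledAnn V j) * scaledCre V i := by
  ext u : 2
  simp only [mul_apply_eq_comp, coe_star_scaledAnn, coe_scaledCre, creation_comm i j]

theorem star_scaledCre_mul_scaledCre (i j : ι) :
    star (scaledCre V i) * scaledCre V j =
      star (scaledAnn V j) * scaledAnn V i + if i = j then resolvent ι V else 0 := by
  ext u : 2
  rw [_root_.add_apply, lp.coeFn_add, mul_apply_eq_comp, coe_star_scaledCre,
    coe_scaledCre, annihilation_creation, smul_add, mul_apply_eq_comp,
    coe_star_scaledAnn, coe_scaledAnn]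
  split_ifs
  · rw [decay_smul_decay_smul, add_halves, coe_decayOp]
  · rw [smul_zero, _root_.zero_apply, lp.coeFn_zero]

theorem sum_star_scaledAnn_mul_scaledAnn :
    ∑ i, star (scaledAnn V i) * scaledAnn V i = 1 - resolvent ι V := by
  ext u a
  have hdecay : decay (1 / 2) a * (level a * decay (1 / 2) a) = 1 - decay 1 a := by
    have h : decay 1 a * (level a + 1) = 1 := by
      rw [decay_one]
      exact inv_mul_cancel₀ (by positivity)
    have hsq := decay_mul_decay (1 / 2) (1 / 2) a
    rw [add_halves] at hsq
    linear_combination level a * hsq + h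
  calc (((∑ i, star (scaledAnn V i) * scaledAnn V i) u : Fock ι V) : (ι → ℕ) → V) a
      = ∑ i, decay (1 / 2) a • creation i (annihilation i (decay (ι := ι) (1 / 2) • ⇑u)) a := by
        simp only [_root_.sum_apply, mul_apply_eq_comp, lp.coeFn_sum, Finset.sum_apply,
          coe_star_scaledAnn, coe_scaledAnn, Pi.smul_apply']
    _ = (decay (1 / 2) a * (level a * decay (1 / 2) a)) • u a := by
        rw [← Finset.smul_sum, sum_creation_annihilation_apply, Pi.smul_apply', smul_smul,
          smul_smul, mul_assoc]
    _ = u a - decay 1 a • u a := by rw [hdecay, sub_smul, one_smul]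

end ScaledLadder

section JointEigenspaces

open Module.End

variable {ι F : Type*} [NormedAddCommGroup F] [InnerProductSpace ℝ F] {X C : ι → Module.End ℝ F}

theorem norm_sum_sq_of_mem_iInf_eigenspace (hX : ∀ i, (X i).IsSymmetric) {w : (ι → ℝ) → F}
    (hw : ∀ γ, w γ ∈ ⨅ i, eigenspace (X i) (γ i)) (s : Finset (ι → ℝ)) :
    ‖∑ γ ∈ s, w γ‖ ^ 2 = ∑ γ ∈ s, ‖w γ‖ ^ 2 :=
  (LinearMap.IsSymmetric.orthogonalFamily_iInf_eigenspaces hX).norm_sum (fun γ ↦ ⟨w γ, hw γ⟩) s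

theorem exists_sum_eq_of_pairwise_commute [FiniteDimensional ℝ F]
    (hX : ∀ i, (X i).IsSymmetric) (hXX : Pairwise (Function.onFun Commute X)) (v : F) :
    ∃ (s : Finset (ι → ℝ)) (w : (ι → ℝ) → F),
      (∀ γ, w γ ∈ ⨅ i, eigenspace (X i) (γ i)) ∧ ∑ γ ∈ s, w γ = v := by
  classical
  have hv : v ∈ ⨆ γ : ι → ℝ, ⨅ i, eigenspace (X i) (γ i) := by
    rw [LinearMap.IsSymmetric.iSup_iInf_eq_top_of_commute hX hXX]
    trivial
  obtain ⟨f, hf⟩ := (Submodule.mem_iSup_iff_exists_dfinsupp' _ v).1 hv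
  exact ⟨f.support, fun γ ↦ f γ, fun γ ↦ (f γ).2, hf⟩

theorem sq_mul_sum_norm_sq_le_norm_sum_sq [Fintype ι] [FiniteDimensional ℝ F]
    (hX : ∀ i, (X i).IsSymmetric) (hXX : Pairwise (Function.onFun Commute X))
    (hCX : ∀ i j, Commute (X j) (C i)) {c : ℝ} (hc : 0 ≤ c)
    (hC : ∀ (x : EuclideanSpace ℝ ι) v, c * ‖x‖ * ‖v‖ ≤ ‖∑ i, x i • C i v‖) (v : F) :
    c ^ 2 * ∑ i, ‖X i v‖ ^ 2 ≤ ‖∑ i, C i (X i v)‖ ^ 2 := by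
  obtain ⟨s, w, hw, rfl⟩ := exists_sum_eq_of_pairwise_commute hX hXX v
  have hXw (γ i) : X i (w γ) = γ i • w γ :=
    mem_eigenspace_iff.1 ((Submodule.mem_iInf _).1 (hw γ) i)
  have hCw (γ i) : C i (w γ) ∈ ⨅ j, eigenspace (X j) (γ j) := by
    refine (Submodule.mem_iInf _).2 fun j ↦ mem_eigenspace_iff.2 ?_
    rw [← Module.End.mul_apply, (hCX i j).eq, Module.End.mul_apply, hXw, map_smul]
  have hXv (i) : ‖X i (∑ γ ∈ s, w γ)‖ ^ 2 = ∑ γ ∈ s, ‖γ i • w γ‖ ^ 2 := by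
    simp only [map_sum, hXw]
    exact norm_sum_sq_of_mem_iInf_eigenspace hX (fun γ ↦ Submodule.smul_mem _ _ (hw γ)) s
  have hCXv : ∑ i, C i (X i (∑ γ ∈ s, w γ)) = ∑ γ ∈ s, ∑ i, γ i • C i (w γ) := by
    simp only [map_sum, hXw, map_smul]
    exact Finset.sum_comm
  rw [hCXv, norm_sum_sq_of_mem_iInf_eigenspace hX
    fun γ ↦ Submodule.sum_mem _ fun i _ ↦ Submodule.smul_mem _ _ (hCw γ i)]
  simp only [hXv]
  rw [Finset.sum_comm, Finset.mul_sum]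
  refine Finset.sum_le_sum fun γ _ ↦ ?_
  calc c ^ 2 * ∑ i, ‖γ i • w γ‖ ^ 2 = (c * ‖WithLp.toLp 2 γ‖ * ‖w γ‖) ^ 2 := by
        simp only [norm_smul, mul_pow, ← Finset.sum_mul, EuclideanSpace.norm_sq_eq]
        ring
    _ ≤ ‖∑ i, γ i • C i (w γ)‖ ^ 2 :=
        pow_le_pow_left₀ (by positivity) (hC (WithLp.toLp 2 γ) (w γ)) 2

theorem sq_mul_sum_norm_sq_le_norm_sum_sq_of_mem [Fintype ι] (hX : ∀ i, (X i).IsSymmetric)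
    (hXX : Pairwise (Function.onFun Commute X)) (hCX : ∀ i j, Commute (X j) (C i)) {c : ℝ}
    (hc : 0 ≤ c) (hC : ∀ (x : EuclideanSpace ℝ ι) v, c * ‖x‖ * ‖v‖ ≤ ‖∑ i, x i • C i v‖)
    {E : Submodule ℝ F} [FiniteDimensional ℝ E] (hXE : ∀ i, ∀ v ∈ E, X i v ∈ E)
    (hCE : ∀ i, ∀ v ∈ E, C i v ∈ E) {v : F} (hv : v ∈ E) :
    c ^ 2 * ∑ i, ‖X i v‖ ^ 2 ≤ ‖∑ i, C i (X i v)‖ ^ 2 := by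
  have h := sq_mul_sum_norm_sq_le_norm_sum_sq (X := fun i ↦ (X i).restrict (hXE i))
    (C := fun i ↦ (C i).restrict (hCE i)) (fun i ↦ (hX i).restrict_invariant (hXE i))
    (fun i j hij ↦ LinearMap.restrict_commute (hXX hij) _ _)
    (fun i j ↦ LinearMap.restrict_commute (hCX i j) _ _) hc
    (fun x w ↦ by simpa using hC x w) ⟨v, hv⟩
  simpa using h

end JointEigenspaces

section SupportedOn

open scoped lp

variable {α V : Type*} [NormedAddCommGroup V] [InnerProductSpace ℝ V]

/-- The subspace of the square-summable families vanishing outside `s`. -/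
def supportedOn (V : Type*) [NormedAddCommGroup V] [InnerProductSpace ℝ V] (s : Set α) :
    Submodule ℝ ℓ²(α, V) where
  carrier := {u | ∀ a ∉ s, u a = 0}
  zero_mem' _ _ := rfl
  add_mem' hu hv a ha := by rw [lp.coeFn_add, Pi.add_apply, hu a ha, hv a ha, add_zero]
  smul_mem' r u hu a ha := by rw [lp.coeFn_smul, Pi.smul_apply, hu a ha, smul_zero]

variable {s : Set α}

theorem mem_supportedOn {u : ℓ²(α, V)} : u ∈ supportedOn V s ↔ ∀ a ∉ s, u a = 0 := Iff.rfl

theorem isClosed_supportedOn (s : Set α) : IsClosed (supportedOn V s : Set ℓ²(α, V)) := by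
  have h : (supportedOn V s : Set ℓ²(α, V)) = ⋂ a ∈ sᶜ, {u | lp.evalCLM ℝ _ 2 a u = 0} := by
    ext u
    simp [mem_supportedOn, lp.evalCLM]
  rw [h]
  exact isClosed_biInter fun a _ ↦ isClosed_eq (ContinuousLinearMap.continuous _) continuous_const

theorem finiteDimensional_supportedOn [FiniteDimensional ℝ V] (hs : s.Finite) :
    FiniteDimensional ℝ (supportedOn V s) := by
  have := hs.to_subtype
  let f : supportedOn V s →ₗ[ℝ] s → V :=
    LinearMap.pi fun a ↦ (lp.evalCLM ℝ _ 2 a.1).toLinearMap ∘ₗ (supportedOn V s).subtype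
  refine FiniteDimensional.of_injective f (LinearMap.ker_eq_bot.1 (LinearMap.ker_eq_bot'.2 ?_))
  intro u hu
  ext a
  by_cases ha : a ∈ s
  · exact congrFun hu ⟨a, ha⟩
  · exact u.2 a ha

theorem finiteDimensional_quotient_supportedOn [FiniteDimensional ℝ V] (hs : sᶜ.Finite) :
    FiniteDimensional ℝ (ℓ²(α, V) ⧸ supportedOn V s) := by
  have := hs.to_subtype
  let f : ℓ²(α, V) →ₗ[ℝ] (sᶜ : Set α) → V := LinearMap.pi fun a ↦ (lp.evalCLM ℝ _ 2 a.1).toLinearMap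
  have hf : f.ker = supportedOn V s := by
    ext u
    simp [f, funext_iff, mem_supportedOn, lp.evalCLM]
  rw [← hf]
  exact f.quotKerEquivRange.symm.finiteDimensional

end SupportedOn

section Position

open ContinuousLinearMap
open scoped lp

variable {ι V : Type*} [DecidableEq ι]

/-- The formal position operator `√2 xᵢ` in Hermite coordinates. -/
noncomputable def position [AddCommGroup V] [Module ℝ V] (i : ι) : Module.End ℝ ((ι → ℕ) → V) :=
  annihilation i + creation i

theorem position_apply [AddCommGroup V] [Module ℝ V] (i : ι) (u : (ι → ℕ) → V) (a : ι → ℕ) :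
    position i u a = √(a i + 1) • u (raise i a) + √(a i) • u (lower i a) := rfl

theorem position_comm [AddCommGroup V] [Module ℝ V] (i j : ι) (u : (ι → ℕ) → V) :
    position i (position j u) = position j (position i u) := by
  simp only [position, LinearMap.add_apply, map_add, annihilation_comm i j, creation_comm i j,
    annihilation_creation, eq_comm (a := j)]
  abel

/-- The cut-off function of the slab `a i < L`. -/
def cutoff (L : ℕ) (i : ι) (a : ι → ℕ) : ℝ := if a i < L then 1 else 0

theorem position_cutoff_smul [AddCommGroup V] [Module ℝ V] (L : ℕ) {i j : ι} (h : i ≠ j)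
    (u : (ι → ℕ) → V) : position j (cutoff L i • u) = cutoff L i • position j u := by
  ext a
  simp only [position_apply, Pi.smul_apply', cutoff, raise_apply_of_ne h, lower_apply_of_ne h,
    smul_add]
  congr 1 <;> exact smul_comm _ _ _

theorem exists_bound_cutoff (L : ℕ) (i : ι) :
    ∃ C, ∀ a, |cutoff L i a * √(a i + 1) * cutoff L i (raise i a)| ≤ C := by
  refine ⟨√L, fun a ↦ ?_⟩
  rw [cutoff, cutoff, raise_apply_self]
  split_ifs with h h'
  · rw [one_mul, mul_one, abs_of_nonneg (Real.sqrt_nonneg _)]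
    exact Real.sqrt_le_sqrt (by exact_mod_cast h'.le)
  all_goals simp

variable [NormedAddCommGroup V] [InnerProductSpace ℝ V] [CompleteSpace V]

/-- The position operator truncated to the slab `a i < L`, a bounded symmetric operator. -/
noncomputable def truncatedPosition (V : Type*) [NormedAddCommGroup V] [InnerProductSpace ℝ V]
    [CompleteSpace V] (L : ℕ) (i : ι) : Fock ι V →L[ℝ] Fock ι V :=
  lowering V _ _ i (exists_bound_cutoff L i) + adjoint (lowering V _ _ i (exists_bound_cutoff L i))

theorem coe_truncatedPosition (L : ℕ) (i : ι) (u : Fock ι V) :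
    ⇑(truncatedPosition V L i u) = cutoff L i • position i (cutoff L i • ⇑u) := by
  rw [truncatedPosition, _root_.add_apply, lp.coeFn_add, coe_lowering, coe_adjoint_lowering,
    ← smul_add]
  rfl

theorem isSymmetric_truncatedPosition (L : ℕ) (i : ι) :
    (truncatedPosition V L i : Fock ι V →ₗ[ℝ] Fock ι V).IsSymmetric :=
  IsSelfAdjoint.isSymmetric (IsSelfAdjoint.add_star_self _)

theorem truncatedPosition_comm (L : ℕ) {i j : ι} (h : i ≠ j) (u : Fock ι V) :
    truncatedPosition V L i (truncatedPosition V L j u) =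
      truncatedPosition V L j (truncatedPosition V L i u) := by
  have key {i j : ι} (h : i ≠ j) : ⇑(truncatedPosition V L i (truncatedPosition V L j u)) =
      cutoff L i • cutoff L j • position i (position j (cutoff L i • cutoff L j • ⇑u)) := by
    rw [coe_truncatedPosition, coe_truncatedPosition, smul_comm (cutoff L i) (cutoff L j),
      position_cutoff_smul L h.symm, position_cutoff_smul L h]
  ext1
  rw [key h, key h.symm, position_comm, smul_comm (cutoff L i), smul_comm (cutoff L i) _ ⇑u]

theorem lift_truncatedPosition (L : ℕ) (i : ι) (M : V →L[ℝ] V) (u : Fock ι V) :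
    lift _ M (truncatedPosition V L i u) = truncatedPosition V L i (lift _ M u) := by
  ext a
  simp [coe_truncatedPosition, position_apply]

theorem truncatedPosition_mem_supportedOn (L : ℕ) (i : ι) {u : Fock ι V}
    (hu : u ∈ supportedOn V {a | ∀ j, a j < L}) :
    truncatedPosition V L i u ∈ supportedOn V {a | ∀ j, a j < L} := by
  intro a ha
  obtain ⟨j, hj⟩ : ∃ j, ¬ a j < L := by simpa using ha
  rw [coe_truncatedPosition, Pi.smul_apply', position_apply, Pi.smul_apply', Pi.smul_apply']
  rcases eq_or_ne j i with rfl | h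
  · rw [cutoff, if_neg hj, zero_smul]
  · rw [hu (raise i a) fun h' ↦ hj (raise_apply_of_ne h a ▸ h' j),
      hu (lower i a) fun h' ↦ hj (lower_apply_of_ne h a ▸ h' j)]
    simp

variable [Fintype ι]

/-- The bounded operator `(aᵢ + aᵢ†) (N + 1)^(-1/2)`, with `N` the number operator. -/
noncomputable def scaledPosition (V : Type*) [NormedAddCommGroup V] [InnerProductSpace ℝ V]
    [CompleteSpace V] (i : ι) : Fock ι V →L[ℝ] Fock ι V :=
  scaledAnn V i + scaledCre V i

theorem coe_scaledPosition (i : ι) (u : Fock ι V) :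
    ⇑(scaledPosition V i u) = position i (decay (ι := ι) (1 / 2) • ⇑u) := by
  rw [scaledPosition, _root_.add_apply, lp.coeFn_add, coe_scaledAnn, coe_scaledCre]
  rfl

theorem scaledPosition_eq_truncatedPosition {L : ℕ} (i : ι) {u : Fock ι V}
    (hu : u ∈ supportedOn V {a | ∀ j, a j < L}) :
    scaledPosition V i u = truncatedPosition V (L + 1) i (decayOp ι V one_half_pos.le u) := by
  have hu_zero {b : ι → ℕ} (hb : L ≤ b i) : u b = 0 := hu b fun h ↦ hb.not_gt (h i)
  have hcut : cutoff (L + 1) i • decay (ι := ι) (1 / 2) • ⇑u = decay (ι := ι) (1 / 2) • ⇑u := by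
    ext a
    by_cases ha : a i < L + 1
    · simp [cutoff, ha]
    · simp [hu_zero (b := a) (by omega)]
  ext a
  rw [coe_truncatedPosition, coe_decayOp, hcut, coe_scaledPosition, Pi.smul_apply', cutoff]
  split_ifs with ha
  · rw [one_smul]
  · have hr : L ≤ raise i a i := by rw [raise_apply_self]; omega
    have hl : L ≤ lower i a i := by rw [lower_apply_self]; omega
    simp [position_apply, hu_zero hr, hu_zero hl]

end Position

section PositionBound

open Filter Topology
open scoped lp

variable {α ι V : Type*} [Fintype ι] [NormedAddCommGroup V] [InnerProductSpace ℝ V]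

theorem mul_norm_le_norm_lift {M : V →L[ℝ] V} {c : ℝ} (hM : ∀ v, c * ‖v‖ ≤ ‖M v‖)
    (hc : 0 ≤ c) (u : ℓ²(α, V)) : c * ‖u‖ ≤ ‖lift α M u‖ := by
  have h := norm_le_of_norm_le_comp (u := lift α M u) (v := c • u) (g := id) zero_le_one
    (fun a ↦ by simpa [norm_smul, abs_of_nonneg hc] using hM (u a)) Function.injective_id.injOn
  simpa [norm_smul, abs_of_nonneg hc] using h

theorem mul_norm_le_norm_sum_lift {C : ι → V →L[ℝ] V} {c : ℝ} (hc : 0 ≤ c)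
    (hC : ∀ (x : EuclideanSpace ℝ ι) v, c * ‖x‖ * ‖v‖ ≤ ‖∑ i, x i • C i v‖)
    (x : EuclideanSpace ℝ ι) (u : ℓ²(α, V)) :
    c * ‖x‖ * ‖u‖ ≤ ‖∑ i, x i • lift α (C i) u‖ := by
  have h := mul_norm_le_norm_lift (M := ∑ i, x i • C i) (c := c * ‖x‖)
    (fun v ↦ by simpa [_root_.sum_apply] using hC x v) (by positivity) u
  convert h using 2
  ext a
  rw [lp.coeFn_sum, Finset.sum_apply]
  simp [_root_.sum_apply]

theorem finite_setOf_forall_lt {ι : Type*} [Finite ι] (L : ℕ) :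
    {a : ι → ℕ | ∀ i, a i < L}.Finite := by
  simpa [Set.pi] using Set.Finite.pi fun _ : ι ↦ Set.finite_lt_nat L

variable [DecidableEq ι] [FiniteDimensional ℝ V] {C : ι → V →L[ℝ] V} {c : ℝ}

theorem sq_mul_sum_norm_scaledPosition_sq_le_of_mem (hc : 0 ≤ c)
    (hC : ∀ (x : EuclideanSpace ℝ ι) v, c * ‖x‖ * ‖v‖ ≤ ‖∑ i, x i • C i v‖) {L : ℕ}
    {u : Fock ι V} (hu : u ∈ supportedOn V {a | ∀ j, a j < L}) :
    c ^ 2 * ∑ i, ‖scaledPosition V i u‖ ^ 2 ≤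
      ‖∑ i, lift _ (C i) (scaledPosition V i u)‖ ^ 2 := by
  have := finiteDimensional_supportedOn (V := V) (finite_setOf_forall_lt (ι := ι) (L + 1))
  simp only [scaledPosition_eq_truncatedPosition _ hu]
  refine sq_mul_sum_norm_sq_le_norm_sum_sq_of_mem
    (X := fun i ↦ (truncatedPosition V (L + 1) i).toLinearMap)
    (C := fun i ↦ (lift _ (C i)).toLinearMap) (isSymmetric_truncatedPosition (L + 1))
    (fun i j hij ↦ LinearMap.ext (truncatedPosition_comm (L + 1) hij))
    (fun i j ↦ LinearMap.ext fun w ↦ (lift_truncatedPosition (L + 1) j (C i) w).symm)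
    hc (mul_norm_le_norm_sum_lift hc hC)
    (fun i v hv ↦ truncatedPosition_mem_supportedOn (L + 1) i hv)
    (fun i v hv a ha ↦ ?_) (fun a ha ↦ ?_)
  · exact (congrArg (C i) (hv a ha)).trans (map_zero _)
  · rw [coe_decayOp, Pi.smul_apply', hu a fun h ↦ ha fun j ↦ (h j).trans L.lt_succ_self, smul_zero]

theorem sq_mul_sum_norm_scaledPosition_sq_le (hc : 0 ≤ c)
    (hC : ∀ (x : EuclideanSpace ℝ ι) v, c * ‖x‖ * ‖v‖ ≤ ‖∑ i, x i • C i v‖) (u : Fock ι V) :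
    c ^ 2 * ∑ i, ‖scaledPosition V i u‖ ^ 2 ≤
      ‖∑ i, lift _ (C i) (scaledPosition V i u)‖ ^ 2 := by
  have hu : Tendsto (fun s ↦ ∑ a ∈ s, lp.single 2 a (u a)) atTop (𝓝 u) :=
    lp.hasSum_single (by norm_num) u
  refine le_of_tendsto_of_tendsto'
    (((by fun_prop : Continuous fun u : Fock ι V ↦
      c ^ 2 * ∑ i, ‖scaledPosition V i u‖ ^ 2).tendsto u).comp hu)
    (((by fun_prop : Continuous fun u : Fock ι V ↦
      ‖∑ i, lift _ (C i) (scaledPosition V i u)‖ ^ 2).tendsto u).comp hu) fun s ↦ ?_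
  refine sq_mul_sum_norm_scaledPosition_sq_le_of_mem hc hC (L := s.sup level + 1)
    (Submodule.sum_mem _ fun a ha b hb ↦ ?_)
  have hab : b ≠ a := by
    rintro rfl
    exact hb fun i ↦ Nat.lt_succ_of_le ((le_level i b).trans (Finset.le_sup (f := level) ha))
  rw [lp.single_apply, Pi.single_eq_of_ne hab]

end PositionBound

section DiracSymbol

variable {ι A B : Type*} [Ring A] [StarRing A] [Algebra ℝ A] [Ring B] [StarRing B] [Algebra ℝ B]

/-- Pairwise anticommuting elements of a real star algebra with square `ε` which are self-adjoint
up to the sign `ε`: the generators of a Clifford algebra. Here `ε` is `1` or `-1`. -/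
structure IsClifford (ε : ℝ) (e : ι → A) : Prop where
  star_eq (i : ι) : star (e i) = ε • e i
  mul_self (i : ι) : e i * e i = ε • 1
  mul_eq_neg_mul {i j : ι} (h : i ≠ j) : e i * e j = -(e j * e i)

/-- The symbol `∑ᵢ Gᵢ ∂ᵢ + Cᵢ xᵢ` of a Dirac operator with potential on `ℝ^ι`: the `Gᵢ` are
self-adjoint Clifford generators, the skew-adjoint `Cᵢ` anticommute with them, and the potential
`∑ᵢ xᵢ Cᵢ` is invertible away from the origin. -/
structure IsDiracSymbol [Fintype ι] (G C : ι → A) : Prop where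
  isClifford : IsClifford 1 G
  star_right (i : ι) : star (C i) = -C i
  mul_eq_neg_mul (i j : ι) : G i * C j = -(C j * G i)
  isUnit {x : ι → ℝ} (hx : x ≠ 0) : IsUnit (∑ i, x i • C i)

theorem IsClifford.map {ε : ℝ} {e : ι → A} (he : IsClifford ε e) (f : A →⋆ₐ[ℝ] B) :
    IsClifford ε fun i ↦ f (e i) where
  star_eq i := by rw [← map_star, he.star_eq, map_smul]
  mul_self i := by rw [← map_mul, he.mul_self, map_smul, map_one]
  mul_eq_neg_mul h := by rw [← map_mul, he.mul_eq_neg_mul h, map_neg, map_mul]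

theorem IsDiracSymbol.map [Fintype ι] {G C : ι → A} (h : IsDiracSymbol G C) (f : A →⋆ₐ[ℝ] B) :
    IsDiracSymbol (fun i ↦ f (G i)) fun i ↦ f (C i) where
  isClifford := h.isClifford.map f
  star_right i := by rw [← map_star, h.star_right, map_neg]
  mul_eq_neg_mul i j := by rw [← map_mul, h.mul_eq_neg_mul, map_neg, map_mul]
  isUnit hx := by simpa only [map_sum, map_smul] using (h.isUnit hx).map f

theorem IsClifford.sum_sum_mul_mul [Fintype ι] {ε : ℝ} {e : ι → A} (he : IsClifford ε e)
    {s : ι → ι → A} (hs : ∀ i j, s i j = s j i) :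
    ∑ i, ∑ j, e i * e j * s i j = ε • ∑ i, s i i := by
  classical
  have hadd (i j) : e i * e j + e j * e i = if i = j then (2 : ℝ) • ε • (1 : A) else 0 := by
    split_ifs with h
    · rw [h, he.mul_self, two_smul]
    · rw [he.mul_eq_neg_mul h, neg_add_cancel]
  have hswap : ∑ i, ∑ j, e i * e j * s i j = ∑ i, ∑ j, e j * e i * s i j := by
    rw [Finset.sum_comm]
    simp only [hs]
  have htwo : (2 : ℝ) • ∑ i, ∑ j, e i * e j * s i j = (2 : ℝ) • ε • ∑ i, s i i := by
    rw [two_smul]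
    nth_rw 2 [hswap]
    simp only [← Finset.sum_add_distrib, ← add_mul, hadd, ite_mul, zero_mul, Finset.sum_ite_eq,
      Finset.mem_univ, if_true, smul_mul_assoc, one_mul, Finset.smul_sum]
  exact smul_right_injective A (two_ne_zero' ℝ) htwo

variable [Fintype ι] {G C p y : ι → A} {r : A}

theorem IsDiracSymbol.star_mul_add_star_mul (h : IsDiracSymbol G C)
    (hGp : ∀ i j, Commute (G i) (p j)) (hGy : ∀ i j, Commute (G i) (y j))
    (hCp : ∀ i j, Commute (C i) (p j)) (hCy : ∀ i j, Commute (C i) (y j)) (i j : ι) :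
    star (G i * p i) * (C j * y j) + star (C j * y j) * (G i * p i) =
      G i * C j * (star (p i) * y j + star (y j) * p i) := by
  have hG (i) : star (G i) = G i := by rw [h.isClifford.star_eq, one_smul]
  have hGC {w : A} (hG' : Commute (G i) w) (hC' : Commute (C j) w) :
      star w * (G i * C j) = G i * C j * star w := by
    refine (Commute.mul_left ?_ ?_).eq.symm
    · simpa only [hG] using hG'.star_star
    · simpa only [h.star_right, Commute.neg_left_iff] using hC'.star_star
  calc star (G i * p i) * (C j * y j) + star (C j * y j) * (G i * p i)
      = star (p i) * (G i * C j) * y j + star (y j) * -(C j * G i) * p i := by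
        simp only [star_mul, hG, h.star_right, mul_assoc, neg_mul]
    _ = G i * C j * (star (p i) * y j + star (y j) * p i) := by
        rw [← h.mul_eq_neg_mul, hGC (hGp i i) (hCp j i), hGC (hGy i j) (hCy j j)]
        noncomm_ring

-- The anticommutation relations remove the off-diagonal terms of the square of a Dirac operator.
theorem IsDiracSymbol.star_mul_self_sum [DecidableEq ι] (h : IsDiracSymbol G C)
    (hGp : ∀ i j, Commute (G i) (p j)) (hGy : ∀ i j, Commute (G i) (y j))
    (hCp : ∀ i j, Commute (C i) (p j)) (hCy : ∀ i j, Commute (C i) (y j))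
    (hpp : ∀ i j, star (p i) * p j = star (p j) * p i)
    (hpy : ∀ i j, star (p i) * y j + star (y j) * p i = if i = j then r else 0) :
    star (∑ i, (G i * p i + C i * y i)) * ∑ i, (G i * p i + C i * y i) =
      ∑ i, star (p i) * p i + star (∑ i, C i * y i) * ∑ i, C i * y i + (∑ i, G i * C i) * r := by
  have hG (i) : star (G i) = G i := by rw [h.isClifford.star_eq, one_smul]
  have hPP : star (∑ i, G i * p i) * ∑ i, G i * p i = ∑ i, star (p i) * p i := by
    have hclifford := h.isClifford.sum_sum_mul_mul hpp
    rw [one_smul] at hclifford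
    rw [← hclifford, star_sum, Finset.sum_mul_sum]
    refine Finset.sum_congr rfl fun i _ ↦ Finset.sum_congr rfl fun j _ ↦ ?_
    have hcomm : Commute (G i * G j) (star (p i)) := by
      simpa only [hG] using (hGp i i).star_star.mul_left (hGp j i).star_star
    rw [star_mul, hG, mul_assoc, ← mul_assoc (G i), ← mul_assoc, ← hcomm.eq, mul_assoc]
  have hPQ : star (∑ i, G i * p i) * (∑ i, C i * y i) + star (∑ i, C i * y i) * ∑ i, G i * p i =
      (∑ i, G i * C i) * r := by
    rw [star_sum, star_sum, Finset.sum_mul_sum, Finset.sum_mul_sum, Finset.sum_comm (γ := ι)]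
    simp only [← Finset.sum_add_distrib]
    rw [Finset.sum_comm]
    simp only [h.star_mul_add_star_mul hGp hGy hCp hCy, hpy, mul_ite, mul_zero, Finset.sum_ite_eq,
      Finset.mem_univ, if_true, Finset.sum_mul]
  rw [Finset.sum_add_distrib, star_add, ← hPQ, ← hPP]
  noncomm_ring

end DiracSymbol

section LiftHom

open ContinuousLinearMap
open scoped lp

variable {α ι V : Type*} [DecidableEq ι] [NormedAddCommGroup V] [InnerProductSpace ℝ V]
  [CompleteSpace V]

/-- The pointwise action of the operators on `V`, as a homomorphism of star algebras. -/
noncomputable def liftHom (α V : Type*) [NormedAddCommGroup V] [InnerProductSpace ℝ V]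
    [CompleteSpace V] : (V →L[ℝ] V) →⋆ₐ[ℝ] (ℓ²(α, V) →L[ℝ] ℓ²(α, V)) where
  toFun := lift α
  map_one' := rfl
  map_mul' _ _ := rfl
  map_zero' := rfl
  map_add' _ _ := rfl
  commutes' _ := rfl
  map_star' M := (adjoint_lift M).symm

theorem liftHom_apply (M : V →L[ℝ] V) : liftHom α V M = lift α M := rfl

variable {p q : (ι → ℕ) → ℝ} {i : ι} (h : ∃ C, ∀ a, |p a * √(a i + 1) * q (raise i a)| ≤ C)
  (M : V →L[ℝ] V)

theorem commute_liftHom_lowering : Commute (liftHom _ V M) (lowering V p q i h) := by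
  ext u a
  simp [liftHom_apply, coe_lowering, annihilation_apply]

theorem commute_liftHom_adjoint_lowering :
    Commute (liftHom _ V M) (adjoint (lowering V p q i h)) := by
  have hcomm := (commute_liftHom_lowering h (star M)).star_star
  rwa [← map_star, star_star, star_eq_adjoint (lowering V p q i h)] at hcomm

end LiftHom

section ScaledDirac

open ContinuousLinearMap
open scoped lp

variable {ι V : Type*} [Fintype ι] [DecidableEq ι] [NormedAddCommGroup V] [InnerProductSpace ℝ V]
  [CompleteSpace V]

/-- The bounded operator `(aᵢ - aᵢ†) (N + 1)^(-1/2)`, with `N` the number operator. -/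
noncomputable def scaledDerivative (V : Type*) [NormedAddCommGroup V] [InnerProductSpace ℝ V]
    [CompleteSpace V] (i : ι) : Fock ι V →L[ℝ] Fock ι V :=
  scaledAnn V i - scaledCre V i

theorem commute_liftHom_scaledAnn (M : V →L[ℝ] V) (i : ι) :
    Commute (liftHom _ V M) (scaledAnn V i) := commute_liftHom_lowering _ M

theorem commute_liftHom_scaledCre (M : V →L[ℝ] V) (i : ι) :
    Commute (liftHom _ V M) (scaledCre V i) := commute_liftHom_adjoint_lowering _ M

theorem commute_liftHom_scaledDerivative (M : V →L[ℝ] V) (i : ι) :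
    Commute (liftHom _ V M) (scaledDerivative V i) :=
  (commute_liftHom_scaledAnn M i).sub_right (commute_liftHom_scaledCre M i)

theorem commute_liftHom_scaledPosition (M : V →L[ℝ] V) (i : ι) :
    Commute (liftHom _ V M) (scaledPosition V i) :=
  (commute_liftHom_scaledAnn M i).add_right (commute_liftHom_scaledCre M i)

theorem star_scaledCre_mul_scaledAnn (i j : ι) :
    star (scaledCre V i) * scaledAnn V j = star (scaledCre V j) * scaledAnn V i := by
  simpa only [star_mul, star_star] using congrArg star (star_scaledAnn_mul_scaledCre (V := V) j i)

theorem star_scaledDerivative_mul_scaledDerivative (i j : ι) :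
    star (scaledDerivative V i) * scaledDerivative V j =
      star (scaledDerivative V j) * scaledDerivative V i := by
  simp only [scaledDerivative, star_sub, sub_mul, mul_sub, star_scaledCre_mul_scaledCre,
    star_scaledCre_mul_scaledAnn i j, star_scaledAnn_mul_scaledCre i j, eq_comm (a := j)]
  abel

theorem star_scaledDerivative_mul_scaledPosition_add (i j : ι) :
    star (scaledDerivative V i) * scaledPosition V j +
      star (scaledPosition V j) * scaledDerivative V i =
      if i = j then -(2 • resolvent ι V) else 0 := by
  simp only [scaledDerivative, scaledPosition, star_sub, star_add, sub_mul, mul_sub, add_mul,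
    mul_add, star_scaledCre_mul_scaledCre, star_scaledCre_mul_scaledAnn i j,
    star_scaledAnn_mul_scaledCre i j, eq_comm (a := j)]
  split_ifs <;> abel

theorem two_mul_sub_le_sum_norm_sq (u : Fock ι V) :
    2 * (‖u‖ ^ 2 - ‖resolvent ι V u‖ * ‖u‖) ≤
      ∑ i, ‖scaledDerivative V i u‖ ^ 2 + ∑ i, ‖scaledPosition V i u‖ ^ 2 := by
  have hann : ∑ i, ‖scaledAnn V i u‖ ^ 2 = ‖u‖ ^ 2 - inner ℝ (resolvent ι V u) u := by
    have h := congrArg (fun S ↦ inner ℝ (S u) u)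
      (sum_star_scaledAnn_mul_scaledAnn (ι := ι) (V := V))
    simpa [_root_.sum_apply, sum_inner, inner_sub_left, star_eq_adjoint, adjoint_inner_left,
      real_inner_self_eq_norm_sq] using h
  have hpar (i) : 2 * ‖scaledAnn V i u‖ ^ 2 ≤
      ‖scaledDerivative V i u‖ ^ 2 + ‖scaledPosition V i u‖ ^ 2 := by
    have h := parallelogram_law_with_norm ℝ (scaledAnn V i u) (scaledCre V i u)
    have hD : scaledDerivative V i u = scaledAnn V i u - scaledCre V i u := rfl
    have hP : scaledPosition V i u = scaledAnn V i u + scaledCre V i u := rfl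
    rw [hD, hP]
    nlinarith [sq_nonneg ‖scaledCre V i u‖]
  rw [← Finset.sum_add_distrib]
  calc 2 * (‖u‖ ^ 2 - ‖resolvent ι V u‖ * ‖u‖)
      ≤ ∑ i, 2 * ‖scaledAnn V i u‖ ^ 2 := by
        rw [← Finset.mul_sum, hann]
        linarith [real_inner_le_norm (resolvent ι V u) u]
    _ ≤ _ := Finset.sum_le_sum fun i _ ↦ hpar i

end ScaledDirac

section SymbolBound

variable {ι V : Type*} [Fintype ι] [NormedAddCommGroup V] [InnerProductSpace ℝ V]
  [FiniteDimensional ℝ V] {G C : ι → V →L[ℝ] V}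

theorem IsDiracSymbol.exists_pos_mul_norm_le (h : IsDiracSymbol G C) :
    ∃ c > 0, ∀ (x : EuclideanSpace ℝ ι) v, c * ‖x‖ * ‖v‖ ≤ ‖∑ i, x i • C i v‖ := by
  have hne {x : EuclideanSpace ℝ ι} (hx : x ≠ 0) {v : V} (hv : v ≠ 0) :
      ∑ i, x i • C i v ≠ 0 := by
    have hunit := h.isUnit fun h0 : (fun i ↦ x i) = 0 ↦ hx (by ext i; exact congrFun h0 i)
    have hinj := ((ContinuousLinearMap.isUnit_iff_bijective).1 hunit).injective
    simpa [_root_.sum_apply] using hinj.ne hv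
  have hcompact := (isCompact_sphere (0 : EuclideanSpace ℝ ι) 1).prod (isCompact_sphere (0 : V) 1)
  obtain ⟨c, hc, hbound⟩ := hcompact.exists_forall_le'
    (f := fun z ↦ ‖∑ i, z.1 i • C i z.2‖) (a := 0) (by fun_prop) fun z hz ↦ by
      simp only [Set.mem_prod, mem_sphere_zero_iff_norm] at hz
      exact norm_pos_iff.2 (hne (norm_ne_zero_iff.1 (hz.1.trans_ne one_ne_zero))
        (norm_ne_zero_iff.1 (hz.2.trans_ne one_ne_zero)))
  refine ⟨c, hc, fun x v ↦ ?_⟩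
  rcases eq_or_ne x 0 with rfl | hx
  · simp
  rcases eq_or_ne v 0 with rfl | hv
  · simp
  have hscale : ‖∑ i, (‖x‖⁻¹ • x) i • C i (‖v‖⁻¹ • v)‖ =
      ‖x‖⁻¹ * ‖v‖⁻¹ * ‖∑ i, x i • C i v‖ := by
    simp only [PiLp.smul_apply, map_smul, smul_assoc, ← Finset.smul_sum, norm_smul, norm_inv,
      norm_norm, smul_comm _ ‖v‖⁻¹]
    ring
  have hunit := hbound (‖x‖⁻¹ • x, ‖v‖⁻¹ • v) (by simp [norm_smul, hx, hv])
  rw [hscale, ← mul_inv, inv_mul_eq_div,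
    le_div_iff₀ (mul_pos (norm_pos_iff.2 hx) (norm_pos_iff.2 hv)), ← mul_assoc] at hunit
  exact hunit

end SymbolBound

section DiracComparison

open ContinuousLinearMap Filter
open scoped lp

variable {ι V : Type*} [Fintype ι] [NormedAddCommGroup V] [InnerProductSpace ℝ V]

theorem norm_resolvent_le_of_mem_supportedOn {m : ℕ} {u : Fock ι V}
    (hu : u ∈ supportedOn V {a | m ≤ level a}) : ‖resolvent ι V u‖ ≤ 1 / (m + 1) * ‖u‖ := by
  refine norm_le_of_norm_le_comp (g := id) (by positivity) (fun a ↦ ?_) (Set.injOn_id _)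
  rw [coe_decayOp, Pi.smul_apply', norm_smul, Real.norm_of_nonneg (decay_pos 1 a).le, decay_one, id]
  by_cases ha : m ≤ level a
  · rw [one_div]
    gcongr
  · rw [hu a ha, norm_zero, mul_zero, mul_zero]

theorem decay_quarter_mul_self (a : ι → ℕ) :
    decay (1 / 4) a * decay (1 / 4) a = decay (1 / 2) a := by
  rw [decay_mul_decay]
  norm_num

variable [DecidableEq ι]

theorem sqrt_mul_decay_half_sub_le (i : ι) (a : ι → ℕ) :
    √(a i + 1) * (decay (1 / 2) a - decay (1 / 2) (raise i a)) ≤ decay 1 (raise i a) := by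
  have hraise := decay_raise_le (s := 1 / 2) (by norm_num) i a
  have hdecay : √((level a : ℝ) + 1) * decay (1 / 2) a = 1 := by
    rw [decay_half]
    exact mul_inv_cancel₀ (by positivity)
  have hsq : decay 1 (raise i a) = decay (1 / 2) (raise i a) ^ 2 := by
    rw [sq, decay_mul_decay, add_halves]
  have hlevel : ((level a : ℝ) + 1) * decay 1 (raise i a) = 1 - decay 1 (raise i a) := by
    rw [decay_one, level_raise]
    push_cast
    field_simp
    ring
  have hpos := decay_pos (1 / 2) (raise i a)
  calc √(a i + 1) * (decay (1 / 2) a - decay (1 / 2) (raise i a))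
      ≤ √(level a + 1) * (decay (1 / 2) a - decay (1 / 2) (raise i a)) := by
        gcongr
        exact le_level i a
    _ = 1 - √(level a + 1) * decay (1 / 2) (raise i a) := by rw [mul_sub, hdecay]
    _ ≤ 1 - (√(level a + 1) * decay (1 / 2) (raise i a)) ^ 2 := by
        have hle : √(level a + 1) * decay (1 / 2) (raise i a) ≤ 1 := by
          exact (mul_le_mul_of_nonneg_left hraise (Real.sqrt_nonneg _)).trans_eq hdecay
        nlinarith [mul_nonneg (Real.sqrt_nonneg (level a + 1)) hpos.le]
    _ = decay 1 (raise i a) := by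
        rw [mul_pow, Real.sq_sqrt (by positivity), ← hsq, hlevel]
        ring

theorem sqrt_mul_decay_quarter_mul_sub_le (i : ι) (a : ι → ℕ) :
    √(a i + 1) * (decay (1 / 4) a * (decay (1 / 4) a - decay (1 / 4) (raise i a))) ≤
      decay 1 (raise i a) := by
  have hraise := decay_raise_le (s := 1 / 4) (by norm_num) i a
  have hpos := decay_pos (1 / 4) (raise i a)
  refine le_trans ?_ (sqrt_mul_decay_half_sub_le i a)
  gcongr
  rw [← decay_quarter_mul_self, ← decay_quarter_mul_self]
  nlinarith

theorem norm_symmAnn_sub_scaledAnn_apply_le (i : ι) (u : Fock ι V) :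
    ‖(symmAnn V i - scaledAnn V i) u‖ ≤ ‖resolvent ι V u‖ := by
  rw [← one_mul ‖resolvent ι V u‖]
  refine norm_le_of_norm_le_comp (g := raise i) zero_le_one (fun a ↦ ?_) (raise i).injective.injOn
  have hraise := decay_raise_le (s := 1 / 4) (by norm_num) i a
  have hpos := decay_pos (1 / 4) (raise i a)
  have hle : √(a i + 1) * (decay (1 / 4) (raise i a) *
      (decay (1 / 4) a - decay (1 / 4) (raise i a))) ≤ decay 1 (raise i a) := by
    refine le_trans ?_ (sqrt_mul_decay_quarter_mul_sub_le i a)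
    gcongr
  have hdiff : (symmAnn V i - scaledAnn V i) u a = (√(a i + 1) * (decay (1 / 4) (raise i a) *
      (decay (1 / 4) a - decay (1 / 4) (raise i a)))) • u (raise i a) := by
    rw [_root_.sub_apply, lp.coeFn_sub, Pi.sub_apply, symmAnn, coe_lowering, coe_scaledAnn,
      Pi.smul_apply', annihilation_apply, annihilation_apply, Pi.smul_apply', Pi.smul_apply',
      smul_smul, smul_smul, smul_smul, ← sub_smul,
      ← decay_quarter_mul_self]
    congr 1
    ring
  rw [hdiff, norm_smul, one_mul, coe_decayOp, Pi.smul_apply', norm_smul,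
    Real.norm_of_nonneg
      (mul_nonneg (Real.sqrt_nonneg _) (mul_nonneg hpos.le (sub_nonneg.2 hraise))),
    Real.norm_of_nonneg (decay_pos _ _).le]
  gcongr

variable [CompleteSpace V]

theorem norm_star_symmAnn_sub_scaledCre_apply_le (i : ι) (u : Fock ι V) :
    ‖(star (symmAnn V i) - scaledCre V i) u‖ ≤ ‖resolvent ι V u‖ := by
  have hdiff (a) : (star (symmAnn V i) - scaledCre V i) u a = (√(a i) * (decay (1 / 4) (lower i a) *
      (decay (1 / 4) a - decay (1 / 4) (lower i a)))) • u (lower i a) := by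
    rw [_root_.sub_apply, lp.coeFn_sub, Pi.sub_apply, symmAnn, star_eq_adjoint,
      coe_adjoint_lowering, coe_scaledCre, Pi.smul_apply', creation_apply, creation_apply,
      Pi.smul_apply', Pi.smul_apply', smul_smul, smul_smul, smul_smul, ← sub_smul,
      ← decay_quarter_mul_self]
    congr 1
    ring
  rw [← one_mul ‖resolvent ι V u‖]
  refine norm_le_of_norm_le_comp (g := lower i) zero_le_one (fun a ↦ ?_) ((injOn_lower i).mono ?_)
  · rw [hdiff, norm_smul, one_mul, coe_decayOp, Pi.smul_apply', norm_smul]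
    rcases eq_or_ne (a i) 0 with h0 | h0
    · simp only [h0, Nat.cast_zero, Real.sqrt_zero, zero_mul, norm_zero]
      positivity
    obtain ⟨b, rfl⟩ := (mem_range_raise).2 h0
    have hraise := decay_raise_le (s := 1 / 4) (by norm_num) i b
    have hpos := decay_pos (1 / 4) b
    rw [lower_raise, raise_apply_self, Real.norm_of_nonneg (decay_pos _ _).le, norm_mul, norm_mul,
      norm_sub_rev, Real.norm_of_nonneg (Real.sqrt_nonneg _), Real.norm_of_nonneg hpos.le,
      Real.norm_of_nonneg (sub_nonneg.2 hraise), Nat.cast_add_one]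
    gcongr
    exact (sqrt_mul_decay_quarter_mul_sub_le i b).trans (decay_raise_le zero_le_one i b)
  · intro a (ha : _ ≠ 0) h0
    refine ha ?_
    rw [hdiff, h0, Nat.cast_zero, Real.sqrt_zero, zero_mul, zero_smul]

/-- The bounded operator `∑ᵢ (Gᵢ ∂ᵢ + Cᵢ xᵢ) (N + 1)^(-1/2)` up to normalization, with `N` the
number operator. -/
noncomputable def scaledDirac (G C : ι → V →L[ℝ] V) : Fock ι V →L[ℝ] Fock ι V :=
  ∑ i, (liftHom _ V (G i) * scaledDerivative V i + liftHom _ V (C i) * scaledPosition V i)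

/-- The bounded skew-adjoint operator `(N + 1)^(-1/4) D (N + 1)^(-1/4)`, where `N` is the number
operator and `D = ∑ᵢ Bᵢ aᵢ - Bᵢ† aᵢ†`; for `Bᵢ = Gᵢ + Cᵢ` with `Gᵢ` self-adjoint and `Cᵢ`
skew-adjoint, `D` is the Dirac operator with symbol `(G, C)`. -/
noncomputable def diracOp (B : ι → V →L[ℝ] V) : Fock ι V →L[ℝ] Fock ι V :=
  ∑ i, (liftHom _ V (B i) * symmAnn V i - liftHom _ V (star (B i)) * star (symmAnn V i))

theorem diracOp_sub_scaledDirac {G C : ι → V →L[ℝ] V} (hG : ∀ i, star (G i) = G i)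
    (hC : ∀ i, star (C i) = -C i) :
    diracOp (G + C) - scaledDirac G C =
      ∑ i, (liftHom _ V (G i + C i) * (symmAnn V i - scaledAnn V i) -
        liftHom _ V (G i - C i) * (star (symmAnn V i) - scaledCre V i)) := by
  simp only [diracOp, scaledDirac, ← Finset.sum_sub_distrib, Pi.add_apply, star_add, hG, hC,
    map_add, map_sub, map_neg, scaledDerivative, scaledPosition]
  refine Finset.sum_congr rfl fun i _ ↦ ?_
  noncomm_ring

theorem exists_norm_diracOp_sub_scaledDirac_le {G C : ι → V →L[ℝ] V}
    (hG : ∀ i, star (G i) = G i) (hC : ∀ i, star (C i) = -C i) :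
    ∃ K, ∀ u, ‖diracOp (G + C) u - scaledDirac G C u‖ ≤ K * ‖resolvent ι V u‖ := by
  refine ⟨∑ i, (‖liftHom (ι → ℕ) V (G i + C i)‖ + ‖liftHom (ι → ℕ) V (G i - C i)‖), fun u ↦ ?_⟩
  rw [← _root_.sub_apply, diracOp_sub_scaledDirac hG hC, _root_.sum_apply, Finset.sum_mul]
  refine norm_sum_le_of_le _ fun i _ ↦ (norm_sub_le _ _).trans ?_
  rw [add_mul]
  exact add_le_add
    (le_opNorm_of_le (liftHom _ V (G i + C i)) (norm_symmAnn_sub_scaledAnn_apply_le i u))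
    (le_opNorm_of_le (liftHom _ V (G i - C i)) (norm_star_symmAnn_sub_scaledCre_apply_le i u))

variable {G C : ι → V →L[ℝ] V}

theorem IsDiracSymbol.norm_scaledDirac_sq (h : IsDiracSymbol G C) (u : Fock ι V) :
    ‖scaledDirac G C u‖ ^ 2 = ∑ i, ‖scaledDerivative V i u‖ ^ 2 +
      ‖∑ i, lift _ (C i) (scaledPosition V i u)‖ ^ 2 -
        2 * inner ℝ (liftHom _ V (∑ i, G i * C i) (resolvent ι V u)) u := by
  have hsq := (h.map (liftHom (ι → ℕ) V)).star_mul_self_sum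
    (fun i j ↦ commute_liftHom_scaledDerivative (G i) j)
    (fun i j ↦ commute_liftHom_scaledPosition (G i) j)
    (fun i j ↦ commute_liftHom_scaledDerivative (C i) j)
    (fun i j ↦ commute_liftHom_scaledPosition (C i) j)
    star_scaledDerivative_mul_scaledDerivative star_scaledDerivative_mul_scaledPosition_add
  have hself (S : Fock ι V →L[ℝ] Fock ι V) : inner ℝ ((star S * S) u) u = ‖S u‖ ^ 2 := by
    rw [mul_apply_eq_comp, star_eq_adjoint, adjoint_inner_left, real_inner_self_eq_norm_sq]
  simp only [← map_mul, ← map_sum, mul_neg, mul_smul_comm] at hsq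
  rw [← hself, scaledDirac, hsq, _root_.add_apply, _root_.add_apply, inner_add_left,
    inner_add_left, hself, _root_.sum_apply, sum_inner, _root_.neg_apply, inner_neg_left,
    ← sub_eq_add_neg, _root_.smul_apply, ← Nat.cast_smul_eq_nsmul ℝ, real_inner_smul_left]
  simp [_root_.sum_apply, liftHom_apply, star_eq_adjoint, adjoint_inner_left]

end DiracComparison

section DiracBound

open ContinuousLinearMap Filter
open scoped lp

variable {ι V : Type*} [Fintype ι] [DecidableEq ι] [NormedAddCommGroup V] [InnerProductSpace ℝ V]
  [FiniteDimensional ℝ V] {G C : ι → V →L[ℝ] V}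

theorem IsDiracSymbol.exists_sq_mul_norm_sq_le (h : IsDiracSymbol G C) :
    ∃ c > 0, ∃ K, ∀ u,
      c ^ 2 * ‖u‖ ^ 2 ≤ ‖scaledDirac G C u‖ ^ 2 + K * ‖resolvent ι V u‖ * ‖u‖ := by
  obtain ⟨c, hc, hbound⟩ := h.exists_pos_mul_norm_le
  obtain ⟨d, hd, hdc, hd1⟩ : ∃ d > 0, d ≤ c ∧ d ≤ 1 :=
    ⟨min c 1, lt_min hc one_pos, min_le_left c 1, min_le_right c 1⟩
  let S := liftHom (ι → ℕ) V (∑ i, G i * C i)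
  refine ⟨d, hd, 2 * (d ^ 2 + ‖S‖), fun u ↦ ?_⟩
  have hpotential : d ^ 2 * ∑ i, ‖scaledPosition V i u‖ ^ 2 ≤
      ‖∑ i, lift _ (C i) (scaledPosition V i u)‖ ^ 2 :=
    sq_mul_sum_norm_scaledPosition_sq_le hd.le (fun x v ↦ le_trans (by gcongr) (hbound x v)) u
  have hkinetic : d ^ 2 * ∑ i, ‖scaledDerivative V i u‖ ^ 2 ≤ ∑ i, ‖scaledDerivative V i u‖ ^ 2 :=
    mul_le_of_le_one_left (Finset.sum_nonneg fun _ _ ↦ sq_nonneg _) (pow_le_one₀ hd.le hd1)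
  have hcross : inner ℝ (S (resolvent ι V u)) u ≤ ‖S‖ * ‖resolvent ι V u‖ * ‖u‖ :=
    (real_inner_le_norm _ _).trans
      (mul_le_mul_of_nonneg_right (S.le_opNorm _) (norm_nonneg u))
  have hsum := mul_le_mul_of_nonneg_left (two_mul_sub_le_sum_norm_sq u) (sq_nonneg d)
  rw [h.norm_scaledDirac_sq]
  have hu := mul_nonneg (sq_nonneg d) (sq_nonneg ‖u‖)
  linarith

theorem IsDiracSymbol.exists_pos_mul_norm_le_norm_diracOp (h : IsDiracSymbol G C) :
    ∃ c > 0, ∃ m, ∀ u ∈ supportedOn V {a | m ≤ level a}, c * ‖u‖ ≤ ‖diracOp (G + C) u‖ := by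
  obtain ⟨c, hc, K, hbound⟩ := h.exists_sq_mul_norm_sq_le
  obtain ⟨K', hdiff⟩ := exists_norm_diracOp_sub_scaledDirac_le (G := G) (C := C)
    (fun i ↦ by rw [h.isClifford.star_eq, one_smul]) h.star_right
  have htendsto (r : ℝ) : Tendsto (fun m : ℕ ↦ |r| * (1 / ((m : ℝ) + 1))) atTop (nhds 0) := by
    simpa using tendsto_one_div_add_atTop_nhds_zero_nat.const_mul |r|
  obtain ⟨m, hm, hm'⟩ := (((htendsto K).eventually_lt_const (u := 3 / 4 * c ^ 2)
    (by positivity)).and ((htendsto K').eventually_lt_const (u := c / 4) (by positivity))).exists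
  refine ⟨c / 4, by positivity, m, fun u hu ↦ ?_⟩
  have hsmall (r : ℝ) : r * ‖resolvent ι V u‖ ≤ |r| * (1 / ((m : ℝ) + 1)) * ‖u‖ := by
    rw [mul_assoc]
    exact mul_le_mul (le_abs_self r) (norm_resolvent_le_of_mem_supportedOn hu) (norm_nonneg _)
      (abs_nonneg r)
  have hscaled : c / 2 * ‖u‖ ≤ ‖scaledDirac G C u‖ := by
    refine le_of_sq_le_sq ?_ (norm_nonneg _)
    have hK := mul_le_mul_of_nonneg_right (hsmall K) (norm_nonneg u)
    nlinarith [hbound u, mul_le_mul_of_nonneg_right hm.le (sq_nonneg ‖u‖)]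
  have hK' : ‖diracOp (G + C) u - scaledDirac G C u‖ ≤ c / 4 * ‖u‖ :=
    (hdiff u).trans ((hsmall K').trans (by gcongr))
  linarith [norm_le_norm_add_norm_sub (diracOp (G + C) u) (scaledDirac G C u)]

end DiracBound

section GradedIndex

open ContinuousLinearMap Module Topology

variable {X : Type*} [NormedAddCommGroup X] [InnerProductSpace ℝ X] {P Q Z : Submodule ℝ X}

/-- The index of the part `P → Q` of a skew-adjoint operator exchanging `P` and `Q`; the cokernel
of that part is the kernel of the part `Q → P`. -/
noncomputable def gradedIndex (T : X →L[ℝ] X) (P Q : Submodule ℝ X) : ℤ :=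
  finrank ℝ (T.ker ⊓ P : Submodule ℝ X) - finrank ℝ (T.ker ⊓ Q : Submodule ℝ X)

/-- The compression of an operator to subspaces of its domain and codomain. It depends continuously
on the operator, and agrees with the restriction if `T` maps `P` to `Q`. -/
noncomputable def compression (T : X →L[ℝ] X) (P Q : Submodule ℝ X) [Q.HasOrthogonalProjection] :
    P →L[ℝ] Q :=
  Q.orthogonalProjectionOnto ∘L T ∘L P.subtypeL

theorem coe_compression {T : X →L[ℝ] X} [Q.HasOrthogonalProjection] (hPQ : ∀ w ∈ P, T w ∈ Q)
    (w : P) : (compression T P Q w : X) = T w :=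
  congrArg Subtype.val (Q.orthogonalProjectionOnto_mem_subspace_eq_self ⟨T w, hPQ w w.2⟩)

theorem nonempty_ker_compression_equiv {T : X →L[ℝ] X} [Q.HasOrthogonalProjection]
    (hPQ : ∀ w ∈ P, T w ∈ Q) :
    Nonempty ((compression T P Q).ker ≃ₗ[ℝ] (T.ker ⊓ P : Submodule ℝ X)) := by
  have hker : (compression T P Q).ker = T.ker.comap P.subtype := by
    ext w
    rw [LinearMap.mem_ker, Submodule.mem_comap, LinearMap.mem_ker, ← ZeroMemClass.coe_eq_zero]
    exact Eq.congr_left (coe_compression hPQ w)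
  rw [hker, inf_comm, ← Submodule.map_comap_subtype]
  exact ⟨Submodule.equivSubtypeMap P _⟩

theorem finiteDimensional_quotient_comap_subtype [FiniteDimensional ℝ (X ⧸ Z)] :
    FiniteDimensional ℝ (P ⧸ Z.comap P.subtype) := by
  refine FiniteDimensional.of_injective ((Z.comap P.subtype).mapQ Z P.subtype le_rfl) ?_
  rw [← LinearMap.ker_eq_bot, Submodule.ker_mapQ, Submodule.mkQ_map_self]

theorem finiteDimensional_ker_compression {T : X →L[ℝ] X} [Q.HasOrthogonalProjection]
    [FiniteDimensional ℝ (X ⧸ Z)] {c : ℝ} (hc : 0 < c) (hbound : ∀ w ∈ Z, c * ‖w‖ ≤ ‖T w‖)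
    (hPQ : ∀ w ∈ P, T w ∈ Q) : FiniteDimensional ℝ (compression T P Q).ker := by
  have := finiteDimensional_ker_of_bound T hc hbound
  obtain ⟨e⟩ := nonempty_ker_compression_equiv hPQ
  exact e.symm.finiteDimensional

variable [CompleteSpace X]

theorem adjoint_compression {T : X →L[ℝ] X} (hT : star T = -T) [CompleteSpace P]
    [CompleteSpace Q] : adjoint (compression T P Q) = -compression T Q P := by
  rw [compression, adjoint_comp, adjoint_comp, Submodule.adjoint_subtypeL,
    Submodule.adjoint_orthogonalProjectionOnto, ← star_eq_adjoint T, hT]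
  ext w
  simp [compression]

theorem isFredholm_compression {T : X →L[ℝ] X} (hT : star T = -T) [CompleteSpace P]
    [CompleteSpace Q] (hZ : IsClosed (Z : Set X)) [FiniteDimensional ℝ (X ⧸ Z)] {c : ℝ}
    (hc : 0 < c) (hbound : ∀ w ∈ Z, c * ‖w‖ ≤ ‖T w‖) (hPQ : ∀ w ∈ P, T w ∈ Q)
    (hQP : ∀ w ∈ Q, T w ∈ P) : (compression T P Q).IsFredholm := by
  have hker := finiteDimensional_ker_compression hc hbound hQP
  have : FiniteDimensional ℝ (adjoint (compression T P Q)).ker := by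
    rwa [adjoint_compression hT, toLinearMap_neg, LinearMap.ker_neg]
  have := finiteDimensional_quotient_comap_subtype (P := P) (Z := Z)
  have hclosed : IsClosed (Z.comap P.subtype : Set P) := hZ.preimage continuous_subtype_val
  refine isFredholm_of_bound _ hclosed hc fun w hw ↦ ?_
  calc c * ‖w‖ ≤ ‖T w‖ := hbound w hw
    _ = ‖compression T P Q w‖ := congrArg norm (coe_compression hPQ w).symm

theorem linearIndex_compression {T : X →L[ℝ] X} (hT : star T = -T) [CompleteSpace P]
    [CompleteSpace Q] (hPQ : ∀ w ∈ P, T w ∈ Q) (hQP : ∀ w ∈ Q, T w ∈ P)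
    (hF : (compression T P Q).IsFredholm) :
    linearIndex (compression T P Q : P →ₗ[ℝ] Q) = gradedIndex T P Q := by
  obtain ⟨e⟩ := nonempty_ker_compression_equiv hPQ
  obtain ⟨e'⟩ := nonempty_ker_compression_equiv hQP
  rw [linearIndex_eq_finrank_ker_sub_finrank_ker_adjoint hF, adjoint_compression hT,
    toLinearMap_neg, LinearMap.ker_neg, e.finrank_eq, e'.finrank_eq, gradedIndex]

theorem gradedIndex_eq_of_path {T : ℝ → X →L[ℝ] X} (hcont : Continuous T)
    (hT : ∀ t, star (T t) = -T t) (hP : IsClosed (P : Set X)) (hQ : IsClosed (Q : Set X))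
    (hPQ : ∀ t, ∀ w ∈ P, T t w ∈ Q) (hQP : ∀ t, ∀ w ∈ Q, T t w ∈ P)
    (hbound : ∀ t, ∃ c > 0, ∃ Z : Submodule ℝ X, IsClosed (Z : Set X) ∧
      FiniteDimensional ℝ (X ⧸ Z) ∧ ∀ w ∈ Z, c * ‖w‖ ≤ ‖T t w‖) :
    gradedIndex (T 0) P Q = gradedIndex (T 1) P Q := by
  have : CompleteSpace P := hP.completeSpace_coe
  have : CompleteSpace Q := hQ.completeSpace_coe
  have hF (t : ℝ) : (compression (T t) P Q).IsFredholm := by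
    obtain ⟨c, hc, Z, hZ, _, hb⟩ := hbound t
    exact isFredholm_compression (hT t) hZ hc hb (hPQ t) (hQP t)
  have hcomp : Continuous fun t ↦ compression (T t) P Q := by
    unfold compression
    fun_prop
  have hconst : IsLocallyConstant fun t ↦ gradedIndex (T t) P Q := by
    simp_rw [← fun t ↦ linearIndex_compression (hT t) (hPQ t) (hQP t) (hF t)]
    exact (IsLocallyConstant.iff_eventually_eq _).2 fun t ↦
      hcomp.continuousAt.eventually (eventually_linearIndex_eq (hF t))
  exact hconst.apply_eq_of_preconnectedSpace 0 1

end GradedIndex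

section DiracIndex

open ContinuousLinearMap Module
open scoped lp

variable {ι V : Type*} [Fintype ι] [NormedAddCommGroup V] [InnerProductSpace ℝ V]

theorem finite_setOf_level_lt (m : ℕ) : {a : ι → ℕ | level a < m}.Finite :=
  (finite_setOf_forall_lt m).subset fun a ha i ↦ (le_level i a).trans_lt ha

/-- The families supported on the multi-indices whose level has parity `p`. -/
abbrev paritySubspace (ι V : Type*) [Fintype ι] [NormedAddCommGroup V] [InnerProductSpace ℝ V]
    (p : ZMod 2) : Submodule ℝ (Fock ι V) :=
  supportedOn V {a | (level a : ZMod 2) = p}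

variable [DecidableEq ι] [CompleteSpace V] (B : ι → V →L[ℝ] V)

/-- The pointwise action of the operators on `V` on arbitrary families, as a homomorphism of
algebras. -/
def pointwiseHom (α V : Type*) [NormedAddCommGroup V] [InnerProductSpace ℝ V] :
    (V →L[ℝ] V) →ₐ[ℝ] Module.End ℝ (α → V) where
  toFun M := (M : V →ₗ[ℝ] V).compLeft α
  map_one' := rfl
  map_mul' _ _ := rfl
  map_zero' := rfl
  map_add' _ _ := rfl
  commutes' _ := rfl

/-- The formal Dirac operator `∑ᵢ Bᵢ aᵢ - Bᵢ† aᵢ†` on arbitrary families. -/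
noncomputable def formalDirac : Module.End ℝ ((ι → ℕ) → V) :=
  ∑ i, (pointwiseHom _ V (B i) * annihilation i - pointwiseHom _ V (star (B i)) * creation i)

theorem formalDirac_apply (u : (ι → ℕ) → V) (a : ι → ℕ) :
    formalDirac B u a = ∑ i, (B i (annihilation i u a) - star (B i) (creation i u a)) := by
  simp only [formalDirac, LinearMap.sum_apply, Finset.sum_apply]
  rfl

theorem coe_diracOp (u : Fock ι V) :
    ⇑(diracOp B u) = decay (ι := ι) (1 / 4) • formalDirac B (decay (ι := ι) (1 / 4) • ⇑u) := by
  ext a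
  simp only [diracOp, _root_.sum_apply, lp.coeFn_sum, Finset.sum_apply, Pi.smul_apply',
    formalDirac_apply, Finset.smul_sum]
  refine Finset.sum_congr rfl fun i _ ↦ ?_
  rw [_root_.sub_apply, lp.coeFn_sub, Pi.sub_apply, mul_apply_eq_comp, mul_apply_eq_comp,
    liftHom_apply, liftHom_apply, lift_apply, lift_apply, star_eq_adjoint (symmAnn V i), symmAnn,
    coe_lowering, coe_adjoint_lowering, Pi.smul_apply', Pi.smul_apply', smul_sub,
    ContinuousLinearMap.map_smul, ContinuousLinearMap.map_smul]

theorem star_diracOp : star (diracOp B) = -diracOp B := by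
  simp only [diracOp, star_sum, star_sub, star_mul, ← map_star, star_star, ← Finset.sum_neg_distrib,
    neg_sub]
  refine Finset.sum_congr rfl fun i _ ↦ ?_
  rw [star_eq_adjoint (symmAnn V i), symmAnn, (commute_liftHom_lowering _ _).eq,
    (commute_liftHom_adjoint_lowering _ _).eq]

theorem diracOp_add (B' : ι → V →L[ℝ] V) : diracOp (B + B') = diracOp B + diracOp B' := by
  simp only [diracOp, Pi.add_apply, star_add, map_add, add_mul, ← Finset.sum_add_distrib]
  exact Finset.sum_congr rfl fun i _ ↦ add_sub_add_comm _ _ _ _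

theorem diracOp_smul (r : ℝ) : diracOp (r • B) = r • diracOp B := by
  simp only [diracOp, Pi.smul_apply, star_smul, star_trivial, map_smul, smul_mul_assoc,
    ← smul_sub, ← Finset.smul_sum]

theorem diracOp_mem_paritySubspace {p : ZMod 2} {u : Fock ι V} (hu : u ∈ paritySubspace ι V p) :
    diracOp B u ∈ paritySubspace ι V (p + 1) := by
  intro a (ha : _ ≠ _)
  have hraise (i : ι) : u (raise i a) = 0 := by
    refine hu _ fun h : (level (raise i a) : ZMod 2) = p ↦ ha ?_
    rw [← h, level_raise, Nat.cast_add_one, add_assoc, CharTwo.add_self_eq_zero, add_zero]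
  have hlower (i : ι) (hi : a i ≠ 0) : u (lower i a) = 0 := by
    refine hu _ fun h : (level (lower i a) : ZMod 2) = p ↦ ha ?_
    rw [← h, ← Nat.cast_add_one, level_lower_add_one hi]
  rw [coe_diracOp, Pi.smul_apply', formalDirac_apply]
  refine smul_eq_zero_of_right _ (Finset.sum_eq_zero fun i _ ↦ ?_)
  have hann : annihilation i (decay (ι := ι) (1 / 4) • ⇑u) a = 0 := by
    rw [annihilation_apply, Pi.smul_apply', hraise, smul_zero, smul_zero]
  have hcre : creation i (decay (ι := ι) (1 / 4) • ⇑u) a = 0 := by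
    rw [creation_apply, Pi.smul_apply']
    by_cases hi : a i = 0
    · rw [hi, Nat.cast_zero, Real.sqrt_zero, zero_smul]
    · rw [hlower i hi, smul_zero, smul_zero]
  rw [hann, hcre, map_zero, map_zero, sub_zero]

/-- The index of the part of `diracOp B` from even to odd families. -/
noncomputable def diracIndex : ℤ :=
  gradedIndex (diracOp B) (paritySubspace ι V 0) (paritySubspace ι V 1)

end DiracIndex

section Homotopy

open ContinuousLinearMap Module
open scoped lp

variable {ι V : Type*} [Fintype ι] [DecidableEq ι] [NormedAddCommGroup V] [InnerProductSpace ℝ V]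
  [FiniteDimensional ℝ V] {G C : ι → V →L[ℝ] V}

theorem IsDiracSymbol.exists_finiteCodim_bound (h : IsDiracSymbol G C) :
    ∃ c > 0, ∃ Z : Submodule ℝ (Fock ι V), IsClosed (Z : Set (Fock ι V)) ∧
      FiniteDimensional ℝ (Fock ι V ⧸ Z) ∧ ∀ w ∈ Z, c * ‖w‖ ≤ ‖diracOp (G + C) w‖ := by
  obtain ⟨c, hc, m, hbound⟩ := h.exists_pos_mul_norm_le_norm_diracOp
  have hfinite : {a : ι → ℕ | m ≤ level a}ᶜ.Finite :=
    (finite_setOf_level_lt m).subset fun a (ha : ¬m ≤ level a) ↦ not_le.1 ha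
  exact ⟨c, hc, _, isClosed_supportedOn _, finiteDimensional_quotient_supportedOn hfinite, hbound⟩

theorem IsDiracSymbol.finiteDimensional_ker_diracOp (h : IsDiracSymbol G C) :
    FiniteDimensional ℝ (diracOp (G + C)).ker := by
  obtain ⟨c, hc, Z, -, _, hbound⟩ := h.exists_finiteCodim_bound
  exact finiteDimensional_ker_of_bound _ hc hbound

theorem diracIndex_eq_of_segment {C₀ C₁ : ι → V →L[ℝ] V}
    (h : ∀ t : ℝ, IsDiracSymbol G ((1 - t) • C₀ + t • C₁)) :
    diracIndex (G + C₀) = diracIndex (G + C₁) := by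
  have hpath (t : ℝ) : diracOp (G + ((1 - t) • C₀ + t • C₁)) =
      (1 - t) • diracOp (G + C₀) + t • diracOp (G + C₁) := by
    rw [← diracOp_smul, ← diracOp_smul, ← diracOp_add]
    congr 1
    module
  have key := gradedIndex_eq_of_path (T := fun t ↦ diracOp (G + ((1 - t) • C₀ + t • C₁)))
    (by simp_rw [hpath]; fun_prop) (fun t ↦ star_diracOp _) (isClosed_supportedOn _)
    (isClosed_supportedOn _) (fun t w hw ↦ diracOp_mem_paritySubspace _ (p := 0) hw)
    (fun t w hw ↦ diracOp_mem_paritySubspace _ (p := 1) hw)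
    fun t ↦ (h t).exists_finiteCodim_bound
  simpa [diracIndex] using key

end Homotopy

section CanonicalRelations

variable {ι A : Type*} [DecidableEq ι] [Ring A] [StarRing A]

/-- The canonical anticommutation relations, normalized so that they hold for the sums `Gᵢ + Cᵢ` of
Clifford generators `Gᵢ` of square `1` and `Cᵢ` of square `-1`. -/
structure IsCAR (b : ι → A) : Prop where
  mul_add_mul (i j : ι) : b i * b j + b j * b i = 0
  mul_star_add_star_mul (i j : ι) : b i * star (b j) + star (b j) * b i = if i = j then 4 else 0

theorem IsCAR.star_mul_star_add {b : ι → A} (hb : IsCAR b) (i j : ι) :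
    star (b i) * star (b j) + star (b j) * star (b i) = 0 := by
  rw [← star_mul, ← star_mul, ← star_add, hb.mul_add_mul, star_zero]

variable [Algebra ℝ A]

theorem IsClifford.mul_add_mul {ε : ℝ} {e : ι → A} (he : IsClifford ε e) (i j : ι) :
    e i * e j + e j * e i = if i = j then (2 * ε) • 1 else 0 := by
  split_ifs with h
  · subst h
    rw [he.mul_self, ← two_smul ℝ, smul_smul]
  · rw [he.mul_eq_neg_mul h, neg_add_cancel]

theorem IsDiracSymbol.isCAR [Fintype ι] {G C : ι → A} (h : IsDiracSymbol G C)
    (hC : IsClifford (-1) C) : IsCAR (G + C) where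
  mul_add_mul i j := by
    have hG := h.isClifford.mul_add_mul i j
    have hC' := hC.mul_add_mul i j
    rw [Pi.add_apply, Pi.add_apply]
    calc (G i + C i) * (G j + C j) + (G j + C j) * (G i + C i)
        = (G i * G j + G j * G i) + (C i * C j + C j * C i) + (G i * C j + C j * G i) +
          (G j * C i + C i * G j) := by noncomm_ring
      _ = 0 := by
        rw [hG, hC', h.mul_eq_neg_mul i j, h.mul_eq_neg_mul j i]
        split_ifs <;> simp
  mul_star_add_star_mul i j := by
    have hG := h.isClifford.mul_add_mul i j
    have hC' := hC.mul_add_mul i j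
    rw [Pi.add_apply, Pi.add_apply, star_add, h.isClifford.star_eq, h.star_right, one_smul]
    calc (G i + C i) * (G j + -C j) + (G j + -C j) * (G i + C i)
        = (G i * G j + G j * G i) - (C i * C j + C j * C i) - (G i * C j + C j * G i) +
          (G j * C i + C i * G j) := by noncomm_ring
      _ = if i = j then 4 else 0 := by
        rw [hG, hC', h.mul_eq_neg_mul i j, h.mul_eq_neg_mul j i]
        split_ifs
        · simp only [Algebra.smul_def, neg_add_cancel, mul_one, sub_zero, add_zero, ← map_sub]
          norm_num
          exact map_ofNat _ 4
        · simp

end CanonicalRelations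

section SquareOfSum

variable {ι R : Type*} [Fintype ι] [Ring R]

theorem sum_mul_mul_self_eq_zero [IsAddTorsionFree R] {b x : ι → R}
    (hbx : ∀ i j, Commute (b i) (x j))
    (hb : ∀ i j, b i * b j + b j * b i = 0) (hx : ∀ i j, Commute (x i) (x j)) :
    (∑ i, b i * x i) * ∑ i, b i * x i = 0 := by
  have hswap (i j : ι) : b i * x i * (b j * x j) = -(b j * x j * (b i * x i)) := by
    rw [(hbx j i).symm.mul_mul_mul_comm, (hbx i j).symm.mul_mul_mul_comm, (hx i j).eq,
      eq_neg_of_add_eq_zero_left (hb i j), neg_mul]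
  refine self_eq_neg.1 ?_
  rw [Finset.sum_mul_sum]
  conv_lhs => rw [Finset.sum_comm]
  simp_rw [← Finset.sum_neg_distrib, ← hswap]

variable [DecidableEq ι]

theorem sum_mul_mul_sum_mul_add {b c x y : ι → R} (hby : ∀ i j, Commute (b i) (y j))
    (hcx : ∀ i j, Commute (c i) (x j)) (hbc : ∀ i j, b i * c j + c j * b i = if i = j then 4 else 0)
    (hxy : ∀ i j, x i * y j = y j * x i + if i = j then 1 else 0) :
    (∑ i, b i * x i) * (∑ i, c i * y i) + (∑ i, c i * y i) * (∑ i, b i * x i) =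
      4 * ∑ i, y i * x i + ∑ i, b i * c i := by
  have hterm (i j : ι) : b i * x i * (c j * y j) + c j * y j * (b i * x i) =
      if i = j then 4 * (y i * x i) + b i * c i else 0 := by
    rw [(hcx j i).symm.mul_mul_mul_comm, (hby i j).symm.mul_mul_mul_comm, hxy, mul_add,
      add_right_comm, ← add_mul, hbc]
    split_ifs with h
    · rw [h, mul_one]
    · rw [zero_mul, mul_zero, add_zero]
  rw [Finset.sum_mul_sum, Finset.sum_mul_sum,
    Finset.sum_comm (f := fun i j ↦ c i * y i * (b j * x j))]
  simp [← Finset.sum_add_distrib, hterm, Finset.mul_sum]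

end SquareOfSum

section Vacuum

open ContinuousLinearMap Module

theorem two_mul_finrank_inf_ker {K V : Type*} [Field K] [AddCommGroup V] [Module K V]
    [FiniteDimensional K V] {W : Submodule K V} {f g : Module.End K V} {r : K} (hr : r ≠ 0)
    (hf : ∀ w ∈ W, f w ∈ W) (hg : ∀ w ∈ W, g w ∈ W) (hff : f * f = 0)
    (hgf : g * f + f * g = r • 1) :
    2 * finrank K (W ⊓ LinearMap.ker f : Submodule K V) = finrank K W := by
  have hexact : LinearMap.range (f.restrict hf) = LinearMap.ker (f.restrict hf) := by
    ext ⟨w, hw⟩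
    simp only [LinearMap.mem_range, LinearMap.mem_ker, Subtype.exists, Subtype.ext_iff,
      LinearMap.restrict_apply, exists_prop, ZeroMemClass.coe_zero]
    constructor
    · rintro ⟨v, -, rfl⟩
      exact LinearMap.congr_fun hff v
    · intro h
      have := LinearMap.congr_fun hgf w
      refine ⟨r⁻¹ • g w, W.smul_mem _ (hg w hw), ?_⟩
      have hfg : f (g w) = r • w := by simpa [h] using this
      rw [map_smul, hfg, inv_smul_smul₀ hr]
  have hdim := LinearMap.finrank_range_add_finrank_ker (f.restrict hf)
  rw [hexact, ← two_mul, LinearMap.ker_restrict] at hdim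
  rw [← hdim, ← Submodule.map_comap_subtype]
  exact congrArg _ (Submodule.equivSubtypeMap W _).finrank_eq.symm

variable {ι V : Type*} [NormedAddCommGroup V] [InnerProductSpace ℝ V]

/-- The vectors annihilated by the operators `Bᵢ†` with `i ∈ s`. -/
noncomputable def vacuum [CompleteSpace V] (B : ι → V →L[ℝ] V) (s : Finset ι) : Submodule ℝ V :=
  ⨅ i ∈ s, (star (B i) : V →L[ℝ] V).ker

variable [DecidableEq ι] [FiniteDimensional ℝ V] {B : ι → V →L[ℝ] V}

theorem IsCAR.two_pow_card_mul_finrank_vacuum (hB : IsCAR B) (s : Finset ι) :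
    2 ^ s.card * finrank ℝ (vacuum B s) = finrank ℝ V := by
  induction s using Finset.induction_on with
  | empty =>
    have htop : vacuum B ∅ = ⊤ := by simp [vacuum]
    rw [htop, finrank_top, Finset.card_empty, pow_zero, one_mul]
  | insert j s hj ih =>
    have hinv {M : V →L[ℝ] V} (hM : ∀ i ∈ s, star (B i) * M + M * star (B i) = 0) (w : V)
        (hw : w ∈ vacuum B s) : M w ∈ vacuum B s := by
      simp only [vacuum, Submodule.mem_iInf, LinearMap.mem_ker, coe_coe] at hw ⊢
      intro i hi
      have hanti := DFunLike.congr_fun (hM i hi) w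
      simpa [hw i hi] using hanti
    have hne {i : ι} (hi : i ∈ s) : j ≠ i := fun h ↦ hj (h ▸ hi)
    have hhalf : 2 * finrank ℝ (vacuum B (insert j s)) = finrank ℝ (vacuum B s) := by
      rw [vacuum, Finset.iInf_insert, inf_comm]
      refine two_mul_finrank_inf_ker (g := B j) (r := (4 : ℝ)) (by norm_num)
        (hinv fun i _ ↦ hB.star_mul_star_add i j) (hinv fun i hi ↦ ?_) ?_ ?_
      · rw [add_comm, hB.mul_star_add_star_mul, if_neg (hne hi)]
      · ext w
        have hsq := DFunLike.congr_fun (hB.star_mul_star_add j j) w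
        rw [← two_smul ℝ] at hsq
        exact (smul_eq_zero_iff_right two_ne_zero).1 hsq
      · ext w
        have hanti := DFunLike.congr_fun (hB.mul_star_add_star_mul j j) w
        rw [if_pos rfl] at hanti
        exact hanti.trans (ofNat_smul_eq_nsmul ℝ 4 w).symm
    rw [Finset.card_insert_of_notMem hj, pow_succ, mul_assoc, hhalf, ih]

end Vacuum

section FormalSquare

variable {ι V : Type*} [DecidableEq ι] [NormedAddCommGroup V] [InnerProductSpace ℝ V]

theorem commute_pointwiseHom_annihilation (M : V →L[ℝ] V) (i : ι) :
    Commute (pointwiseHom (ι → ℕ) V M) (annihilation i) :=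
  LinearMap.ext fun _ ↦ funext fun _ ↦ M.map_smul _ _

theorem commute_pointwiseHom_creation (M : V →L[ℝ] V) (i : ι) :
    Commute (pointwiseHom (ι → ℕ) V M) (creation i) :=
  LinearMap.ext fun _ ↦ funext fun _ ↦ M.map_smul _ _

variable [Fintype ι] [CompleteSpace V] {B : ι → V →L[ℝ] V}

theorem IsCAR.formalDirac_formalDirac_apply (hB : IsCAR B) (u : (ι → ℕ) → V) (a : ι → ℕ) :
    formalDirac B (formalDirac B u) a =
      -((4 * level a : ℝ) • u a + ∑ i, B i (star (B i) (u a))) := by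
  have : IsAddTorsionFree (Module.End ℝ ((ι → ℕ) → V)) := .of_isTorsionFree ℝ _
  let b (i : ι) := pointwiseHom (ι → ℕ) V (B i)
  let c (i : ι) := pointwiseHom (ι → ℕ) V (star (B i))
  have hann : (∑ i, b i * annihilation i) * ∑ i, b i * annihilation i = 0 :=
    sum_mul_mul_self_eq_zero (fun i j ↦ commute_pointwiseHom_annihilation _ j)
      (fun i j ↦ by rw [← map_mul, ← map_mul, ← map_add, hB.mul_add_mul, map_zero])
      fun i j ↦ LinearMap.ext fun u ↦ annihilation_comm i j u
  have hcre : (∑ i, c i * creation i) * ∑ i, c i * creation i = 0 :=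
    sum_mul_mul_self_eq_zero (fun i j ↦ commute_pointwiseHom_creation _ j)
      (fun i j ↦ by rw [← map_mul, ← map_mul, ← map_add, hB.star_mul_star_add, map_zero])
      fun i j ↦ LinearMap.ext fun u ↦ creation_comm i j u
  have hmixed := sum_mul_mul_sum_mul_add (b := b) (c := c) (x := annihilation) (y := creation)
    (fun i j ↦ commute_pointwiseHom_creation _ j) (fun i j ↦ commute_pointwiseHom_annihilation _ j)
    (fun i j ↦ by
      rw [← map_mul, ← map_mul, ← map_add, hB.mul_star_add_star_mul]
      split_ifs <;> simp only [map_ofNat, map_zero])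
    (fun i j ↦ LinearMap.ext fun u ↦ by
      rw [Module.End.mul_apply, annihilation_creation]
      split_ifs <;> simp)
  have hsq : formalDirac B * formalDirac B =
      -(4 * ∑ i, creation i * annihilation i + ∑ i, b i * c i) := by
    rw [formalDirac, Finset.sum_sub_distrib, sub_mul, mul_sub, mul_sub, hann, hcre, ← hmixed]
    abel
  have happly := congrFun (LinearMap.congr_fun hsq u) a
  rw [Module.End.mul_apply] at happly
  rw [happly, mul_smul, ← sum_creation_annihilation_apply u a]
  simp only [LinearMap.neg_apply, LinearMap.add_apply, LinearMap.sum_apply, Module.End.mul_apply,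
    Module.End.ofNat_apply, Pi.neg_apply, Pi.add_apply, Pi.smul_apply, Finset.sum_apply,
    ofNat_smul_eq_nsmul]
  rfl

end FormalSquare

section Oscillator

open ContinuousLinearMap Module
open scoped lp

variable {ι V : Type*} [Fintype ι] [DecidableEq ι] [NormedAddCommGroup V] [InnerProductSpace ℝ V]
  [FiniteDimensional ℝ V] {B : ι → V →L[ℝ] V}

theorem IsCAR.four_mul_level_mul_add_eq_zero (hB : IsCAR B) {u : (ι → ℕ) → V}
    (hu : formalDirac B u = 0) (a : ι → ℕ) :
    4 * level a * ‖u a‖ ^ 2 + ∑ i, ‖star (B i) (u a)‖ ^ 2 = 0 := by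
  have hsq := hB.formalDirac_formalDirac_apply u a
  rw [hu, map_zero, Pi.zero_apply, eq_comm, neg_eq_zero] at hsq
  have hinner := congrArg (inner ℝ (u a)) hsq
  rw [inner_add_right, inner_sum, inner_smul_right, real_inner_self_eq_norm_sq,
    inner_zero_right] at hinner
  rw [← hinner]
  congr 1
  refine Finset.sum_congr rfl fun i _ ↦ ?_
  rw [star_eq_adjoint, ← adjoint_inner_left, real_inner_self_eq_norm_sq]

theorem IsCAR.eq_zero_of_formalDirac_eq_zero (hB : IsCAR B) {u : (ι → ℕ) → V}
    (hu : formalDirac B u = 0) {a : ι → ℕ} (ha : a ≠ 0) : u a = 0 := by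
  have hlevel : level a ≠ 0 := fun h ↦ ha (level_eq_zero_iff.1 h)
  have hzero := ((add_eq_zero_iff_of_nonneg (by positivity) (by positivity)).1
    (hB.four_mul_level_mul_add_eq_zero hu a)).1
  simpa [hlevel] using hzero

theorem IsCAR.mem_vacuum_of_formalDirac_eq_zero (hB : IsCAR B) {u : (ι → ℕ) → V}
    (hu : formalDirac B u = 0) (a : ι → ℕ) : u a ∈ vacuum B Finset.univ := by
  have hzero := ((add_eq_zero_iff_of_nonneg (by positivity) (by positivity)).1
    (hB.four_mul_level_mul_add_eq_zero hu a)).2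
  rw [Finset.sum_eq_zero_iff_of_nonneg fun _ _ ↦ by positivity] at hzero
  simpa [vacuum] using hzero

theorem formalDirac_eq_zero_of_mem_vacuum {u : (ι → ℕ) → V} (hu : ∀ a ≠ 0, u a = 0)
    (hu₀ : u 0 ∈ vacuum B Finset.univ) : formalDirac B u = 0 := by
  simp only [vacuum, Submodule.mem_iInf, LinearMap.mem_ker, coe_coe] at hu₀
  have hstar (i : ι) (a : ι → ℕ) : star (B i) (u a) = 0 := by
    rcases eq_or_ne a 0 with rfl | ha
    · exact hu₀ i (Finset.mem_univ i)
    · rw [hu a ha, map_zero]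
  have hraise (i : ι) (a : ι → ℕ) : raise i a ≠ 0 := by
    rw [ne_eq, ← level_eq_zero_iff, level_raise]
    exact Nat.succ_ne_zero _
  ext a
  rw [formalDirac_apply]
  refine Finset.sum_eq_zero fun i _ ↦ ?_
  rw [annihilation_apply, creation_apply, hu _ (hraise i a), (star (B i)).map_smul, hstar]
  simp

theorem IsCAR.ker_diracOp (hB : IsCAR B) :
    (diracOp B).ker = (vacuum B Finset.univ).map (lp.lsingle (𝕜 := ℝ) 2 (0 : ι → ℕ)) := by
  have hpos (a : ι → ℕ) : decay (ι := ι) (1 / 4) a ≠ 0 := (decay_pos _ a).ne'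
  have hker (u : Fock ι V) :
      u ∈ (diracOp B).ker ↔ formalDirac B (decay (ι := ι) (1 / 4) • ⇑u) = 0 := by
    rw [LinearMap.mem_ker, coe_coe, lp.ext_iff, coe_diracOp, lp.coeFn_zero, funext_iff, funext_iff]
    exact forall_congr' fun a ↦ smul_eq_zero_iff_right (hpos a)
  ext u
  rw [hker, Submodule.mem_map]
  constructor
  · intro hu
    have hzero {a : ι → ℕ} (ha : a ≠ 0) : u a = 0 :=
      (smul_eq_zero_iff_right (hpos a)).1 (hB.eq_zero_of_formalDirac_eq_zero hu ha)
    refine ⟨u 0, ?_, lp.ext (funext fun a ↦ ?_)⟩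
    · exact ((vacuum B Finset.univ).smul_mem_iff (hpos 0)).1
        (hB.mem_vacuum_of_formalDirac_eq_zero hu 0)
    · rcases eq_or_ne a 0 with rfl | ha
      · simp
      · simp [hzero ha, ha]
  · rintro ⟨v, hv, rfl⟩
    refine formalDirac_eq_zero_of_mem_vacuum (fun a ha ↦ ?_) ?_
    · simp [ha]
    · simpa using (vacuum B Finset.univ).smul_mem _ hv

theorem IsCAR.two_pow_card_mul_diracIndex (hB : IsCAR B) :
    2 ^ Fintype.card ι * diracIndex B = finrank ℝ V := by
  have heven : (diracOp B).ker ≤ paritySubspace ι V 0 := by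
    rw [hB.ker_diracOp, Submodule.map_le_iff_le_comap]
    intro v _ a ha
    have ha₀ : a ≠ 0 := by
      rintro rfl
      exact ha (congrArg Nat.cast (level_eq_zero_iff.2 rfl))
    exact lp.single_apply_ne (E := fun _ ↦ V) 2 0 v ha₀
  have hodd : (diracOp B).ker ⊓ paritySubspace ι V 1 = ⊥ := by
    refine (Submodule.eq_bot_iff _).2 fun u hu ↦ lp.ext (funext fun a ↦ ?_)
    by_cases ha : (level a : ZMod 2) = 0
    · exact hu.2 a fun h ↦ zero_ne_one (ha.symm.trans h)
    · exact heven hu.1 a ha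
  have hfinrank : finrank ℝ (diracOp B).ker = finrank ℝ (vacuum B Finset.univ) := by
    have hinj : Function.Injective (lp.lsingle (𝕜 := ℝ) (E := fun _ ↦ V) 2 (0 : ι → ℕ)) :=
      Function.LeftInverse.injective (g := fun u ↦ u 0) fun v ↦
        lp.single_apply_self (E := fun _ ↦ V) 2 0 v
    rw [hB.ker_diracOp]
    exact (Submodule.equivMapOfInjective _ hinj _).finrank_eq.symm
  rw [diracIndex, gradedIndex, hodd, inf_eq_left.2 heven, finrank_bot, hfinrank,
    ← hB.two_pow_card_mul_finrank_vacuum Finset.univ]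
  simp

end Oscillator

section DiracKernel

open ContinuousLinearMap Module
open scoped lp

variable {ι V W υ : Type*} [Fintype ι] [DecidableEq ι] [NormedAddCommGroup V]
  [InnerProductSpace ℝ V] [CompleteSpace V] [NormedAddCommGroup W] [InnerProductSpace ℝ W]
  [CompleteSpace W] {B : ι → V →L[ℝ] V} {B' : ι → W →L[ℝ] W}

/-- The part of the kernel of `diracOp B` in parity `p`. -/
noncomputable def diracKer (B : ι → V →L[ℝ] V) (p : ZMod 2) : Submodule ℝ (Fock ι V) :=
  (diracOp B).ker ⊓ paritySubspace ι V p

theorem diracIndex_eq_finrank_diracKer (B : ι → V →L[ℝ] V) :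
    diracIndex B = (finrank ℝ (diracKer B 0) : ℤ) - finrank ℝ (diracKer B 1) := rfl

theorem lift_diracOp {M L : V →L[ℝ] W} (h : ∀ i, M ∘L B i = B' i ∘L L)
    (hstar : ∀ i, M ∘L star (B i) = star (B' i) ∘L L) (u : Fock ι V) :
    lift _ M (diracOp B u) = diracOp B' (lift _ L u) := by
  ext a
  rw [lift_apply, coe_diracOp, coe_diracOp, Pi.smul_apply', Pi.smul_apply', M.map_smul,
    formalDirac_apply, formalDirac_apply, map_sum]
  congr 1
  refine Finset.sum_congr rfl fun i _ ↦ ?_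
  have hann : annihilation i (decay (ι := ι) (1 / 4) • ⇑(lift _ L u)) a =
      L (annihilation i (decay (ι := ι) (1 / 4) • ⇑u) a) := by
    simp [annihilation_apply]
  have hcre : creation i (decay (ι := ι) (1 / 4) • ⇑(lift _ L u)) a =
      L (creation i (decay (ι := ι) (1 / 4) • ⇑u) a) := by
    simp [creation_apply]
  rw [hann, hcre, map_sub]
  exact congrArg₂ _ (DFunLike.congr_fun (h i) _) (DFunLike.congr_fun (hstar i) _)

theorem lift_mem_diracKer {M L : V →L[ℝ] W} (h : ∀ i, M ∘L B i = B' i ∘L L)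
    (hstar : ∀ i, M ∘L star (B i) = star (B' i) ∘L L) {p : ZMod 2} {u : Fock ι V}
    (hu : u ∈ diracKer B p) : lift _ L u ∈ diracKer B' p := by
  constructor
  · have hu₀ : diracOp B u = 0 := hu.1
    change diracOp B' (lift _ L u) = 0
    rw [← lift_diracOp h hstar, hu₀, map_zero]
  · intro a ha
    rw [lift_apply, hu.2 a ha, map_zero]

theorem finrank_eq_card_mul_finrank {X Y : Type*} [AddCommGroup X] [Module ℝ X] [AddCommGroup Y]
    [Module ℝ Y] [Fintype υ] [DecidableEq υ] {J : υ → X →ₗ[ℝ] Y} {Q : υ → Y →ₗ[ℝ] X}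
    {K : Submodule ℝ X} {K' : Submodule ℝ Y} [FiniteDimensional ℝ K]
    (hQJ : ∀ y z x, Q y (J z x) = if y = z then x else 0) (hJQ : ∀ w, ∑ y, J y (Q y w) = w)
    (hJ : ∀ y, ∀ x ∈ K, J y x ∈ K') (hQ : ∀ y, ∀ w ∈ K', Q y w ∈ K) :
    finrank ℝ K' = Fintype.card υ * finrank ℝ K := by
  let e : K' ≃ₗ[ℝ] (υ → K) := LinearEquiv.ofLinearMap
    (LinearMap.pi fun y ↦ (Q y).restrict (hQ y))
    (LinearMap.lsum ℝ _ ℝ fun y ↦ (J y).restrict (hJ y))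
    (by ext; simp [LinearMap.pi_apply, hQJ])
    (by ext; simp [hJQ])
  rw [e.finrank_eq, finrank_pi_fintype, Finset.sum_const, Finset.card_univ, smul_eq_mul]

theorem finrank_diracKer_eq_card_mul [Fintype υ] [DecidableEq υ] {J : υ → V →L[ℝ] W}
    {Q : υ → W →L[ℝ] V} {p : ZMod 2} [FiniteDimensional ℝ (diracKer B p)]
    (hQJ : ∀ y z v, Q y (J z v) = if y = z then v else 0) (hJQ : ∀ w, ∑ y, J y (Q y w) = w)
    (hJ : ∀ y, ∀ u ∈ diracKer B p, lift _ (J y) u ∈ diracKer B' p)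
    (hQ : ∀ y, ∀ u ∈ diracKer B' p, lift _ (Q y) u ∈ diracKer B p) :
    finrank ℝ (diracKer B' p) = Fintype.card υ * finrank ℝ (diracKer B p) := by
  refine finrank_eq_card_mul_finrank (J := fun y ↦ (lift (ι → ℕ) (J y)).toLinearMap)
    (Q := fun y ↦ (lift (ι → ℕ) (Q y)).toLinearMap) (fun y z u ↦ ?_) (fun u ↦ ?_) hJ hQ
  · ext a
    rw [coe_coe, coe_coe, lift_apply, lift_apply, hQJ]
    split_ifs <;> rfl
  · ext a
    rw [lp.coeFn_sum, Finset.sum_apply]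
    exact hJQ (u a)

theorem IsDiracSymbol.finiteDimensional_diracKer [FiniteDimensional ℝ V] {G C : ι → V →L[ℝ] V}
    (h : IsDiracSymbol G C) (p : ZMod 2) : FiniteDimensional ℝ (diracKer (G + C) p) :=
  have := h.finiteDimensional_ker_diracOp
  Submodule.finiteDimensional_inf_left _ _

end DiracKernel

section Kronecker

open ContinuousLinearMap Module
open scoped Kronecker lp

variable {ι σ υ : Type*} [Fintype σ] [Fintype υ]

/-- The component with index `y` of a vector in `ℝ^σ ⊗ ℝ^υ`. -/
noncomputable def slice (y : υ) : EuclideanSpace ℝ (σ × υ) →L[ℝ] EuclideanSpace ℝ σ :=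
  LinearMap.toContinuousLinearMap
    { toFun w := WithLp.toLp 2 fun s ↦ w (s, y)
      map_add' _ _ := rfl
      map_smul' _ _ := rfl }

theorem slice_apply (y : υ) (w : EuclideanSpace ℝ (σ × υ)) (s : σ) : slice y w s = w (s, y) := rfl

variable [DecidableEq υ]

/-- The map `v ↦ v ⊗ e_y` from `ℝ^σ` to `ℝ^σ ⊗ ℝ^υ`. -/
noncomputable def insertion (y : υ) : EuclideanSpace ℝ σ →L[ℝ] EuclideanSpace ℝ (σ × υ) :=
  LinearMap.toContinuousLinearMap
    { toFun v := WithLp.toLp 2 fun p ↦ if p.2 = y then v p.1 else 0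
      map_add' _ _ := by ext p; by_cases hp : p.2 = y <;> simp [hp]
      map_smul' _ _ := by ext; simp }

theorem insertion_apply (y : υ) (v : EuclideanSpace ℝ σ) (p : σ × υ) :
    insertion y v p = if p.2 = y then v p.1 else 0 := rfl

theorem slice_insertion (y z : υ) (v : EuclideanSpace ℝ σ) :
    slice y (insertion z v) = if y = z then v else 0 := by
  ext s
  rw [slice_apply, insertion_apply]
  split_ifs <;> rfl

theorem sum_insertion_slice (w : EuclideanSpace ℝ (σ × υ)) : ∑ y, insertion y (slice y w) = w := by
  ext p
  simp [insertion_apply, slice_apply]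

variable [DecidableEq σ]

theorem slice_comp_kronecker_one (M : Matrix σ σ ℝ) (y : υ) :
    slice y ∘L toEuclideanCLM (𝕜 := ℝ) (M ⊗ₖ (1 : Matrix υ υ ℝ)) =
      toEuclideanCLM (𝕜 := ℝ) M ∘L slice y := by
  ext w s
  simp [slice_apply, mulVec, dotProduct, Fintype.sum_prod_type, one_apply]

theorem kronecker_one_comp_insertion (M : Matrix σ σ ℝ) (y : υ) :
    toEuclideanCLM (𝕜 := ℝ) (M ⊗ₖ (1 : Matrix υ υ ℝ)) ∘L insertion y =
      insertion y ∘L toEuclideanCLM (𝕜 := ℝ) M := by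
  ext w s
  simp [insertion_apply, mulVec, dotProduct, Fintype.sum_prod_type, one_apply]

theorem toEuclideanCLM_add (G C : ι → Matrix σ σ ℝ) :
    (fun i ↦ toEuclideanCLM (𝕜 := ℝ) ((G + C) i)) =
      (fun i ↦ toEuclideanCLM (𝕜 := ℝ) (G i)) + fun i ↦ toEuclideanCLM (𝕜 := ℝ) (C i) :=
  funext fun i ↦ map_add _ (G i) (C i)

theorem IsDiracSymbol.toEuclideanCLM [Fintype ι] {G C : ι → Matrix σ σ ℝ}
    (h : IsDiracSymbol G C) :
    IsDiracSymbol (fun i ↦ Matrix.toEuclideanCLM (𝕜 := ℝ) (G i))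
      fun i ↦ Matrix.toEuclideanCLM (𝕜 := ℝ) (C i) :=
  h.map (Matrix.toEuclideanCLM (n := σ) (𝕜 := ℝ)).toStarAlgHom

/-- The index of the Dirac operator on `ℝ^σ`-valued families given by the matrices `B`. -/
noncomputable def matrixIndex [Fintype ι] [DecidableEq ι] (B : ι → Matrix σ σ ℝ) : ℤ :=
  diracIndex fun i ↦ toEuclideanCLM (𝕜 := ℝ) (B i)

variable [Fintype ι] [DecidableEq ι]

theorem lift_slice_mem_diracKer (B : ι → Matrix σ σ ℝ) {θ : Matrix υ υ ℝ}
    (hθ : IsSelfAdjoint θ) (hθθ : θ * θ = 1) (y : υ) {p : ZMod 2}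
    {u : Fock ι (EuclideanSpace ℝ (σ × υ))}
    (hu : u ∈ diracKer (fun i ↦ toEuclideanCLM (𝕜 := ℝ) (B i ⊗ₖ θ)) p) :
    lift _ (slice y) u ∈ diracKer (fun i ↦ toEuclideanCLM (𝕜 := ℝ) (B i)) p := by
  have hM (M : Matrix σ σ ℝ) : (slice y ∘L toEuclideanCLM (𝕜 := ℝ) ((1 : Matrix σ σ ℝ) ⊗ₖ θ)) ∘L
      toEuclideanCLM (𝕜 := ℝ) (M ⊗ₖ θ) = toEuclideanCLM (𝕜 := ℝ) M ∘L slice y := by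
    rw [comp_assoc, ← mul_def, ← map_mul, ← mul_kronecker_mul, one_mul, hθθ,
      slice_comp_kronecker_one]
  refine lift_mem_diracKer (fun i ↦ hM (B i)) (fun i ↦ ?_) hu
  rw [← map_star, ← map_star, star_eq_conjTranspose, conjTranspose_kronecker,
    ← star_eq_conjTranspose, ← star_eq_conjTranspose, hθ.star_eq, hM]

theorem lift_insertion_mem_diracKer (B : ι → Matrix σ σ ℝ) {θ : Matrix υ υ ℝ}
    (hθ : IsSelfAdjoint θ) (y : υ) {p : ZMod 2} {u : Fock ι (EuclideanSpace ℝ σ)}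
    (hu : u ∈ diracKer (fun i ↦ toEuclideanCLM (𝕜 := ℝ) (B i)) p) :
    lift _ (insertion y) u ∈ diracKer (fun i ↦ toEuclideanCLM (𝕜 := ℝ) (B i ⊗ₖ θ)) p := by
  have hM (M : Matrix σ σ ℝ) :
      (toEuclideanCLM (𝕜 := ℝ) ((1 : Matrix σ σ ℝ) ⊗ₖ θ) ∘L insertion y) ∘L
        toEuclideanCLM (𝕜 := ℝ) M = toEuclideanCLM (𝕜 := ℝ) (M ⊗ₖ θ) ∘L insertion y := by
    rw [comp_assoc, ← kronecker_one_comp_insertion, ← comp_assoc, ← mul_def, ← map_mul,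
      ← mul_kronecker_mul, one_mul, mul_one]
  refine lift_mem_diracKer (fun i ↦ hM (B i)) (fun i ↦ ?_) hu
  rw [← map_star, ← map_star, star_eq_conjTranspose (B i ⊗ₖ θ), conjTranspose_kronecker,
    ← star_eq_conjTranspose, ← star_eq_conjTranspose, hθ.star_eq, hM]

theorem matrixIndex_kronecker {G C : ι → Matrix σ σ ℝ} (h : IsDiracSymbol G C)
    {θ : Matrix υ υ ℝ} (hθ : IsSelfAdjoint θ) (hθθ : θ * θ = 1) :
    matrixIndex (fun i ↦ (G + C) i ⊗ₖ θ) = Fintype.card υ * matrixIndex (G + C) := by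
  have hker (p : ZMod 2) : finrank ℝ
      (diracKer (fun i ↦ toEuclideanCLM (𝕜 := ℝ) ((G + C) i ⊗ₖ θ)) p) =
        Fintype.card υ * finrank ℝ (diracKer (fun i ↦ toEuclideanCLM (𝕜 := ℝ) ((G + C) i)) p) := by
    have := h.toEuclideanCLM.finiteDimensional_diracKer p
    rw [← toEuclideanCLM_add] at this
    exact finrank_diracKer_eq_card_mul slice_insertion sum_insertion_slice
      (fun y u hu ↦ lift_insertion_mem_diracKer _ hθ y hu)
      (fun y u hu ↦ lift_slice_mem_diracKer _ hθ hθθ y hu)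
  rw [matrixIndex, matrixIndex, diracIndex_eq_finrank_diracKer, diracIndex_eq_finrank_diracKer,
    hker, hker]
  push_cast
  ring

end Kronecker

section CliffordFamilies

open scoped Kronecker

/-- A further Clifford generator `ω`, of sign `δ`, anticommuting with all the `e i`; for `δ = 1` it
is a grading operator for the family `e`. -/
structure IsChirality {ι A : Type*} [Ring A] [StarRing A] [Algebra ℝ A] (δ : ℝ) (e : ι → A)
    (ω : A) : Prop where
  star_eq : star ω = δ • ω
  mul_self : ω * ω = δ • 1
  mul_eq_neg_mul (i : ι) : e i * ω = -(ω * e i)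

theorem IsClifford.comp_injective {ι κ A : Type*} [Ring A] [StarRing A] [Algebra ℝ A] {ε : ℝ}
    {e : ι → A} (he : IsClifford ε e) {g : κ → ι} (hg : Function.Injective g) :
    IsClifford ε fun k ↦ e (g k) where
  star_eq k := he.star_eq (g k)
  mul_self k := he.mul_self (g k)
  mul_eq_neg_mul h := he.mul_eq_neg_mul (hg.ne h)

theorem IsClifford.sum_smul_mul_self {ι A : Type*} [Fintype ι] [Ring A] [StarRing A] [Algebra ℝ A]
    {ε : ℝ} {e : ι → A} (he : IsClifford ε e) (x : ι → ℝ) :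
    (∑ i, x i • e i) * ∑ i, x i • e i = (ε * ∑ i, x i ^ 2) • 1 := by
  have h := he.sum_sum_mul_mul (s := fun i j ↦ (x i * x j) • 1) fun i j ↦ by rw [mul_comm]
  simp only [mul_smul_one] at h
  simp only [Finset.sum_mul_sum, smul_mul_smul_comm, h, ← Finset.sum_smul, smul_smul, sq]

theorem IsClifford.isUnit_sum_smul {ι A : Type*} [Fintype ι] [Ring A] [StarRing A] [Algebra ℝ A]
    {ε : ℝ} {e : ι → A} (he : IsClifford ε e) (hε : ε ≠ 0) {x : ι → ℝ} (hx : x ≠ 0) :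
    IsUnit (∑ i, x i • e i) := by
  obtain ⟨i, hi⟩ := Function.ne_iff.1 hx
  have hpos : 0 < ∑ i, x i ^ 2 :=
    Finset.sum_pos' (fun i _ ↦ sq_nonneg (x i)) ⟨i, Finset.mem_univ i, sq_pos_of_ne_zero hi⟩
  have hunit : IsUnit ((∑ i, x i • e i) * ∑ i, x i • e i) := by
    rw [he.sum_smul_mul_self, ← Algebra.algebraMap_eq_smul_one]
    exact (mul_ne_zero hε hpos.ne').isUnit.map (algebraMap ℝ A)
  exact isUnit_mul_self_iff.1 hunit

section Ring

variable {R σ υ : Type*} [Ring R]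

theorem neg_kronecker (M : Matrix σ σ R) (N : Matrix υ υ R) : (-M) ⊗ₖ N = -(M ⊗ₖ N) := by
  ext
  simp

theorem kronecker_neg (M : Matrix σ σ R) (N : Matrix υ υ R) : M ⊗ₖ (-N) = -(M ⊗ₖ N) := by
  ext
  simp

end Ring

variable {ι κ σ υ : Type*}

theorem star_kronecker (M : Matrix σ σ ℝ) (N : Matrix υ υ ℝ) : star (M ⊗ₖ N) = star M ⊗ₖ star N :=
  conjTranspose_kronecker M N

variable [Fintype σ] [DecidableEq σ] [Fintype υ] [DecidableEq υ] {δ δ' ε : ℝ}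
  {f : κ → Matrix σ σ ℝ} {a : Matrix σ σ ℝ} {e : ι → Matrix υ υ ℝ} {ω : Matrix υ υ ℝ}

theorem IsClifford.sumElim_kronecker (hf : IsClifford (δ * ε) f) (ha : IsChirality δ f a)
    (he : IsClifford ε e) :
    IsClifford (δ * ε) (Sum.elim (fun j ↦ f j ⊗ₖ (1 : Matrix υ υ ℝ)) fun i ↦ a ⊗ₖ e i) where
  star_eq := by
    rintro (j | i)
    · simp [star_kronecker, hf.star_eq, smul_kronecker]
    · simp [star_kronecker, ha.star_eq, he.star_eq, smul_kronecker, kronecker_smul, smul_smul,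
        mul_comm]
  mul_self := by
    rintro (j | i)
    · simp [← mul_kronecker_mul, hf.mul_self, smul_kronecker]
    · simp [← mul_kronecker_mul, ha.mul_self, he.mul_self, smul_kronecker, kronecker_smul,
        smul_smul, mul_comm]
  mul_eq_neg_mul := by
    rintro (j | i) (j' | i') h
    · simp [← mul_kronecker_mul, hf.mul_eq_neg_mul (ne_of_apply_ne _ h), neg_kronecker]
    · simp [← mul_kronecker_mul, ha.mul_eq_neg_mul, neg_kronecker]
    · simp [← mul_kronecker_mul, ha.mul_eq_neg_mul, neg_kronecker]
    · simp [← mul_kronecker_mul, he.mul_eq_neg_mul (ne_of_apply_ne _ h), kronecker_neg]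

theorem IsClifford.one_kronecker (he : IsClifford ε e) :
    IsClifford ε fun i ↦ (1 : Matrix σ σ ℝ) ⊗ₖ e i where
  star_eq i := by simp [star_kronecker, he.star_eq, kronecker_smul]
  mul_self i := by simp [← mul_kronecker_mul, he.mul_self, kronecker_smul]
  mul_eq_neg_mul h := by simp [← mul_kronecker_mul, he.mul_eq_neg_mul h, kronecker_neg]

theorem IsChirality.sumElim_kronecker (ha : IsChirality δ f a) (hω : IsChirality δ' e ω) :
    IsChirality (δ * δ') (Sum.elim (fun j ↦ f j ⊗ₖ (1 : Matrix υ υ ℝ)) fun i ↦ a ⊗ₖ e i)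
      (a ⊗ₖ ω) where
  star_eq := by
    simp [star_kronecker, ha.star_eq, hω.star_eq, smul_kronecker, kronecker_smul, smul_smul,
      mul_comm]
  mul_self := by
    simp [← mul_kronecker_mul, ha.mul_self, hω.mul_self, smul_kronecker, kronecker_smul, smul_smul,
      mul_comm]
  mul_eq_neg_mul := by
    rintro (j | i)
    · simp [← mul_kronecker_mul, ha.mul_eq_neg_mul, neg_kronecker]
    · simp [← mul_kronecker_mul, hω.mul_eq_neg_mul, kronecker_neg]

end CliffordFamilies

section PauliMatrices

/-- The reflection of `ℝ²` exchanging the coordinates. -/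
def pauliX : Matrix Bool Bool ℝ := fun a b ↦ if a = b then 0 else 1

/-- The reflection of `ℝ²` changing the sign of one coordinate. -/
def pauliZ : Matrix Bool Bool ℝ := fun a b ↦ if a = b then (if a then 1 else -1) else 0

/-- The rotation of `ℝ²` by a right angle. -/
def pauliJ : Matrix Bool Bool ℝ := fun a b ↦ if a = b then 0 else (if a then 1 else -1)

theorem pauliX_mul_self : pauliX * pauliX = 1 := by
  ext a b
  cases a <;> cases b <;> simp [mul_apply, pauliX]

theorem pauliZ_mul_self : pauliZ * pauliZ = 1 := by
  ext a b
  cases a <;> cases b <;> simp [mul_apply, pauliZ]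

theorem pauliJ_mul_self : pauliJ * pauliJ = -1 := by
  ext a b
  cases a <;> cases b <;> simp [mul_apply, pauliJ]

theorem pauliZ_mul_pauliX : pauliZ * pauliX = -(pauliX * pauliZ) := by
  ext a b
  cases a <;> cases b <;> simp [mul_apply, pauliX, pauliZ]

theorem pauliJ_mul_pauliX : pauliJ * pauliX = -(pauliX * pauliJ) := by
  ext a b
  cases a <;> cases b <;> simp [mul_apply, pauliX, pauliJ]

theorem pauliJ_mul_pauliZ : pauliJ * pauliZ = -(pauliZ * pauliJ) := by
  ext a b
  cases a <;> cases b <;> simp [mul_apply, pauliJ, pauliZ]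

theorem star_pauliX : star pauliX = pauliX := by
  ext a b
  cases a <;> cases b <;> simp [pauliX]

theorem star_pauliZ : star pauliZ = pauliZ := by
  ext a b
  cases a <;> cases b <;> simp [pauliZ]

theorem star_pauliJ : star pauliJ = -pauliJ := by
  ext a b
  cases a <;> cases b <;> simp [pauliJ]

theorem isClifford_pauliJ : IsClifford (-1) fun _ : Unit ↦ pauliJ where
  star_eq _ := by rw [star_pauliJ, neg_one_smul]
  mul_self _ := by rw [pauliJ_mul_self, neg_one_smul]
  mul_eq_neg_mul h := absurd rfl h

theorem isChirality_pauliX : IsChirality 1 (fun _ : Unit ↦ pauliJ) pauliX where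
  star_eq := by rw [star_pauliX, one_smul]
  mul_self := by rw [pauliX_mul_self, one_smul]
  mul_eq_neg_mul _ := pauliJ_mul_pauliX

theorem exists_isClifford_isChirality (n : ℕ) :
    ∃ (υ : Type) (_ : Fintype υ) (_ : DecidableEq υ) (_ : Nonempty υ) (e : Fin n → Matrix υ υ ℝ)
      (ω : Matrix υ υ ℝ), IsClifford (-1) e ∧ IsChirality 1 e ω := by
  induction n with
  | zero =>
    exact ⟨Unit, inferInstance, inferInstance, inferInstance, Fin.elim0, 1,
      ⟨fun i ↦ i.elim0, fun i ↦ i.elim0, fun {i} ↦ i.elim0⟩, by simp, by simp, fun i ↦ i.elim0⟩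
  | succ n ih =>
    obtain ⟨υ, _, _, _, e, ω, he, hω⟩ := ih
    let g : Fin (n + 1) ≃ Unit ⊕ Fin n := Fintype.equivOfCardEq (by simp [add_comm])
    have hJ : IsClifford (1 * -1) fun _ : Unit ↦ pauliJ := by rw [one_mul]; exact isClifford_pauliJ
    have hclifford := (hJ.sumElim_kronecker isChirality_pauliX he).comp_injective g.injective
    have hchirality := isChirality_pauliX.sumElim_kronecker hω
    rw [one_mul] at hclifford hchirality
    exact ⟨Bool × υ, inferInstance, inferInstance, inferInstance, _, _, hclifford,
      hchirality.star_eq, hchirality.mul_self, fun k ↦ hchirality.mul_eq_neg_mul (g k)⟩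

end PauliMatrices

section IndexTheorem

open scoped Kronecker

theorem isUnit_add_of_mul_eq_neg_mul {σ : Type*} [Fintype σ] [DecidableEq σ] {M N : Matrix σ σ ℝ}
    (hM : star M = -M) (hN : star N = -N) (hMN : M * N = -(N * M)) (hunit : IsUnit N) :
    IsUnit (M + N) := by
  have hsq : star (M + N) * (M + N) = Mᴴ * M + Nᴴ * N := by
    simp only [← star_eq_conjTranspose, star_add, hM, hN, add_mul, mul_add, neg_mul, hMN, neg_neg]
    abel
  have hpos : (Nᴴ * N).PosDef :=
    (posSemidef_conjTranspose_mul_self N).posDef_iff_isUnit.2 (hunit.star.mul hunit)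
  have hunit' : IsUnit (star (M + N) * (M + N)) := by
    rw [hsq]
    exact (PosDef.posSemidef_add (posSemidef_conjTranspose_mul_self M) hpos).isUnit
  rw [isUnit_iff_isUnit_det, det_mul] at hunit'
  exact (isUnit_iff_isUnit_det _).2 (isUnit_of_mul_isUnit_right hunit')

variable {ι σ υ : Type*} [Fintype ι] [Fintype σ] [DecidableEq σ] [Fintype υ] [DecidableEq υ]
  {G C : ι → Matrix σ σ ℝ} {κ : ι → Matrix υ υ ℝ} {θ : Matrix υ υ ℝ}

theorem IsDiracSymbol.isUnit_sum_kronecker_segment (h : IsDiracSymbol G C)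
    (hκ : IsClifford (-1) κ) (hθ : IsChirality 1 κ θ) (t : ℝ) {x : ι → ℝ} (hx : x ≠ 0) :
    IsUnit (∑ i, x i • ((1 - t) • (C i ⊗ₖ θ) + t • ((1 : Matrix σ σ ℝ) ⊗ₖ κ i))) := by
  set M := ∑ i, x i • C i with hM
  set Q := ∑ i, x i • κ i with hQ
  have hsum : ∑ i, x i • ((1 - t) • (C i ⊗ₖ θ) + t • ((1 : Matrix σ σ ℝ) ⊗ₖ κ i)) =
      (1 - t) • (M ⊗ₖ θ) + t • ((1 : Matrix σ σ ℝ) ⊗ₖ Q) := by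
    ext a b
    simp only [hM, hQ, Matrix.sum_apply, Matrix.add_apply, Matrix.smul_apply, kroneckerMap_apply,
      smul_eq_mul, Finset.sum_mul, Finset.mul_sum, ← Finset.sum_add_distrib]
    exact Finset.sum_congr rfl fun i _ ↦ by ring
  have hMstar : star M = -M := by
    simp [hM, h.star_right]
  have hQstar : star Q = -Q := by
    simp [hQ, hκ.star_eq]
  have hQθ : Q * θ = -(θ * Q) := by
    simp [hQ, Finset.sum_mul, Finset.mul_sum, hθ.mul_eq_neg_mul]
  have hθθ : IsUnit θ := .of_mul_eq_one θ (by rw [hθ.mul_self, one_smul])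
  rw [hsum]
  rcases eq_or_ne t 0 with rfl | ht
  · simpa using (h.isUnit hx).kronecker hθθ
  refine isUnit_add_of_mul_eq_neg_mul ?_ ?_ ?_ ?_
  · simp [star_kronecker, hMstar, hθ.star_eq, neg_kronecker]
  · simp [star_kronecker, hQstar, kronecker_neg]
  · simp [← mul_kronecker_mul, hQθ, kronecker_neg, smul_smul, mul_comm]
  · exact (isUnit_one.kronecker (hκ.isUnit_sum_smul (by norm_num) hx)).smul (Units.mk0 t ht)

theorem IsDiracSymbol.kronecker_segment (h : IsDiracSymbol G C) (hκ : IsClifford (-1) κ)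
    (hθ : IsChirality 1 κ θ) (t : ℝ) :
    IsDiracSymbol (fun i ↦ G i ⊗ₖ θ)
      ((1 - t) • (fun i ↦ C i ⊗ₖ θ) + t • fun i ↦ (1 : Matrix σ σ ℝ) ⊗ₖ κ i) where
  isClifford :=
    { star_eq i := by simp [star_kronecker, h.isClifford.star_eq, hθ.star_eq]
      mul_self i := by simp [← mul_kronecker_mul, h.isClifford.mul_self, hθ.mul_self]
      mul_eq_neg_mul hij := by
        simp [← mul_kronecker_mul, h.isClifford.mul_eq_neg_mul hij, hθ.mul_self, neg_kronecker] }
  star_right i := by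
    simp [star_kronecker, h.star_right, hθ.star_eq, hκ.star_eq, neg_kronecker, kronecker_neg,
      add_comm]
  mul_eq_neg_mul i j := by
    simp [mul_add, add_mul, ← mul_kronecker_mul, h.mul_eq_neg_mul, hθ.mul_eq_neg_mul,
      hθ.mul_self, neg_kronecker, kronecker_neg, add_comm]
  isUnit hx := h.isUnit_sum_kronecker_segment hκ hθ t hx

variable [DecidableEq ι]

theorem matrixIndex_eq_of_segment {C₀ C₁ : ι → Matrix σ σ ℝ}
    (h : ∀ t : ℝ, IsDiracSymbol G ((1 - t) • C₀ + t • C₁)) :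
    matrixIndex (G + C₀) = matrixIndex (G + C₁) := by
  rw [matrixIndex, matrixIndex, toEuclideanCLM_add, toEuclideanCLM_add]
  refine diracIndex_eq_of_segment fun t ↦ ?_
  convert (h t).toEuclideanCLM using 1
  ext1 i
  simp

theorem IsDiracSymbol.two_pow_card_mul_matrixIndex_of_isClifford (h : IsDiracSymbol G C)
    (hC : IsClifford (-1) C) : 2 ^ Fintype.card ι * matrixIndex (G + C) = Fintype.card σ := by
  have hCAR := h.toEuclideanCLM.isCAR
    (hC.map (Matrix.toEuclideanCLM (n := σ) (𝕜 := ℝ)).toStarAlgHom)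
  rw [← finrank_euclideanSpace (ι := σ) (𝕜 := ℝ), ← hCAR.two_pow_card_mul_diracIndex,
    matrixIndex, toEuclideanCLM_add]

theorem IsDiracSymbol.two_pow_card_mul_matrixIndex (h : IsDiracSymbol G C) :
    2 ^ Fintype.card ι * matrixIndex (G + C) = Fintype.card σ := by
  obtain ⟨υ, _, _, _, e, θ, he, hθ⟩ := exists_isClifford_isChirality (Fintype.card ι)
  let κ : ι → Matrix υ υ ℝ := fun i ↦ e (Fintype.equivFin ι i)
  have hκ : IsClifford (-1) κ := he.comp_injective (Fintype.equivFin ι).injective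
  have hκθ : IsChirality 1 κ θ := ⟨hθ.star_eq, hθ.mul_self, fun i ↦ hθ.mul_eq_neg_mul _⟩
  have hdeform : Fintype.card υ * matrixIndex (G + C) =
      matrixIndex ((fun i ↦ G i ⊗ₖ θ) + fun i ↦ (1 : Matrix σ σ ℝ) ⊗ₖ κ i) := by
    have hθstar : IsSelfAdjoint θ := by rw [IsSelfAdjoint, hθ.star_eq, one_smul]
    rw [← matrixIndex_kronecker h hθstar (by rw [hθ.mul_self, one_smul]),
      ← matrixIndex_eq_of_segment (h.kronecker_segment hκ hκθ)]
    simp only [Pi.add_def, add_kronecker]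
  have hend : IsDiracSymbol (fun i ↦ G i ⊗ₖ θ) fun i ↦ (1 : Matrix σ σ ℝ) ⊗ₖ κ i := by
    simpa using h.kronecker_segment hκ hκθ 1
  have hindex := hend.two_pow_card_mul_matrixIndex_of_isClifford hκ.one_kronecker
  rw [← hdeform, Fintype.card_prod, Nat.cast_mul, mul_left_comm, mul_comm (Fintype.card σ : ℤ)]
    at hindex
  exact mul_left_cancel₀ (Nat.cast_ne_zero.2 Fintype.card_ne_zero) hindex

end IndexTheorem

section ComplexStructures

open Module

variable {X : Type*} [AddCommGroup X] [Module ℝ X]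

theorem two_dvd_finrank_of_mul_self {J : End ℝ X} (hJ : J * J = -1) : 2 ∣ finrank ℝ X := by
  let φ : ℂ →ₐ[ℝ] End ℝ X := Complex.lift ⟨J, hJ⟩
  let _ : Module ℂ X := Module.compHom X φ.toRingHom
  have hsmul (c : ℂ) (x : X) : c • x = φ c x := rfl
  have : IsScalarTower ℝ ℂ X := ⟨fun r c x ↦ by rw [hsmul, hsmul, map_smul, LinearMap.smul_apply]⟩
  rw [← finrank_mul_finrank ℝ ℂ X, Complex.finrank_real_complex]
  exact dvd_mul_right _ _

theorem four_dvd_finrank_of_mul_self {J K : End ℝ X} (hJ : J * J = -1) (hK : K * K = -1)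
    (hJK : J * K = -(K * J)) : 4 ∣ finrank ℝ X := by
  let q : QuaternionAlgebra.Basis (End ℝ X) (-1 : ℝ) 0 (-1) :=
    { i := J, j := K, k := J * K
      i_mul_i := by simp [hJ]
      j_mul_j := by simp [hK]
      i_mul_j := rfl
      j_mul_i := by simp [hJK] }
  let φ : Quaternion ℝ →ₐ[ℝ] End ℝ X := q.liftHom
  let _ : Module (Quaternion ℝ) X := Module.compHom X φ.toRingHom
  have hsmul (c : Quaternion ℝ) (x : X) : c • x = φ c x := rfl
  have : IsScalarTower ℝ (Quaternion ℝ) X :=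
    ⟨fun r c x ↦ by rw [hsmul, hsmul, map_smul, LinearMap.smul_apply]⟩
  rw [← finrank_mul_finrank ℝ (Quaternion ℝ) X, Quaternion.finrank_eq_four]
  exact dvd_mul_right _ _

theorem two_pow_dvd_finrank {r : ℕ} (hr : r ≤ 2) {J : Fin r → End ℝ X} (hJ : ∀ k, J k * J k = -1)
    (hanti : ∀ k l, k ≠ l → J k * J l = -(J l * J k)) : 2 ^ r ∣ finrank ℝ X := by
  interval_cases r
  · exact one_dvd _
  · exact two_dvd_finrank_of_mul_self (hJ 0)
  · exact four_dvd_finrank_of_mul_self (hJ 0) (hJ 1) (hanti 0 1 (by decide))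

end ComplexStructures

section Symmetries

variable {ι κ ρ A B : Type*} [Ring A] [Ring B]

/-- Anticommuting complex structures `J k`, each of which either commutes with all the `e i` or
anticommutes with all the `e i`. -/
structure IsSymmetryFamily (e : ι → A) (J : ρ → A) : Prop where
  mul_self (k : ρ) : J k * J k = -1
  mul_eq_neg_mul {k l : ρ} (h : k ≠ l) : J k * J l = -(J l * J k)
  commute_or (k : ρ) : (∀ i, J k * e i = e i * J k) ∨ ∀ i, J k * e i = -(e i * J k)

variable {e : ι → A} {J : ρ → A}

theorem IsSymmetryFamily.of_isEmpty [IsEmpty ρ] : IsSymmetryFamily e J where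
  mul_self := isEmptyElim
  mul_eq_neg_mul {k} := isEmptyElim k
  commute_or := isEmptyElim

theorem IsSymmetryFamily.comp (h : IsSymmetryFamily e J) (g : κ → ι) :
    IsSymmetryFamily (fun k ↦ e (g k)) J where
  mul_self := h.mul_self
  mul_eq_neg_mul := h.mul_eq_neg_mul
  commute_or k := (h.commute_or k).imp (fun hk i ↦ hk (g i)) fun hk i ↦ hk (g i)

theorem IsSymmetryFamily.map (h : IsSymmetryFamily e J) (f : A →+* B) :
    IsSymmetryFamily (fun i ↦ f (e i)) fun k ↦ f (J k) where
  mul_self k := by rw [← map_mul, h.mul_self, map_neg, map_one]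
  mul_eq_neg_mul hkl := by rw [← map_mul, h.mul_eq_neg_mul hkl, map_neg, map_mul]
  commute_or k := (h.commute_or k).imp (fun hk i ↦ by rw [← map_mul, hk, map_mul])
    fun hk i ↦ by rw [← map_mul, hk, map_neg, map_mul]

end Symmetries

section SymmetryAction

open ContinuousLinearMap Module

variable {ι ρ V : Type*} [Fintype ι] [DecidableEq ι] [NormedAddCommGroup V]
  [InnerProductSpace ℝ V] [CompleteSpace V] {B : ι → V →L[ℝ] V} {p : ZMod 2}

theorem IsSymmetryFamily.lift_mem_diracKer {J : ρ → V →L[ℝ] V}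
    (h : IsSymmetryFamily (Sum.elim B (star B)) J) (k : ρ) {u : Fock ι V} (hu : u ∈ diracKer B p) :
    lift _ (J k) u ∈ diracKer B p := by
  rcases h.commute_or k with hk | hk
  · exact HurwitzRadon.lift_mem_diracKer (fun i ↦ hk (.inl i)) (fun i ↦ hk (.inr i)) hu
  · exact HurwitzRadon.lift_mem_diracKer (M := -J k)
      (fun i ↦ neg_eq_iff_eq_neg.2 (hk (.inl i))) (fun i ↦ neg_eq_iff_eq_neg.2 (hk (.inr i))) hu

theorem IsSymmetryFamily.two_pow_dvd_finrank_diracKer {r : ℕ} (hr : r ≤ 2)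
    {J : Fin r → V →L[ℝ] V} (h : IsSymmetryFamily (Sum.elim B (star B)) J) (p : ZMod 2) :
    2 ^ r ∣ finrank ℝ (diracKer B p) := by
  let K (k : Fin r) : End ℝ (diracKer B p) :=
    (lift _ (J k)).toLinearMap.restrict fun _ hu ↦ h.lift_mem_diracKer k hu
  refine two_pow_dvd_finrank hr (J := K) (fun k ↦ ?_) fun k l hkl ↦ ?_
  · ext u a
    exact DFunLike.congr_fun (h.mul_self k) _
  · ext u a
    exact DFunLike.congr_fun (h.mul_eq_neg_mul hkl) _

theorem IsSymmetryFamily.two_pow_dvd_matrixIndex {σ : Type*} [Fintype σ] [DecidableEq σ] {r : ℕ}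
    (hr : r ≤ 2) {B : ι → Matrix σ σ ℝ} {J : Fin r → Matrix σ σ ℝ}
    (h : IsSymmetryFamily (Sum.elim B (star B)) J) : (2 ^ r : ℤ) ∣ matrixIndex B := by
  let Φ := toEuclideanCLM (n := σ) (𝕜 := ℝ)
  have hΦ : IsSymmetryFamily (Sum.elim (fun i ↦ Φ (B i)) (star fun i ↦ Φ (B i)))
      fun k ↦ Φ (J k) := by
    convert h.map Φ.toRingEquiv.toRingHom using 1
    · ext1 (i | i)
      · rfl
      · exact (map_star Φ (B i)).symm
    · rfl
  rw [matrixIndex, diracIndex_eq_finrank_diracKer]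
  exact dvd_sub (mod_cast hΦ.two_pow_dvd_finrank_diracKer hr 0)
    (mod_cast hΦ.two_pow_dvd_finrank_diracKer hr 1)

end SymmetryAction

section NonsingularSkew

open scoped Kronecker

/-- Skew elements `a i` all of whose nontrivial real linear combinations are invertible. -/
structure IsNonsingularSkew {ι A : Type*} [Fintype ι] [Ring A] [StarRing A] [Algebra ℝ A]
    (a : ι → A) : Prop where
  star_eq (i : ι) : star (a i) = -a i
  isUnit {x : ι → ℝ} (hx : x ≠ 0) : IsUnit (∑ i, x i • a i)

theorem IsNonsingularSkew.comp_injective {ι κ A : Type*} [Fintype ι] [Fintype κ] [Ring A]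
    [StarRing A] [Algebra ℝ A] {a : ι → A} (ha : IsNonsingularSkew a) {g : κ → ι}
    (hg : Function.Injective g) : IsNonsingularSkew fun k ↦ a (g k) where
  star_eq k := ha.star_eq (g k)
  isUnit {x} hx := by
    have hsum : ∑ k, x k • a (g k) = ∑ i, Function.extend g x 0 i • a i := by
      refine Fintype.sum_of_injective g hg _ _ (fun i hi ↦ ?_) fun k ↦ by rw [hg.extend_apply]
      rw [Function.extend_apply' _ _ _ hi, Pi.zero_apply, zero_smul]
    rw [hsum]
    refine ha.isUnit fun h ↦ hx ?_
    ext k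
    rw [← hg.extend_apply x 0 k, h]
    rfl

variable {ι S ν : Type*} [Fintype ι] [Fintype S] [DecidableEq S] [Fintype ν] [DecidableEq ν]
  {γ : Option ι → Matrix S S ℝ} {A : ι → Matrix ν ν ℝ}

theorem IsNonsingularSkew.isDiracSymbol (hA : IsNonsingularSkew A) (hγ : IsClifford 1 γ) :
    IsDiracSymbol (fun i ↦ γ (some i) ⊗ₖ (1 : Matrix ν ν ℝ)) fun i ↦ γ none ⊗ₖ A i where
  isClifford :=
    { star_eq i := by simp [star_kronecker, hγ.star_eq]
      mul_self i := by simp [← mul_kronecker_mul, hγ.mul_self]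
      mul_eq_neg_mul hij := by
        simp [← mul_kronecker_mul, hγ.mul_eq_neg_mul ((Option.some_injective ι).ne hij),
          neg_kronecker] }
  star_right i := by simp [star_kronecker, hγ.star_eq, hA.star_eq, kronecker_neg]
  mul_eq_neg_mul i j := by
    simp [← mul_kronecker_mul, hγ.mul_eq_neg_mul (Option.some_ne_none i), neg_kronecker]
  isUnit {x} hx := by
    have hsum : ∑ i, x i • (γ none ⊗ₖ A i) = γ none ⊗ₖ ∑ i, x i • A i := by
      ext
      simp [Matrix.sum_apply, Finset.mul_sum, mul_left_comm]
    have hunit : IsUnit (γ none) := .of_mul_eq_one (γ none) (by rw [hγ.mul_self, one_smul])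
    rw [hsum]
    exact hunit.kronecker (hA.isUnit hx)

theorem IsSymmetryFamily.kronecker_one_spinor {ρ : Type*} {J : ρ → Matrix S S ℝ}
    (hJ : IsSymmetryFamily γ J) (hγ : IsClifford 1 γ) (hA : IsNonsingularSkew A) :
    IsSymmetryFamily
      (Sum.elim ((fun i ↦ γ (some i) ⊗ₖ (1 : Matrix ν ν ℝ)) + fun i ↦ γ none ⊗ₖ A i)
        (star ((fun i ↦ γ (some i) ⊗ₖ (1 : Matrix ν ν ℝ)) + fun i ↦ γ none ⊗ₖ A i)))
      fun k ↦ J k ⊗ₖ (1 : Matrix ν ν ℝ) where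
  mul_self k := by simp [← mul_kronecker_mul, hJ.mul_self, neg_kronecker]
  mul_eq_neg_mul hkl := by simp [← mul_kronecker_mul, hJ.mul_eq_neg_mul hkl, neg_kronecker]
  commute_or k := by
    refine (hJ.commute_or k).imp (fun hk ↦ ?_) fun hk ↦ ?_
    all_goals
      rintro (i | i) <;>
      simp [star_kronecker, hγ.star_eq, hA.star_eq, mul_add, add_mul, ← mul_kronecker_mul, hk,
        neg_kronecker, kronecker_neg, add_comm]

theorem IsNonsingularSkew.two_pow_dvd {r : ℕ} {J : Fin r → Matrix S S ℝ}
    (hA : IsNonsingularSkew A) (hγ : IsClifford 1 γ) (hJ : IsSymmetryFamily γ J) (hr : r ≤ 2) :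
    2 ^ (Fintype.card ι + r) ∣ Fintype.card S * Fintype.card ν := by
  classical
  have hdvd := (hJ.kronecker_one_spinor hγ hA).two_pow_dvd_matrixIndex hr
  have hindex := (hA.isDiracSymbol hγ).two_pow_card_mul_matrixIndex
  have h : (2 ^ (Fintype.card ι + r) : ℤ) ∣ Fintype.card (S × ν) := by
    rw [← hindex, pow_add]
    exact mul_dvd_mul_left _ hdvd
  rw [← Fintype.card_prod]
  exact_mod_cast h

end NonsingularSkew

section CliffordModules

open scoped Kronecker

theorem IsClifford.chirality_mul {ι A : Type*} [Ring A] [StarRing A] [Algebra ℝ A] {e : ι → A}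
    {ω : A} (he : IsClifford (-1) e) (hω : IsChirality 1 e ω) : IsClifford 1 fun i ↦ ω * e i := by
  have hmul (i j : ι) : ω * e i * (ω * e j) = -(e i * e j) := by
    rw [mul_assoc, ← mul_assoc (e i), hω.mul_eq_neg_mul, neg_mul, mul_neg, mul_assoc, ← mul_assoc,
      hω.mul_self, one_smul, one_mul]
  refine ⟨fun i ↦ ?_, fun i ↦ ?_, fun {i j} hij ↦ ?_⟩
  · simp [star_mul, he.star_eq, hω.star_eq, hω.mul_eq_neg_mul]
  · simp [hmul, he.mul_self]
  · rw [hmul, hmul, he.mul_eq_neg_mul hij]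

theorem IsChirality.chirality_mul {ι A : Type*} [Ring A] [StarRing A] [Algebra ℝ A] {δ : ℝ}
    {e : ι → A} {ω : A} (hω : IsChirality δ e ω) : IsChirality δ (fun i ↦ ω * e i) ω where
  star_eq := hω.star_eq
  mul_self := hω.mul_self
  mul_eq_neg_mul i := by rw [mul_assoc, hω.mul_eq_neg_mul, mul_neg]

section GradedSymmetry

variable {ι κ ρ S T : Type*} [Fintype S] [DecidableEq S] [Fintype T] [DecidableEq T]

open Classical in
/-- The symmetries of the tensor product of a graded Clifford module with a Clifford module with
symmetries `J`: those `J k` that anticommute with the generators need the grading `ω`. -/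
noncomputable def gradedSymmetry (ω : Matrix T T ℝ) (e : κ → Matrix S S ℝ)
    (J : ρ → Matrix S S ℝ) (k : ρ) : Matrix (T × S) (T × S) ℝ :=
  (if ∀ i, J k * e i = e i * J k then 1 else ω) ⊗ₖ J k

theorem IsSymmetryFamily.sumElim_kronecker {F : ι → Matrix T T ℝ} {ω : Matrix T T ℝ}
    {e : κ → Matrix S S ℝ} {J : ρ → Matrix S S ℝ} (hJ : IsSymmetryFamily e J)
    (hω : IsChirality 1 F ω) :
    IsSymmetryFamily (Sum.elim (fun j ↦ F j ⊗ₖ (1 : Matrix S S ℝ)) fun i ↦ ω ⊗ₖ e i)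
      (gradedSymmetry ω e J) where
  mul_self k := by
    unfold gradedSymmetry
    split_ifs <;> simp [← mul_kronecker_mul, hJ.mul_self, hω.mul_self, kronecker_neg]
  mul_eq_neg_mul {k l} hkl := by
    unfold gradedSymmetry
    split_ifs <;> simp [← mul_kronecker_mul, hJ.mul_eq_neg_mul hkl, kronecker_neg]
  commute_or k := by
    unfold gradedSymmetry
    by_cases hk : ∀ i, J k * e i = e i * J k
    · rw [if_pos hk]
      left
      rintro (j | i) <;> simp [← mul_kronecker_mul, hk]
    · rw [if_neg hk]
      right
      have hk' := (hJ.commute_or k).resolve_left hk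
      rintro (j | i) <;> simp [← mul_kronecker_mul, hk', hω.mul_eq_neg_mul, neg_kronecker,
        kronecker_neg]

end GradedSymmetry

/-- There are `n` Clifford generators of sign `ε` on a real vector space of dimension `d`, together
with `r` symmetries in the sense of `IsSymmetryFamily`. -/
def HasCliffordModule (ε : ℝ) (n r d : ℕ) : Prop :=
  ∃ (S : Type) (_ : Fintype S) (_ : DecidableEq S) (e : Fin n → Matrix S S ℝ)
    (J : Fin r → Matrix S S ℝ), Fintype.card S = d ∧ IsClifford ε e ∧ IsSymmetryFamily e J

variable {ι S T : Type} [Fintype ι] [Fintype S] [DecidableEq S] [Fintype T] [DecidableEq T]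
  {ε : ℝ} {n r d : ℕ} {F : ι → Matrix T T ℝ} {ω : Matrix T T ℝ}

theorem HasCliffordModule.of_card {e : ι → Matrix S S ℝ} {J : Fin r → Matrix S S ℝ}
    (he : IsClifford ε e) (hJ : IsSymmetryFamily e J) (hn : Fintype.card ι = n)
    (hd : Fintype.card S = d) : HasCliffordModule ε n r d :=
  let g := (Fintype.equivFinOfCardEq hn).symm
  ⟨S, inferInstance, inferInstance, _, J, hd, he.comp_injective g.injective, hJ.comp g⟩

theorem HasCliffordModule.kronecker (h : HasCliffordModule ε n r d) (hF : IsClifford ε F)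
    (hω : IsChirality 1 F ω) :
    HasCliffordModule ε (Fintype.card ι + n) r (Fintype.card T * d) := by
  obtain ⟨S, _, _, e, J, hd, he, hJ⟩ := h
  rw [← one_mul ε] at hF
  have hclifford := hF.sumElim_kronecker hω he
  rw [one_mul] at hclifford
  exact .of_card hclifford (hJ.sumElim_kronecker hω) (by simp) (by simp [hd])

theorem HasCliffordModule.mul (h : HasCliffordModule ε n 0 d) (m : ℕ) :
    HasCliffordModule ε n 0 (m * d) := by
  obtain ⟨S, _, _, e, -, hd, he, -⟩ := h
  exact .of_card (he.one_kronecker (σ := Fin m)) (.of_isEmpty (J := isEmptyElim)) (by simp)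
    (by simp [hd])

theorem HasCliffordModule.exists_isClifford {N : ℕ} (h : HasCliffordModule ε n r N) {m : ℕ}
    (hm : m ≤ n) : ∃ e : Fin m → Matrix (Fin N) (Fin N) ℝ, IsClifford ε e := by
  obtain ⟨S, _, _, e, -, hd, he, -⟩ := h
  let φ := Fintype.equivFinOfCardEq hd
  let Φ : Matrix S S ℝ →⋆ₐ[ℝ] Matrix (Fin N) (Fin N) ℝ :=
    { (reindexAlgEquiv ℝ ℝ φ).toAlgHom with map_star' M := (conjTranspose_reindex φ φ M).symm }
  exact ⟨_, (he.map Φ).comp_injective (Fin.castLE_injective hm)⟩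

end CliffordModules

section Quaternions

open scoped Kronecker

/-- Left multiplication by the imaginary units `i`, `j`, `k` on `ℍ = ℝ² ⊗ ℝ²`, up to sign and
a change of basis. -/
def quaternionLeft : Fin 3 → Matrix (Bool × Bool) (Bool × Bool) ℝ :=
  ![pauliJ ⊗ₖ 1, pauliX ⊗ₖ pauliJ, pauliZ ⊗ₖ pauliJ]

/-- Right multiplication by the imaginary units `i`, `j`, `k` on `ℍ = ℝ² ⊗ ℝ²`, up to sign and
a change of basis. -/
def quaternionRight : Fin 3 → Matrix (Bool × Bool) (Bool × Bool) ℝ :=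
  ![1 ⊗ₖ pauliJ, pauliJ ⊗ₖ pauliX, pauliJ ⊗ₖ pauliZ]

theorem isClifford_quaternionLeft : IsClifford (-1) quaternionLeft where
  star_eq i := by
    fin_cases i <;> simp [quaternionLeft, star_kronecker, star_pauliX, star_pauliZ, star_pauliJ,
      neg_kronecker, kronecker_neg]
  mul_self i := by
    fin_cases i <;> simp [quaternionLeft, ← mul_kronecker_mul, pauliX_mul_self, pauliZ_mul_self,
      pauliJ_mul_self, neg_kronecker, kronecker_neg]
  mul_eq_neg_mul {i j} h := by
    fin_cases i <;> fin_cases j <;> simp [quaternionLeft, ← mul_kronecker_mul, pauliJ_mul_pauliX,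
      pauliJ_mul_pauliZ, pauliZ_mul_pauliX, neg_kronecker] at h ⊢

theorem isClifford_quaternionRight : IsClifford (-1) quaternionRight where
  star_eq i := by
    fin_cases i <;> simp [quaternionRight, star_kronecker, star_pauliX, star_pauliZ, star_pauliJ,
      neg_kronecker, kronecker_neg]
  mul_self i := by
    fin_cases i <;> simp [quaternionRight, ← mul_kronecker_mul, pauliX_mul_self, pauliZ_mul_self,
      pauliJ_mul_self, neg_kronecker, kronecker_neg]
  mul_eq_neg_mul {i j} h := by
    fin_cases i <;> fin_cases j <;> simp [quaternionRight, ← mul_kronecker_mul, pauliJ_mul_pauliX,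
      pauliJ_mul_pauliZ, pauliZ_mul_pauliX, kronecker_neg] at h ⊢

theorem quaternionLeft_mul_quaternionRight (i j : Fin 3) :
    quaternionLeft i * quaternionRight j = quaternionRight j * quaternionLeft i := by
  fin_cases i <;> fin_cases j <;> simp [quaternionLeft, quaternionRight, ← mul_kronecker_mul,
    pauliJ_mul_pauliX, pauliJ_mul_pauliZ, neg_kronecker, kronecker_neg]

/-- Multiplication by the seven imaginary octonion units on `𝕆 = ℝ² ⊗ ℍ`, up to sign and a change
of basis. -/
def octonionUnits : Unit ⊕ Fin 3 ⊕ Fin 3 → Matrix (Bool × Bool × Bool) (Bool × Bool × Bool) ℝ :=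
  Sum.elim (fun _ ↦ pauliJ ⊗ₖ 1)
    (Sum.elim (fun i ↦ pauliX ⊗ₖ quaternionRight i) fun i ↦ pauliZ ⊗ₖ quaternionLeft i)

theorem isClifford_octonionUnits : IsClifford (-1) octonionUnits where
  star_eq := by
    rintro (_ | i | i) <;> simp [octonionUnits, star_kronecker, star_pauliX, star_pauliZ,
      star_pauliJ, isClifford_quaternionLeft.star_eq, isClifford_quaternionRight.star_eq,
      neg_kronecker, kronecker_neg]
  mul_self := by
    rintro (_ | i | i) <;> simp [octonionUnits, ← mul_kronecker_mul, pauliX_mul_self,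
      pauliZ_mul_self, pauliJ_mul_self, isClifford_quaternionLeft.mul_self,
      isClifford_quaternionRight.mul_self, neg_kronecker, kronecker_neg]
  mul_eq_neg_mul := by
    rintro (_ | i | i) (_ | j | j) h
    case inl.inl => exact absurd rfl h
    case inr.inl.inr.inl =>
      have hij : i ≠ j := by rintro rfl; exact h rfl
      simp [octonionUnits, ← mul_kronecker_mul, isClifford_quaternionRight.mul_eq_neg_mul hij,
        kronecker_neg]
    case inr.inr.inr.inr =>
      have hij : i ≠ j := by rintro rfl; exact h rfl
      simp [octonionUnits, ← mul_kronecker_mul, isClifford_quaternionLeft.mul_eq_neg_mul hij,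
        kronecker_neg]
    all_goals simp [octonionUnits, ← mul_kronecker_mul, pauliJ_mul_pauliX, pauliJ_mul_pauliZ,
      pauliZ_mul_pauliX, quaternionLeft_mul_quaternionRight, neg_kronecker]

end Quaternions

section Periodicity

open scoped Kronecker

theorem isChirality_pauliZ_kronecker_one {ι σ : Type*} [Fintype σ] [DecidableEq σ]
    (e : ι → Matrix σ σ ℝ) :
    IsChirality 1 (Sum.elim (fun _ : Unit ↦ pauliJ ⊗ₖ (1 : Matrix σ σ ℝ)) fun i ↦ pauliX ⊗ₖ e i)
      (pauliZ ⊗ₖ 1) where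
  star_eq := by simp [star_kronecker, star_pauliZ]
  mul_self := by simp [← mul_kronecker_mul, pauliZ_mul_self]
  mul_eq_neg_mul := by
    rintro (_ | i) <;> simp [← mul_kronecker_mul, pauliJ_mul_pauliZ, pauliZ_mul_pauliX,
      neg_kronecker]

theorem exists_isClifford_isChirality_eight :
    ∃ (F : Unit ⊕ Unit ⊕ Fin 3 ⊕ Fin 3 →
        Matrix (Bool × Bool × Bool × Bool) (Bool × Bool × Bool × Bool) ℝ) (ω : Matrix _ _ ℝ),
      IsClifford (-1) F ∧ IsChirality 1 F ω := by
  have hJ : IsClifford (1 * -1) fun _ : Unit ↦ pauliJ := by rw [one_mul]; exact isClifford_pauliJ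
  have hclifford := hJ.sumElim_kronecker isChirality_pauliX isClifford_octonionUnits
  rw [one_mul] at hclifford
  exact ⟨_, _, hclifford, isChirality_pauliZ_kronecker_one _⟩

theorem HasCliffordModule.add_eight_mul {ε : ℝ} (hε : ε = 1 ∨ ε = -1) {n r d : ℕ}
    (h : HasCliffordModule ε n r d) (a : ℕ) : HasCliffordModule ε (8 * a + n) r (16 ^ a * d) := by
  obtain ⟨F, ω, hF, hω⟩ := exists_isClifford_isChirality_eight
  induction a with
  | zero => simpa using h
  | succ a ih =>
    rcases hε with rfl | rfl
    · convert ih.kronecker (hF.chirality_mul hω) hω.chirality_mul using 1 <;> simp <;> ring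
    · convert ih.kronecker hF hω using 1 <;> simp <;> ring

end Periodicity

section LowDimensions

open scoped Kronecker

theorem hasCliffordModule_neg_one {b : ℕ} (hb : b < 4) :
    HasCliffordModule (-1) (2 ^ b - 1) 0 (2 ^ b) := by
  interval_cases b
  · exact .of_card (S := Unit) (e := Empty.elim) ⟨by simp, by simp, fun {i} ↦ i.elim⟩
      (.of_isEmpty (J := isEmptyElim)) rfl rfl
  · exact .of_card isClifford_pauliJ (.of_isEmpty (J := isEmptyElim)) rfl rfl
  · exact .of_card isClifford_quaternionLeft (.of_isEmpty (J := isEmptyElim)) rfl rfl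
  · exact .of_card isClifford_octonionUnits (.of_isEmpty (J := isEmptyElim)) rfl rfl

/-- The two reflections `pauliX` and `pauliZ`, generating the Clifford algebra of the plane. -/
def pauliPair (b : Bool) : Matrix Bool Bool ℝ := if b then pauliX else pauliZ

theorem isClifford_pauliPair : IsClifford 1 pauliPair where
  star_eq b := by cases b <;> simp [pauliPair, star_pauliX, star_pauliZ]
  mul_self b := by cases b <;> simp [pauliPair, pauliX_mul_self, pauliZ_mul_self]
  mul_eq_neg_mul {b c} h := by
    cases b <;> cases c <;> simp [pauliPair, pauliZ_mul_pauliX] at h ⊢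

theorem isChirality_pauliPair : IsChirality (-1) pauliPair pauliJ where
  star_eq := by rw [star_pauliJ, neg_one_smul]
  mul_self := by rw [pauliJ_mul_self, neg_one_smul]
  mul_eq_neg_mul b := by cases b <;> simp [pauliPair, pauliJ_mul_pauliX, pauliJ_mul_pauliZ]

variable {ι σ : Type*} [Fintype σ] [DecidableEq σ]

/-- The positive Clifford generators on `ℝ² ⊗ ℝ^σ`, two more in number than the negative generators
`e` on `ℝ^σ` from which they are built. -/
def spinorGenerators (e : ι → Matrix σ σ ℝ) : Bool ⊕ ι → Matrix (Bool × σ) (Bool × σ) ℝ :=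
  Sum.elim (fun b ↦ pauliPair b ⊗ₖ 1) fun i ↦ pauliJ ⊗ₖ e i

theorem IsClifford.spinorGenerators {e : ι → Matrix σ σ ℝ} (he : IsClifford (-1) e) :
    IsClifford 1 (spinorGenerators e) := by
  have hpair : IsClifford (-1 * -1) pauliPair := by
    rw [neg_one_mul, neg_neg]
    exact isClifford_pauliPair
  have hclifford := hpair.sumElim_kronecker isChirality_pauliPair he
  rwa [neg_one_mul, neg_neg] at hclifford

theorem isSymmetryFamily_spinorGenerators_zero [IsEmpty ι] (e : ι → Matrix σ σ ℝ) :
    IsSymmetryFamily (spinorGenerators e) fun _ : Fin 1 ↦ pauliJ ⊗ₖ 1 where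
  mul_self _ := by simp [← mul_kronecker_mul, pauliJ_mul_self, neg_kronecker]
  mul_eq_neg_mul h := absurd (Subsingleton.elim _ _) h
  commute_or _ := by
    right
    rintro (b | i)
    · simp [spinorGenerators, ← mul_kronecker_mul, isChirality_pauliPair.mul_eq_neg_mul,
        neg_kronecker]
    · exact isEmptyElim i

theorem isSymmetryFamily_spinorGenerators_one :
    IsSymmetryFamily (spinorGenerators fun _ : Unit ↦ pauliJ)
      ![1 ⊗ₖ pauliJ, pauliJ ⊗ₖ pauliX] where
  mul_self k := by
    fin_cases k <;> simp [← mul_kronecker_mul, pauliJ_mul_self, pauliX_mul_self, neg_kronecker,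
      kronecker_neg]
  mul_eq_neg_mul {k l} h := by
    fin_cases k <;> fin_cases l <;> simp [← mul_kronecker_mul, pauliJ_mul_pauliX,
      kronecker_neg] at h ⊢
  commute_or k := by
    fin_cases k
    · left
      rintro (b | _) <;> simp [spinorGenerators, ← mul_kronecker_mul]
    · right
      rintro (b | _) <;> simp [spinorGenerators, ← mul_kronecker_mul, pauliJ_mul_pauliX,
        isChirality_pauliPair.mul_eq_neg_mul, neg_kronecker, kronecker_neg]

theorem isSymmetryFamily_spinorGenerators_two :
    IsSymmetryFamily (spinorGenerators quaternionLeft)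
      fun k : Fin 2 ↦ 1 ⊗ₖ quaternionRight k.castSucc where
  mul_self k := by
    simp [← mul_kronecker_mul, isClifford_quaternionRight.mul_self, kronecker_neg]
  mul_eq_neg_mul h := by
    simp [← mul_kronecker_mul, kronecker_neg,
      isClifford_quaternionRight.mul_eq_neg_mul ((Fin.castSucc_injective 2).ne h)]
  commute_or k := by
    left
    rintro (b | i) <;> simp [spinorGenerators, ← mul_kronecker_mul,
      quaternionLeft_mul_quaternionRight]

theorem exists_hasCliffordModule_one {b : ℕ} (hb : b < 4) :
    ∃ r ≤ 2, 2 ^ b + r = 2 * b + 2 ∧ HasCliffordModule 1 (2 ^ b + 1) r (2 ^ (b + 1)) := by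
  interval_cases b
  · have he : IsClifford (-1) fun i : Empty ↦ (i.elim : Matrix Unit Unit ℝ) :=
      ⟨by simp, by simp, fun {i} ↦ i.elim⟩
    exact ⟨1, by simp, by simp,
      .of_card he.spinorGenerators (isSymmetryFamily_spinorGenerators_zero _) rfl rfl⟩
  · exact ⟨2, by simp, by simp,
      .of_card isClifford_pauliJ.spinorGenerators isSymmetryFamily_spinorGenerators_one rfl rfl⟩
  · exact ⟨2, by simp, by simp, .of_card isClifford_quaternionLeft.spinorGenerators
      isSymmetryFamily_spinorGenerators_two rfl rfl⟩
  · exact ⟨0, by simp, by simp, .of_card isClifford_octonionUnits.spinorGenerators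
      (.of_isEmpty (J := isEmptyElim)) rfl rfl⟩

end LowDimensions

section Bounds

theorem IsNonsingularSkew.lt_of_not_dvd {n N a b : ℕ} {A : Fin n → Matrix (Fin N) (Fin N) ℝ}
    (hA : IsNonsingularSkew A) (hb : b < 4) (hN : ¬2 ^ (4 * a + b + 1) ∣ N) :
    n < 8 * a + 2 ^ b := by
  by_contra! hn
  have hA' := hA.comp_injective (Fin.castLE_injective hn)
  obtain ⟨r, hr, hbr, hmodule⟩ := exists_hasCliffordModule_one hb
  obtain ⟨S, _, _, γ, J, hS, hγ, hJ⟩ := hmodule.add_eight_mul (.inl rfl) a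
  let g : Option (Fin (8 * a + 2 ^ b)) ≃ Fin (8 * a + (2 ^ b + 1)) :=
    Fintype.equivOfCardEq (by simp [add_assoc])
  have hdvd := hA'.two_pow_dvd (hγ.comp_injective g.injective) (hJ.comp g) hr
  have hexponent : 8 * a + 2 ^ b + r = 4 * a + (b + 1) + (4 * a + b + 1) := by omega
  have hdim : 16 ^ a * 2 ^ (b + 1) = 2 ^ (4 * a + (b + 1)) := by
    rw [pow_add _ (4 * a), pow_mul 2 4]
    norm_num
  rw [Fintype.card_fin, Fintype.card_fin, hS, hdim, hexponent, pow_add _ (4 * a + (b + 1))] at hdvd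
  exact hN (Nat.dvd_of_mul_dvd_mul_left (by positivity) hdvd)

theorem exists_isClifford_of_lt {n N a b : ℕ} (hb : b < 4) (hN : 2 ^ (4 * a + b) ∣ N)
    (hn : n < 8 * a + 2 ^ b) : ∃ e : Fin n → Matrix (Fin N) (Fin N) ℝ, IsClifford (-1) e := by
  obtain ⟨m, rfl⟩ := hN
  have hmodule := ((hasCliffordModule_neg_one hb).add_eight_mul (.inr rfl) a).mul m
  have hdim : m * (16 ^ a * 2 ^ b) = 2 ^ (4 * a + b) * m := by
    rw [pow_add, pow_mul 2 4, mul_comm]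
    norm_num
  rw [hdim] at hmodule
  exact hmodule.exists_isClifford (by omega)

end Bounds

section LinearMaps

theorem isNonsingularSkew_of_linearMap {n N : ℕ}
    {A : EuclideanSpace ℝ (Fin n) →ₗ[ℝ] Matrix (Fin N) (Fin N) ℝ} (hskew : ∀ v, (A v)ᵀ = -(A v))
    (hunit : ∀ v, v ≠ 0 → IsUnit (A v)) :
    IsNonsingularSkew fun i ↦ A (EuclideanSpace.single i 1) where
  star_eq i := by
    rw [star_eq_conjTranspose, conjTranspose_eq_transpose_of_trivial, hskew]
  isUnit {x} hx := by
    have hsum : ∑ i, x i • A (EuclideanSpace.single i 1) = A (WithLp.toLp 2 x) := by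
      simp only [← map_smul, ← map_sum]
      congr 1
      ext j
      simp [Pi.single_apply]
    rw [hsum]
    exact hunit _ fun h ↦ hx (congrArg WithLp.ofLp h)

theorem isUnit_of_sq_eq_neg_norm_smul {V A : Type*} [NormedAddCommGroup V] [Ring A] [Algebra ℝ A]
    {v : V} (hv : v ≠ 0) {a : A} (ha : a ^ 2 = -((‖v‖ ^ 2 : ℝ) • (1 : A))) : IsUnit a := by
  rw [← isUnit_pow_iff two_ne_zero, ha, ← Algebra.algebraMap_eq_smul_one]
  exact ((pow_ne_zero 2 (norm_ne_zero_iff.2 hv)).isUnit.map (algebraMap ℝ A)).neg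

theorem IsClifford.exists_linearMap {n N : ℕ} {e : Fin n → Matrix (Fin N) (Fin N) ℝ}
    (he : IsClifford (-1) e) :
    ∃ A : EuclideanSpace ℝ (Fin n) →ₗ[ℝ] Matrix (Fin N) (Fin N) ℝ,
      ∀ v, (A v)ᵀ = -(A v) ∧
        (A v) ^ 2 = -((‖v‖ ^ 2 : ℝ) • (1 : Matrix (Fin N) (Fin N) ℝ)) := by
  have hstar (i : Fin n) : (e i)ᵀ = -e i := by
    rw [← conjTranspose_eq_transpose_of_trivial, ← star_eq_conjTranspose, he.star_eq, neg_one_smul]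
  refine ⟨Fintype.linearCombination ℝ e ∘ₗ (EuclideanSpace.equiv (Fin n) ℝ).toLinearMap,
    fun v ↦ ⟨?_, ?_⟩⟩
  · simp [Fintype.linearCombination_apply, transpose_sum, hstar]
  · rw [pow_two]
    simp [Fintype.linearCombination_apply, he.sum_smul_mul_self, EuclideanSpace.real_norm_sq_eq]

end LinearMaps

section Arithmetic

theorem padicValRat_div_sixteen {N : ℕ} (hN : N ≠ 0) :
    padicValRat 2 ((N : ℚ) / 16) = (padicValNat 2 N : ℤ) - 4 := by
  have h16 : padicValRat 2 (16 : ℚ) = 4 := by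
    rw [show (16 : ℚ) = ((2 ^ 4 : ℕ) : ℚ) by norm_num, padicValRat.of_nat,
      padicValNat.prime_pow, Nat.cast_ofNat]
  rw [padicValRat.div (Nat.cast_ne_zero.2 hN) (by norm_num), h16, padicValRat.of_nat]

theorem hrRho_div_sixteen {N : ℕ} (hN : N ≠ 0) :
    hrRho ((N : ℚ) / 16) + 7 =
      ((8 * (padicValNat 2 N / 4) + 2 ^ (padicValNat 2 N % 4) : ℕ) : ℤ) - 1 := by
  have hdiv : ((padicValNat 2 N : ℤ) - 4) / 4 = ((padicValNat 2 N / 4 : ℕ) : ℤ) - 1 := by omega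
  have hmod : (((padicValNat 2 N : ℤ) - 4) % 4).toNat = padicValNat 2 N % 4 := by omega
  rw [hrRho, padicValRat_div_sixteen hN, hdiv, hmod]
  push_cast
  ring

end Arithmetic

end HurwitzRadon

/-- Entry `𝔤 = 𝔰𝔬(N,ℂ)` of the Hurwitz–Radon value theorem
(the `𝔭`-part consisting of `iA` with `A` real skew-symmetric):
`ρ⁽¹⁾ = ρ⁽²⁾ = ρ(N/16) + 7`, Au-Yeung's number `ℝ_{sk-s}(N)`. -/
theorem hurwitzRadon_so_N_C (N : ℕ) (hN : 1 ≤ N) (n : ℕ) :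
    ((∃ A : EuclideanSpace ℝ (Fin n) →ₗ[ℝ] Matrix (Fin N) (Fin N) ℝ,
        ∀ v, (A v)ᵀ = -(A v) ∧
          (A v) ^ 2 = -((‖v‖ ^ 2 : ℝ) • (1 : Matrix (Fin N) (Fin N) ℝ))) ↔
      (∃ A : EuclideanSpace ℝ (Fin n) →ₗ[ℝ] Matrix (Fin N) (Fin N) ℝ,
        (∀ v, (A v)ᵀ = -(A v)) ∧ ∀ v, v ≠ 0 → IsUnit (A v))) ∧
    ((∃ A : EuclideanSpace ℝ (Fin n) →ₗ[ℝ] Matrix (Fin N) (Fin N) ℝ,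
        (∀ v, (A v)ᵀ = -(A v)) ∧ ∀ v, v ≠ 0 → IsUnit (A v)) ↔
      (n : ℤ) ≤ hrRho ((N : ℚ) / 16) + 7) := by
  have hN₀ : N ≠ 0 := Nat.one_le_iff_ne_zero.1 hN
  have hmod : padicValNat 2 N % 4 < 4 := Nat.mod_lt _ (by norm_num)
  have hval := Nat.div_add_mod (padicValNat 2 N) 4
  rw [HurwitzRadon.hrRho_div_sixteen hN₀, Int.le_sub_one_iff, Nat.cast_lt]
  suffices cycle : (_ → _) ∧ (_ → _) ∧ (_ → _) from
    ⟨⟨cycle.1, cycle.2.2 ∘ cycle.2.1⟩, cycle.2.1, cycle.1 ∘ cycle.2.2⟩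
  refine ⟨?one_two, ?two_three, ?three_one⟩
  case one_two =>
    rintro ⟨A, hA⟩
    exact ⟨A, fun v ↦ (hA v).1, fun v hv ↦
      HurwitzRadon.isUnit_of_sq_eq_neg_norm_smul hv (hA v).2⟩
  case two_three =>
    rintro ⟨A, hskew, hunit⟩
    refine (HurwitzRadon.isNonsingularSkew_of_linearMap hskew hunit).lt_of_not_dvd hmod ?_
    rw [hval]
    exact pow_succ_padicValNat_not_dvd hN₀
  case three_one =>
    intro hn
    obtain ⟨e, he⟩ := HurwitzRadon.exists_isClifford_of_lt hmod (hval ▸ pow_padicValNat_dvd) hn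
    exact he.exists_linearMap
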